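/- arXiv:2605.14009 — 9 statements merged into one kernel-verified Lean document; each statement's English description precedes it below -/
import Mathlib

section
/- Let p be an odd prime, q = p^m, and let k be such that m/gcd(k,m) is odd; set σ = p^k. Let a,b,c ∈ F_q and let F = (F_1,F_2,F_3) : F_q^3 → F_q^3 be defined by F_1(x,y,z) = x^{σ+1} + a·y^σ·z + b·x^σ·y + c·x^σ·z, F_2(x,y,z) = a·y^{σ+1} + z^σ·x + b·z^σ·y + c·x^σ·y, F_3(x,y,z) = z^{σ+1} − x^σ·y. Then the polarization Δ_F(u,v) = F(u+v) − F(u) − F(v) satisfies (Δ_F(u,v) = 0 if and only if u = 0 or v = 0) for all u,v ∈ F_q^3 — i.e., Δ_F is a commutative pre-semifield multiplication on F_q^3 — if and only if the equation x^{σ²+σ+1} + c·x^{σ²+σ} + b·x^{σ²} + a = 0 has no solution x ∈ F_q. -/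
open Matrix in
/-- A semilinear map with a compatible nonzero functional has a nonzero fixed vector. -/
theorem aux_fixed {K : Type*} [Field K] [Fintype K] (s : K ≃+* K)
    (T : (Fin 3 → K) →+ (Fin 3 → K)) (hT : ∀ (l : K) w, T (l • w) = s l • T w)
    (f : Fin 3 → K) (hf : f ≠ 0) (hfT : ∀ w, f ⬝ᵥ T w = s (f ⬝ᵥ w)) :
    ∃ e, e ≠ 0 ∧ T e = e := by
  classical
  have : Finite (K ≃+* K) :=
    Finite.of_injective (fun g : K ≃+* K => (g : K → K)) DFunLike.coe_injective
  obtain ⟨n, hn⟩ : ∃ n, n = orderOf (s : RingAut K) := ⟨_, rfl⟩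
  have hn0 : 0 < n := hn ▸ orderOf_pos (G := RingAut K) s
  have hsn : ∀ x, s^[n] x = x := by
    intro x
    have h : (s : RingAut K) ^ n = 1 := by rw [hn]; exact pow_orderOf_eq_one (G := RingAut K) s
    have := RingAut.coe_pow (R := K) s n
    rw [← this, h]; rfl
  have hfi : ∀ i w, f ⬝ᵥ (T^[i] w) = s^[i] (f ⬝ᵥ w) := by
    intro i
    induction i with
    | zero => intro w; rfl
    | succ i ih => intro w; rw [Function.iterate_succ_apply', Function.iterate_succ_apply', hfT, ih]
  have hTi : ∀ i (l : K) w, T^[i] (l • w) = s^[i] l • T^[i] w := by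
    intro i
    induction i with
    | zero => intro l w; rfl
    | succ i ih => intro l w; simp only [Function.iterate_succ_apply', ih, hT]
  -- the map T^n - 1 is not surjective
  obtain ⟨e, he0, he⟩ : ∃ e, e ≠ 0 ∧ T^[n] e = e := by
    by_contra hcon
    push Not at hcon
    have hadd : ∀ i w w', T^[i] (w + w') = T^[i] w + T^[i] w' := by
      intro i
      induction i with
      | zero => intro w w'; rfl
      | succ i ih => intro w w'; simp only [Function.iterate_succ_apply', ih, map_add]
    let N : (Fin 3 → K) →+ (Fin 3 → K) := AddMonoidHom.mk' (fun w => T^[n] w - w)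
      (by intro w w'; simp only [hadd]; abel)
    have hN : ∀ w, N w = T^[n] w - w := fun w => rfl
    have hinj : Function.Injective N := by
      rw [injective_iff_map_eq_zero]
      intro w hw
      by_contra hw0
      exact hcon w hw0 (sub_eq_zero.mp (hN w ▸ hw))
    have hsurj := Finite.surjective_of_injective hinj
    apply hf
    ext j
    obtain ⟨w, hw⟩ := hsurj (Pi.single j 1)
    have h1 : f ⬝ᵥ N w = 0 := by
      rw [hN, dotProduct_sub, hfi, hsn, sub_self]
    rw [hw] at h1
    simpa using h1
  -- averaging
  obtain ⟨l, hl⟩ : ∃ l : K, ∑ i ∈ Finset.range n, T^[i] (l • e) ≠ 0 := by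
    by_contra hcon
    push Not at hcon
    have hli := linearIndependent_monoidHom K K
    let ch : Fin n → (K →* K) := fun i => (((s : RingAut K) ^ (i : ℕ) : RingAut K) : K ≃+* K).toMulEquiv.toMonoidHom
    have hch : ∀ i x, ch i x = s^[i] x := by
      intro i x
      have := RingAut.coe_pow (R := K) s i
      rw [← this]; rfl
    have hchinj : Function.Injective ch := by
      intro i j hij
      have h2 : (s : RingAut K) ^ (i : ℕ) = s ^ (j : ℕ) := by
        apply RingEquiv.ext
        intro x
        exact DFunLike.congr_fun hij x
      have := pow_injOn_Iio_orderOf (x := (s : RingAut K)) (by simp [← hn]) (by simp [← hn]) h2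
      exact Fin.ext this
    have hli2 := hli.comp ch hchinj
    rw [Fintype.linearIndependent_iff] at hli2
    apply he0
    ext j
    have := hli2 (fun i => T^[i] e j) (by
      ext x
      have h3 := congrFun (hcon x) j
      rw [Finset.sum_range] at h3
      simp only [hTi, Finset.sum_apply, Pi.smul_apply, smul_eq_mul, Pi.zero_apply] at h3
      simp only [Finset.sum_apply, Pi.smul_apply, smul_eq_mul, Pi.zero_apply, Function.comp, hch]
      rw [← h3]
      exact Finset.sum_congr rfl fun i _ => mul_comm _ _) ⟨0, hn0⟩
    simpa using this
  refine ⟨_, hl, ?_⟩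
  rw [map_sum]
  have hT1 : ∀ i, T (T^[i] (l • e)) = T^[i+1] (l • e) := fun i =>
    (Function.iterate_succ_apply' _ _ _).symm
  simp only [hT1]
  have h4 := Finset.sum_range_succ (fun i => T^[i] (l • e)) n
  rw [Finset.sum_range_succ'] at h4
  have h5 : T^[n] (l • e) = l • e := by rw [hTi, he, hsn]
  rw [h5] at h4
  simpa using h4

open Matrix in
theorem aux_main {K : Type*} [Field K] [Fintype K] (s : K ≃+* K)
    (hs : ∀ x, s x = -x → x = 0)
    (M : Matrix (Fin 3) (Fin 3) K) (T : (Fin 3 → K) → (Fin 3 → K))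
    (hT : ∀ w, T w = M *ᵥ (fun j => s (w j)))
    (hno : ∀ w, crossProduct (T w) w = 0 → w = 0) (u v : Fin 3 → K)
    (h : crossProduct (T u) v + crossProduct (T v) u = 0) : u = 0 ∨ v = 0 := by
  by_contra hcon
  push Not at hcon
  obtain ⟨hu, hv⟩ := hcon
  have hTsm : ∀ (l : K) w, T (l • w) = s l • T w := by
    intro l w
    rw [hT, hT, ← mulVec_smul]
    congr 1; ext j; simp
  have hTadd : ∀ w w', T (w + w') = T w + T w' := by
    intro w w'
    rw [hT, hT, hT, ← mulVec_add]
    congr 1; ext j; simp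
  by_cases hf : crossProduct u v = 0
  · -- parallel case
    obtain ⟨j, hj⟩ := Function.ne_iff.mp hu
    simp only [Pi.zero_apply] at hj
    obtain ⟨l, hl⟩ : ∃ l : K, v = l • u := by
      refine ⟨v j / u j, ?_⟩
      have h0 := congrFun hf 0
      have h1 := congrFun hf 1
      have h2 := congrFun hf 2
      simp [cross_apply] at h0 h1 h2
      ext i
      simp only [Pi.smul_apply, smul_eq_mul]
      field_simp
      fin_cases j <;> fin_cases i <;> simp <;> grind
    subst hl
    have hl0 : l ≠ 0 := by rintro rfl; simp at hv
    rw [hTsm, map_smul, map_smul, LinearMap.smul_apply, ← add_smul] at h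
    rcases smul_eq_zero.mp h with h | h
    · exact hl0 (hs l (by linear_combination h))
    · exact hu (hno u h)
  · obtain ⟨f, hfd⟩ : ∃ f, f = crossProduct u v := ⟨_, rfl⟩
    rw [← hfd] at hf
    have hfu : f ⬝ᵥ T u = 0 := by
      have h0 := congrFun h 0
      have h1 := congrFun h 1
      have h2 := congrFun h 2
      simp [cross_apply] at h0 h1 h2
      simp [hfd, cross_apply, dotProduct, Fin.sum_univ_three]
      linear_combination -(u 0) * h0 - (u 1) * h1 - (u 2) * h2
    have hfv : f ⬝ᵥ T v = 0 := by
      have h0 := congrFun h 0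
      have h1 := congrFun h 1
      have h2 := congrFun h 2
      simp [cross_apply] at h0 h1 h2
      simp [hfd, cross_apply, dotProduct, Fin.sum_univ_three]
      linear_combination (v 0) * h0 + (v 1) * h1 + (v 2) * h2
    obtain ⟨g, hg⟩ : ∃ g, g = f ᵥ* M := ⟨_, rfl⟩
    have hfT : ∀ w, f ⬝ᵥ T w = g ⬝ᵥ (fun j => s (w j)) := by
      intro w; rw [hT, dotProduct_mulVec, hg]
    have hgu := (hfT u).symm.trans hfu
    have hgv := (hfT v).symm.trans hfv
    obtain ⟨j, hj⟩ := Function.ne_iff.mp hf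
    simp only [Pi.zero_apply] at hj
    have hsj : s (f j) ≠ 0 := by simpa using hj
    have hmu : ∃ mu : K, ∀ i, g i = mu * s (f i) := by
      refine ⟨g j / s (f j), fun i => ?_⟩
      have key : ∀ i j, g i * s (f j) = g j * s (f i) := by
        simp only [dotProduct, Fin.sum_univ_three] at hgu hgv
        intro i j
        fin_cases i <;> fin_cases j <;> simp [hfd, cross_apply]
        · linear_combination -s (v 2) * hgu + s (u 2) * hgv
        · linear_combination s (v 1) * hgu - s (u 1) * hgv
        · linear_combination s (v 2) * hgu - s (u 2) * hgv
        · linear_combination -s (v 0) * hgu + s (u 0) * hgv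
        · linear_combination -s (v 1) * hgu + s (u 1) * hgv
        · linear_combination s (v 0) * hgu - s (u 0) * hgv
      field_simp
      exact key i j
    obtain ⟨mu, hmu⟩ := hmu
    have hfT2 : ∀ w, f ⬝ᵥ T w = mu * s (f ⬝ᵥ w) := by
      intro w
      rw [hfT]
      simp only [dotProduct, Fin.sum_univ_three, hmu, map_add, map_mul]
      ring
    by_cases hmu0 : mu = 0
    · have hinj : Function.Injective T := by
        intro w w' hw
        have h1 : T (w + (-1 : K) • w') = 0 := by
          rw [hTadd, hTsm, hw]; simp
        have := hno _ (by rw [h1]; simp)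
        rw [neg_one_smul] at this
        exact eq_of_sub_eq_zero (by rw [sub_eq_add_neg]; exact this)
      obtain ⟨w, hw⟩ := Finite.surjective_of_injective hinj (Pi.single j 1)
      have := hfT2 w
      rw [hw, hmu0] at this
      simp at this
      exact hj this
    · let T' : (Fin 3 → K) →+ (Fin 3 → K) := AddMonoidHom.mk' (fun w => mu⁻¹ • T w)
        (by intro w w'; simp only [hTadd, smul_add])
      have hT' : ∀ w, T' w = mu⁻¹ • T w := fun w => rfl
      obtain ⟨e, he0, he⟩ := aux_fixed s T' (by intro l w; rw [hT', hT', hTsm, smul_comm])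
        f hf (by intro w; rw [hT', dotProduct_smul, hfT2]; simp [hmu0])
      apply he0
      apply hno
      have : T e = mu • e := by
        rw [hT'] at he
        conv_rhs => rw [← he]
        rw [smul_smul, mul_inv_cancel₀ hmu0, one_smul]
      rw [this]; simp


/-- The polarization of the semiquadratic map `F` on `F_q^3` is a
commutative pre-semifield multiplication iff the projective polynomial
`x^{σ²+σ+1} + c x^{σ²+σ} + b x^{σ²} + a` has no root in `F_q`. -/
theorem stmt0 {p m k : ℕ} (hp : p.Prime) (hpodd : Odd p) (hm : 0 < m)
    (hkm : Odd (m / Nat.gcd k m))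
    {K : Type*} [Field K] [Fintype K] (hK : Fintype.card K = p ^ m)
    (a b c : K) (Fm : K × K × K → K × K × K)
    (hF : Fm = fun w =>
      (w.1 ^ (p ^ k + 1) + a * w.2.1 ^ p ^ k * w.2.2 + b * w.1 ^ p ^ k * w.2.1
          + c * w.1 ^ p ^ k * w.2.2,
       a * w.2.1 ^ (p ^ k + 1) + w.2.2 ^ p ^ k * w.1 + b * w.2.2 ^ p ^ k * w.2.1
          + c * w.1 ^ p ^ k * w.2.1,
       w.2.2 ^ (p ^ k + 1) - w.1 ^ p ^ k * w.2.1)) :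
    (∀ u v : K × K × K, Fm (u + v) - Fm u - Fm v = 0 ↔ u = 0 ∨ v = 0) ↔
      ¬ ∃ x : K, x ^ (p ^ (2 * k) + p ^ k + 1) + c * x ^ (p ^ (2 * k) + p ^ k)
          + b * x ^ (p ^ (2 * k)) + a = 0 := by

  have : Fact p.Prime := ⟨hp⟩
  have hch : ringChar K = p := by
    have h1 : (p : K) = 0 := by
      have := FiniteField.cast_card_eq_zero K
      rw [hK] at this
      push_cast at this
      exact pow_eq_zero_iff hm.ne' |>.mp this
    rcases (Nat.dvd_prime hp).mp (ringChar.dvd h1) with h | h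
    · exact absurd h (CharP.ringChar_ne_one)
    · exact h
  have : CharP K p := hch ▸ ringChar.charP K
  have h2 : (2 : K) ≠ 0 := by
    apply Ring.two_ne_zero
    rw [hch]; rintro rfl; exact absurd hpodd (by decide)
  let s : K ≃+* K := iterateFrobeniusEquiv K p k
  have hsd : ∀ x, x ^ p ^ k = s x := fun x => (iterateFrobeniusEquiv_def K p k x).symm
  have hs2 : ∀ x, x ^ p ^ (2 * k) = s (s x) := by
    intro x; rw [← hsd, ← hsd, ← pow_mul, ← pow_add, two_mul]
  have hsneg : ∀ x, s x = -x → x = 0 := by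
    intro x hx
    have hit : ∀ i, s^[i] x = x ^ p ^ (k * i) := by
      intro i
      induction i with
      | zero => simp
      | succ i ih => rw [Function.iterate_succ_apply', ih, ← hsd, ← pow_mul, ← pow_add, mul_add, mul_one]
    have hit2 : ∀ i, s^[i] x = (-1) ^ i * x := by
      intro i
      induction i with
      | zero => simp
      | succ i ih => rw [Function.iterate_succ_apply', ih, map_mul, hx, map_pow, map_neg, map_one]; ring
    have h3 := hit2 (m / Nat.gcd k m)
    rw [hkm.neg_one_pow, hit] at h3
    obtain ⟨k', hk'⟩ := Nat.gcd_dvd_left k m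
    have h4 : k * (m / Nat.gcd k m) = m * k' := by
      obtain ⟨m', hm'⟩ := Nat.gcd_dvd_right k m
      have hg : 0 < Nat.gcd k m := Nat.gcd_pos_of_pos_right _ hm
      have : m / Nat.gcd k m = m' := Nat.div_eq_of_eq_mul_right hg hm'
      rw [this]
      calc k * m' = (Nat.gcd k m * k') * m' := by rw [← hk']
        _ = (Nat.gcd k m * m') * k' := by ring
        _ = m * k' := by rw [← hm']
    rw [h4, pow_mul, ← hK, FiniteField.pow_card_pow] at h3
    have : 2 * x = 0 := by linear_combination h3
    exact (mul_eq_zero.mp this).resolve_left h2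
  have hFm : ∀ x y z : K, Fm (x, y, z) =
      (s x * x + a * s y * z + b * s x * y + c * s x * z,
       a * (s y * y) + s z * x + b * s z * y + c * s x * y, s z * z - s x * y) := by
    intro x y z
    simp only [hF, pow_succ, hsd]
  have hP : ∀ x : K, x ^ (p ^ (2 * k) + p ^ k + 1) + c * x ^ (p ^ (2 * k) + p ^ k)
          + b * x ^ (p ^ (2 * k)) + a = s (s x) * s x * x + c * (s (s x) * s x) + b * s (s x) + a := by
    intro x
    rw [pow_add, pow_add, pow_one, hsd, hs2]
  simp only [hP]
  constructor
  · rintro H ⟨t, ht⟩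
    have h5 : Fm (s t * t, 1, s t) = 0 := by
      rw [hFm]
      simp only [Prod.mk_eq_zero, map_mul, map_one]
      refine ⟨?_, ?_, ?_⟩
      · linear_combination s t * ht
      · linear_combination ht
      · ring
    have h6 : Fm ((s t * t, 1, s t) + (s t * t, 1, s t)) = 0 := by
      have : ∀ x y z : K, Fm (x, y, z) = 0 → Fm ((x, y, z) + (x, y, z)) = 0 := by
        intro x y z h
        rw [Prod.mk_add_mk, Prod.mk_add_mk, hFm]
        rw [hFm] at h
        simp only [Prod.mk_eq_zero, map_add] at h ⊢
        obtain ⟨ha, hb, hc⟩ := h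
        refine ⟨?_, ?_, ?_⟩
        · linear_combination 4 * ha
        · linear_combination 4 * hb
        · linear_combination 4 * hc
      exact this _ _ _ h5
    have := (H (s t * t, 1, s t) (s t * t, 1, s t)).mp (by rw [h6, h5]; simp)
    simp at this
  · intro hno
    -- zeros of F are trivial
    have hz : ∀ x y z : K, Fm (x, y, z) = 0 → x = 0 ∧ y = 0 ∧ z = 0 := by
      intro x y z h
      rw [hFm] at h
      simp only [Prod.mk_eq_zero] at h
      obtain ⟨h1, h2, h3⟩ := h
      by_cases hy : y = 0
      · subst hy
        have hz0 : z = 0 := by simpa using h3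
        subst hz0
        have hx0 : x = 0 := by simpa using h1
        exact ⟨hx0, rfl, rfl⟩
      · exfalso
        apply hno
        obtain ⟨t, ht⟩ := s.surjective (z / y)
        have hsy : s y ≠ 0 := by simpa using hy
        have hzt : z = s t * y := by rw [ht]; field_simp
        have hxt : x = s t * t * y := by
          apply s.injective
          rw [hzt] at h3
          simp only [map_mul] at h3 ⊢
          apply mul_right_cancel₀ hy
          linear_combination -h3
        refine ⟨t, ?_⟩
        rw [hxt, hzt] at h2
        simp only [map_mul] at h2
        apply mul_right_cancel₀ (mul_ne_zero hsy hy)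
        linear_combination h2
    rintro ⟨x, y, z⟩ ⟨x', y', z'⟩
    constructor
    · intro h
      rw [Prod.mk_add_mk, Prod.mk_add_mk, hFm, hFm, hFm] at h
      simp only [Prod.mk_sub_mk, Prod.mk_eq_zero, map_add] at h
      obtain ⟨e1, e2, e3⟩ := h
      let M : Matrix (Fin 3) (Fin 3) K := !![0, -1, 0; s b, 0, -1; c * s b - a, 0, -c]
      have hMv : ∀ w : Fin 3 → K, M.mulVec (fun j => s (w j)) =
          ![- s (w 1), s b * s (w 0) - s (w 2), (c * s b - a) * s (w 0) - c * s (w 2)] := by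
        intro w
        ext i
        fin_cases i <;> simp [M, Matrix.mulVec, dotProduct, Fin.sum_univ_three] <;> ring
      have key := aux_main s hsneg M (fun w => M.mulVec (fun j => s (w j))) (fun _ => rfl) (by
        intro w hw
        simp only [hMv] at hw
        have h0 := congrFun hw 0
        have h1 := congrFun hw 1
        have h2 := congrFun hw 2
        simp [cross_apply] at h0 h1 h2
        have := hz (w 2 - b * w 0) (w 0) (-w 1) (by
          rw [hFm]
          simp only [Prod.mk_eq_zero, map_neg, map_sub, map_mul]
          refine ⟨?_, ?_, ?_⟩
          · linear_combination -h0
          · linear_combination -h1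
          · linear_combination -h2)
        obtain ⟨ha, hb, hc⟩ := this
        ext i
        fin_cases i
        · exact hb
        · simpa using hc
        · simpa [hb] using ha) ![y, -z, x + b * y] ![y', -z', x' + b * y'] (by
        simp only [hMv]
        ext i
        fin_cases i <;> simp [cross_apply]
        · linear_combination -e1
        · linear_combination -e2
        · linear_combination -e3)
      rcases key with h | h
      · left
        simp at h
        obtain ⟨ha, hb, hc⟩ := h
        subst ha hb
        simpa using hc
      · right
        simp at h
        obtain ⟨ha, hb, hc⟩ := h
        subst ha hb
        simpa using hc
    · rintro (h | h)
      · rw [h, zero_add]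
        have : Fm 0 = 0 := by rw [show (0 : K × K × K) = (0, 0, 0) from rfl, hFm]; simp
        rw [this]; simp
      · rw [h, add_zero]
        have : Fm 0 = 0 := by rw [show (0 : K × K × K) = (0, 0, 0) from rfl, hFm]; simp
        rw [this]; simp
end

section
/- Let q = p^m be any prime power, σ = p^k, a,b,c ∈ F_q, and let F = (F_1,F_2,F_3) : F_q^3 → F_q^3 be defined by F_1(x,y,z) = x^{σ+1} + a·y^σ·z + b·x^σ·y + c·x^σ·z, F_2(x,y,z) = a·y^{σ+1} + z^σ·x + b·z^σ·y + c·x^σ·y, F_3(x,y,z) = z^{σ+1} − x^σ·y. Then the following are equivalent: (1) F vanishes only at the origin (F(v)=0 ⟺ v=0) and the induced map on the projective plane P^2(F_q) (sending the projective class [v] of a nonzero v ∈ F_q^3 to [F(v)]) is a well-defined bijection of P^2(F_q); (2) the equation x^{σ²+σ+1} + c·x^{σ²+σ} + b·x^{σ²} + a = 0 has no solution x ∈ F_q. -/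
/-- A vector with zero cross product against a nonzero `u` is a multiple of `u`. -/
lemma par_aux {K : Type*} [Field K] (u1 u2 u3 g1 g2 g3 : K)
    (hu : ¬ (u1 = 0 ∧ u2 = 0 ∧ u3 = 0))
    (h1 : g2 * u3 = g3 * u2) (h2 : g3 * u1 = g1 * u3) (h3 : g1 * u2 = g2 * u1) :
    ∃ s : K, g1 = s * u1 ∧ g2 = s * u2 ∧ g3 = s * u3 := by
  by_cases a1 : u1 = 0
  · by_cases a2 : u2 = 0
    · have a3 : u3 ≠ 0 := fun h => hu ⟨a1, a2, h⟩
      refine ⟨g3 / u3, ?_, ?_, ?_⟩ <;> field_simp <;> first | done | linear_combination h1 | linear_combination -h2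
    · refine ⟨g2 / u2, ?_, ?_, ?_⟩ <;> field_simp <;> first | done | linear_combination h3 | linear_combination -h1
  · refine ⟨g1 / u1, ?_, ?_, ?_⟩ <;> field_simp <;> first | done | linear_combination h2 | linear_combination -h3

/-- A vector orthogonal to `v` and `w` is a multiple of their nonzero cross product. -/
lemma orth_aux {K : Type*} [Field K] (x y z x' y' z' g1 g2 g3 : K)
    (hu : ¬ (y * z' - z * y' = 0 ∧ z * x' - x * z' = 0 ∧ x * y' - y * x' = 0))
    (h : g1 * x + g2 * y + g3 * z = 0) (h' : g1 * x' + g2 * y' + g3 * z' = 0) :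
    ∃ s : K, g1 = s * (y * z' - z * y') ∧ g2 = s * (z * x' - x * z') ∧
      g3 = s * (x * y' - y * x') := by
  apply par_aux _ _ _ _ _ _ hu
  · linear_combination x * h' - x' * h
  · linear_combination y * h' - y' * h
  · linear_combination z * h' - z' * h

/-- The heart of the proof: if `F(v) = A v × B v^σ` has no nontrivial zero, then it is injective
on projective points. -/
lemma core_aux {K : Type*} [Field K] [Finite K] (s : K →+* K) (a b c : K)
    (hnv : ∀ x y z : K, s x * x + a * s y * z + b * s x * y + c * s x * z = 0 →
      a * (s y * y) + s z * x + b * s z * y + c * s x * y = 0 →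
      s z * z - s x * y = 0 → x = 0 ∧ y = 0 ∧ z = 0)
    (x y z x' y' z' l : K) (hv : ¬ (x = 0 ∧ y = 0 ∧ z = 0)) (hv' : ¬ (x' = 0 ∧ y' = 0 ∧ z' = 0))
    (e1 : s x * x + a * s y * z + b * s x * y + c * s x * z
      = l * (s x' * x' + a * s y' * z' + b * s x' * y' + c * s x' * z'))
    (e2 : a * (s y * y) + s z * x + b * s z * y + c * s x * y
      = l * (a * (s y' * y') + s z' * x' + b * s z' * y' + c * s x' * y'))
    (e3 : s z * z - s x * y = l * (s z' * z' - s x' * y')) :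
    ∃ r : K, x = r * x' ∧ y = r * y' ∧ z = r * z' := by
  by_cases hu : y * z' - z * y' = 0 ∧ z * x' - x * z' = 0 ∧ x * y' - y * x' = 0
  · obtain ⟨u1, u2, u3⟩ := hu
    apply par_aux _ _ _ _ _ _ hv'
    · linear_combination u1
    · linear_combination u2
    · linear_combination u3
  exfalso
  obtain ⟨n1, hn1⟩ : ∃ n, n = s x * x + a * s y * z + b * s x * y + c * s x * z := ⟨_, rfl⟩
  obtain ⟨n2, hn2⟩ : ∃ n, n = a * (s y * y) + s z * x + b * s z * y + c * s x * y := ⟨_, rfl⟩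
  obtain ⟨n3, hn3⟩ : ∃ n, n = s z * z - s x * y := ⟨_, rfl⟩
  have hn : ¬ (n1 = 0 ∧ n2 = 0 ∧ n3 = 0) := by
    rintro ⟨h1, h2, h3⟩
    exact hv (hnv x y z (hn1 ▸ h1) (hn2 ▸ h2) (hn3 ▸ h3))
  rw [← hn1] at e1
  rw [← hn2] at e2
  rw [← hn3] at e3
  -- the functional g with g · v = n · A v
  obtain ⟨t, g1, g2, g3⟩ := orth_aux x y z x' y' z' n3 (n1 + b * n3) (-n2) hu
    (by rw [hn1, hn2, hn3]; ring) (by rw [e1, e2, e3]; ring)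
  -- the functional h with h · v^σ = n · B v^σ
  have hu' : ¬ (s y * s z' - s z * s y' = 0 ∧ s z * s x' - s x * s z' = 0 ∧
      s x * s y' - s y * s x' = 0) := by
    rintro ⟨h1, h2, h3⟩
    apply hu
    refine ⟨?_, ?_, ?_⟩ <;> apply s.injective <;> simpa
  obtain ⟨r, k1, k2, k3⟩ := orth_aux (s x) (s y) (s z) (s x') (s y') (s z')
    (-n2 - c * n3) (-a * n3) n1 hu'
    (by rw [hn1, hn2, hn3]; ring) (by rw [e1, e2, e3]; ring)
  have ht : t ≠ 0 := by
    rintro rfl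
    apply hn
    simp only [zero_mul] at g1 g2 g3
    refine ⟨?_, ?_, g1⟩
    · simpa [g1] using g2
    · simpa using g3
  have hst : s t ≠ 0 := by simpa using ht
  obtain ⟨μ, hμ⟩ : ∃ μ, r = μ * s t := ⟨r / s t, by field_simp⟩
  have k1' : -n2 - c * n3 = μ * s n3 := by rw [k1, g1, hμ]; simp; ring
  have k2' : -a * n3 = μ * s (n1 + b * n3) := by rw [k2, g2, hμ]; simp; ring
  have k3' : n1 = μ * s (-n2) := by rw [k3, g3, hμ]; simp; ring
  clear k1 k2 k3 g1 g2 g3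
  -- the scalar map
  have hθ : ∃ d : K, ∀ w : K, μ * (s w - w) ≠ d := by
    by_contra! hcon
    have hinj : Function.Injective (fun w : K => μ * (s w - w)) :=
      Finite.injective_iff_surjective.mpr hcon
    have : (1 : K) = 0 := hinj (by simp)
    exact one_ne_zero this
  obtain ⟨d, hd⟩ := hθ
  let ψ : K × K × K →+ K × K × K :=
    { toFun := fun w => (s w.2.2 - μ * w.2.1, -s w.1 + μ * w.2.2,
        -(a * s w.2.1 + c * s w.1) - μ * (w.1 + b * w.2.1))
      map_zero' := by simp
      map_add' := by
        intro u w
        ext <;> simp <;> ring }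
  have hns : ¬ Function.Surjective ψ := by
    intro hsur
    have key : ∀ w : K × K × K, n1 * (ψ w).1 + n2 * (ψ w).2.1 + n3 * (ψ w).2.2
        = μ * (s (n3 * w.1 + (n1 + b * n3) * w.2.1 + (-n2) * w.2.2)
          - (n3 * w.1 + (n1 + b * n3) * w.2.1 + (-n2) * w.2.2)) := by
      intro w
      simp only [ψ, AddMonoidHom.coe_mk, ZeroHom.coe_mk, map_add s, map_mul s] at *
      linear_combination s w.1 * k1' + s w.2.1 * k2' + s w.2.2 * k3'
    have : ∃ q : K × K × K, n1 * q.1 + n2 * q.2.1 + n3 * q.2.2 = d := by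
      by_cases a1 : n1 = 0
      · by_cases a2 : n2 = 0
        · have a3 : n3 ≠ 0 := fun h => hn ⟨a1, a2, h⟩
          exact ⟨(0, 0, d / n3), by simp; field_simp⟩
        · exact ⟨(0, d / n2, 0), by simp; field_simp⟩
      · exact ⟨(d / n1, 0, 0), by simp; field_simp⟩
    obtain ⟨q, hq⟩ := this
    obtain ⟨w, rfl⟩ := hsur q
    exact hd _ ((key w).symm.trans hq)
  rw [← Finite.injective_iff_surjective, injective_iff_map_eq_zero] at hns
  push Not at hns
  obtain ⟨⟨w1, w2, w3⟩, hw, hw0⟩ := hns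
  simp only [ψ, AddMonoidHom.coe_mk, ZeroHom.coe_mk, Prod.mk_eq_zero] at hw
  obtain ⟨q1, q2, q3⟩ := hw
  apply hw0
  have := hnv w1 w2 w3 (by linear_combination -(w1 + b * w2) * q2 - w3 * q3)
    (by linear_combination (w1 + b * w2) * q1 - w2 * q3)
    (by linear_combination w3 * q1 + w2 * q2)
  simpa using this


/-- `F` vanishes only at the origin and induces a well-defined
bijection of the projective plane `P²(F_q)` iff the projective polynomial
`x^{σ²+σ+1} + c x^{σ²+σ} + b x^{σ²} + a` has no root in `F_q`. -/
theorem stmt1 {p m k : ℕ} (hp : p.Prime) (hm : 0 < m)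
    {K : Type*} [Field K] [Fintype K] (hK : Fintype.card K = p ^ m)
    (a b c : K) (Fm : K × K × K → K × K × K)
    (hF : Fm = fun w =>
      (w.1 ^ (p ^ k + 1) + a * w.2.1 ^ p ^ k * w.2.2 + b * w.1 ^ p ^ k * w.2.1
          + c * w.1 ^ p ^ k * w.2.2,
       a * w.2.1 ^ (p ^ k + 1) + w.2.2 ^ p ^ k * w.1 + b * w.2.2 ^ p ^ k * w.2.1
          + c * w.1 ^ p ^ k * w.2.1,
       w.2.2 ^ (p ^ k + 1) - w.1 ^ p ^ k * w.2.1)) :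
    ((∀ v : K × K × K, Fm v = 0 ↔ v = 0) ∧
      ∃ G : Projectivization K (K × K × K) → Projectivization K (K × K × K),
        Function.Bijective G ∧
        ∀ (v : K × K × K) (hv : v ≠ 0) (hFv : Fm v ≠ 0),
          G (Projectivization.mk K v hv) = Projectivization.mk K (Fm v) hFv) ↔
      ¬ ∃ x : K, x ^ (p ^ (2 * k) + p ^ k + 1) + c * x ^ (p ^ (2 * k) + p ^ k)
          + b * x ^ (p ^ (2 * k)) + a = 0 := by
  subst hF
  haveI : Fact p.Prime := ⟨hp⟩
  haveI : CharP K p := charP_of_card_eq_prime_pow hK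
  obtain ⟨s, hs⟩ : ∃ s : K →+* K, ∀ x, x ^ p ^ k = s x :=
    ⟨iterateFrobenius K p k, fun x => (iterateFrobenius_def p k x).symm⟩
  have hs2 : ∀ x : K, x ^ p ^ (2 * k) = s (s x) := by
    intro x
    rw [two_mul, pow_add, pow_mul, hs, hs]
  have hbij : Function.Surjective s := Finite.injective_iff_surjective.mp s.injective
  simp only [pow_add, pow_one, hs, hs2]
  set Fm : K × K × K → K × K × K := fun w =>
      (s w.1 * w.1 + a * s w.2.1 * w.2.2 + b * s w.1 * w.2.1 + c * s w.1 * w.2.2,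
       a * (s w.2.1 * w.2.1) + s w.2.2 * w.1 + b * s w.2.2 * w.2.1 + c * s w.1 * w.2.1,
       s w.2.2 * w.2.2 - s w.1 * w.2.1) with hFm
  constructor
  · rintro ⟨hz, -⟩ ⟨t, ht⟩
    have h := (hz (s t * t, 1, s t)).mp (by
      simp only [hFm, Prod.mk_eq_zero, map_mul, map_one]
      refine ⟨?_, ?_, ?_⟩
      · linear_combination s t * ht
      · linear_combination ht
      · ring)
    simp at h
  · intro hno
    have hnv : ∀ x y z : K, s x * x + a * s y * z + b * s x * y + c * s x * z = 0 →
      a * (s y * y) + s z * x + b * s z * y + c * s x * y = 0 →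
      s z * z - s x * y = 0 → x = 0 ∧ y = 0 ∧ z = 0 := by
      intro x y z h1 h2 h3
      by_cases hy : y = 0
      · subst hy
        have hz : z = 0 := by simpa using h3
        subst hz
        refine ⟨by simpa using h1, rfl, rfl⟩
      · exfalso
        apply hno
        obtain ⟨t, ht⟩ := hbij (z / y)
        have hz : z = s t * y := by rw [ht]; field_simp
        have hsx : s x = s (s t * t * y) := by
          apply mul_right_cancel₀ hy
          have : s x * y = s z * z := by linear_combination -h3
          rw [this, hz]
          simp only [map_mul]
          ring
        have hx := s.injective hsx
        refine ⟨t, ?_⟩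
        have hsy : s y ≠ 0 := by simpa using hy
        rw [hx, hz] at h2
        simp only [map_mul] at h2
        apply mul_right_cancel₀ (mul_ne_zero hsy hy)
        linear_combination h2
    have hFz : ∀ v : K × K × K, Fm v = 0 ↔ v = 0 := by
      rintro ⟨x, y, z⟩
      constructor
      · intro h
        simp only [hFm, Prod.mk_eq_zero] at h
        simpa using hnv x y z h.1 h.2.1 h.2.2
      · intro h
        rw [h]
        simp [hFm]
    have hFs : ∀ (r : K) (v : K × K × K), Fm (r • v) = (s r * r) • Fm v := by
      rintro r ⟨x, y, z⟩
      simp only [hFm, Prod.smul_mk, smul_eq_mul, map_mul]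
      ext <;> simp <;> ring
    refine ⟨hFz, fun P => Projectivization.mk K (Fm P.rep)
      (fun h => P.rep_nonzero ((hFz _).mp h)), ?_, ?_⟩
    · haveI : Finite (Projectivization K (K × K × K)) := inferInstance
      apply Finite.injective_iff_bijective.mp
      intro P Q h
      rw [Projectivization.mk_eq_mk_iff'] at h
      obtain ⟨l, hl⟩ := h
      rw [← P.mk_rep, ← Q.mk_rep, Projectivization.mk_eq_mk_iff']
      have hP := P.rep_nonzero
      have hQ := Q.rep_nonzero
      revert hl hP hQ
      generalize P.rep = v
      generalize Q.rep = w
      obtain ⟨x, y, z⟩ := v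
      obtain ⟨x', y', z'⟩ := w
      intro hl hP hQ
      simp only [hFm, Prod.smul_mk, smul_eq_mul, Prod.mk.injEq] at hl
      obtain ⟨r, r1, r2, r3⟩ := core_aux s a b c hnv x y z x' y' z' l (by simpa using hP)
        (by simpa using hQ) hl.1.symm hl.2.1.symm hl.2.2.symm
      exact ⟨r, by simp [r1, r2, r3]⟩
    · intro v hv hFv
      rw [Projectivization.mk_eq_mk_iff']
      obtain ⟨r, hr⟩ := Projectivization.exists_smul_eq_mk_rep K v hv
      refine ⟨s r * r, ?_⟩
      rw [← hFs, ← hr]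
      rfl
end

section
/- Let q = p^m be odd and let F : F_q^n → F_q^n be a σ-semiquadratic homogeneous map (F ∈ SQH(n,q)) with companion automorphism σ = p^k. Then the polarization Δ_F(u,v) = F(u+v) − F(u) − F(v) satisfies (Δ_F(u,v) = 0 if and only if u = 0 or v = 0) for all u,v ∈ F_q^n — i.e., Δ_F is a commutative pre-semifield multiplication — if and only if both: (a) F(x) = 0 ⟺ x = 0, and (b) F is 2-to-1 on F_q^n∖{0}. -/
/-- A map `F : F_q^n → F_q^n` is σ-semiquadratic homogeneous (`F ∈ SQH(n,q)` with
σ = p^k encoded as the natural number exponent `σ`): each coordinate is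
`(σ+1)`-homogeneous and polarizes via a σ-sesquilinear form. -/
def IsSQH {K : Type*} [Field K] {n : ℕ} (σ : ℕ)
    (F : (Fin n → K) → (Fin n → K)) : Prop :=
  ∀ i : Fin n,
    (∀ (c : K) (x : Fin n → K), F (c • x) i = c ^ (σ + 1) * F x i) ∧
    ∃ b : (Fin n → K) → (Fin n → K) → K,
      (∀ x x' y, b (x + x') y = b x y + b x' y) ∧
      (∀ x y y', b x (y + y') = b x y + b x y') ∧
      (∀ (c : K) (x y), b (c • x) y = c * b x y) ∧
      (∀ (c : K) (x y), b x (c • y) = c ^ σ * b x y) ∧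
      (∀ x y, F (x + y) i - F x i - F y i = b x y + b y x)

/-- for odd `q`, the polarization of `F ∈ SQH(n,q)` is a commutative
pre-semifield multiplication iff `F` vanishes only at `0` and `F` is 2-to-1 on
`F_q^n ∖ {0}`. -/
theorem stmt2 {p m k n : ℕ} (hp : p.Prime) (hpodd : Odd p) (hm : 0 < m)
    {K : Type*} [Field K] [Fintype K] (hK : Fintype.card K = p ^ m)
    (F : (Fin n → K) → (Fin n → K)) (hSQH : IsSQH (p ^ k) F) :
    (∀ u v : Fin n → K, F (u + v) - F u - F v = 0 ↔ u = 0 ∨ v = 0) ↔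
      ((∀ x, F x = 0 ↔ x = 0) ∧
        ∀ x : Fin n → K, x ≠ 0 → {y : Fin n → K | y ≠ 0 ∧ F y = F x}.ncard = 2) := by
  have h2 : (2 : K) ≠ 0 := by
    intro h
    have hodd : Odd (Fintype.card K) := hK ▸ hpodd.pow
    have hc : ringChar K = 2 := by
      have hd : ringChar K ∣ 2 := (ringChar.spec K 2).1 (by exact_mod_cast h)
      rcases (Nat.dvd_prime Nat.prime_two).1 hd with h1 | h1
      · exact absurd h1 (CharP.ringChar_ne_one)
      · exact h1
    have := FiniteField.even_card_of_char_two hc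
    rw [Nat.odd_iff] at hodd
    omega
  have hev : Even (p ^ k + 1) := (hpodd.pow).add_one
  have hodd' : Odd (p ^ k) := hpodd.pow
  have hneg : ∀ x, F (-x) = F x := by
    intro x
    funext i
    have := (hSQH i).1 (-1) x
    rw [hev.neg_one_pow] at this
    simpa using this
  have h0 : F 0 = 0 := by
    funext i
    have := (hSQH i).1 0 0
    simpa using this
  have hD : ∀ u v i, (F ((u + v) + (u - v)) - F (u + v) - F (u - v)) i
      = 2 * (F u i - F v i) := by
    intro u v i
    obtain ⟨-, b, ha, hb, hc, hd, hF⟩ := hSQH i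
    have n1 : ∀ x y, b (-x) y = - b x y := by
      intro x y
      have := hc (-1) x y
      simpa using this
    have n2 : ∀ x y, b x (-y) = - b x y := by
      intro x y
      have := hd (-1) x y
      rw [hodd'.neg_one_pow] at this
      simpa using this
    have hself : ∀ x, F x i = b x x := by
      intro x
      have := hF x (-x)
      rw [add_neg_cancel, h0, hneg, n1, n2] at this
      apply mul_left_cancel₀ h2
      simp only [Pi.zero_apply] at this
      linear_combination -this
    simp only [Pi.sub_apply]
    rw [hF, hself u, hself v]
    simp only [sub_eq_add_neg, ha, hb, n1, n2]
    ring
  have hD0 : ∀ u v, F ((u + v) + (u - v)) - F (u + v) - F (u - v) = 0 ↔ F u = F v := by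
    intro u v
    constructor
    · intro h
      funext i
      have := hD u v i
      rw [h] at this
      have h3 := (mul_eq_zero.1 this.symm).resolve_left h2
      exact sub_eq_zero.1 h3
    · intro h
      funext i
      rw [hD u v i, h]
      simp
  have hxne : ∀ x : Fin n → K, x ≠ 0 → x ≠ -x := by
    intro x hx h
    apply hx
    funext i
    have := congrFun h i
    simp only [Pi.neg_apply] at this
    have h3 : 2 * x i = 0 := by linear_combination this
    exact (mul_eq_zero.1 h3).resolve_left h2
  constructor
  · intro H
    have key : ∀ x y, F x = F y → x = -y ∨ x = y := by
      intro x y h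
      rcases (H _ _).1 ((hD0 x y).2 h) with h | h
      · exact Or.inl (eq_neg_of_add_eq_zero_left h)
      · exact Or.inr (sub_eq_zero.1 h)
    refine ⟨fun x => ⟨fun h => ?_, fun h => h ▸ h0⟩, fun x hx => ?_⟩
    · rcases key x 0 (h.trans h0.symm) with h | h <;> simpa using h
    · have : {y : Fin n → K | y ≠ 0 ∧ F y = F x} = {x, -x} := by
        ext y
        simp only [Set.mem_setOf_eq, Set.mem_insert_iff, Set.mem_singleton_iff]
        constructor
        · rintro ⟨-, h⟩
          exact (key y x h).symm
        · rintro (rfl | rfl)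
          · exact ⟨hx, rfl⟩
          · exact ⟨neg_ne_zero.2 hx, hneg x⟩
      rw [this, Set.ncard_pair (hxne x hx)]
  · rintro ⟨H0, H2⟩ u v
    constructor
    · intro h
      obtain ⟨a, ha⟩ : ∃ a : Fin n → K, a = (2 : K)⁻¹ • (u + v) := ⟨_, rfl⟩
      obtain ⟨b, hb⟩ : ∃ b : Fin n → K, b = (2 : K)⁻¹ • (u - v) := ⟨_, rfl⟩
      have hu : u = a + b := by
        funext i
        simp only [ha, hb, Pi.add_apply, Pi.smul_apply, Pi.sub_apply, smul_eq_mul]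
        field_simp
        ring
      have hv : v = a - b := by
        funext i
        simp only [ha, hb, Pi.add_apply, Pi.smul_apply, Pi.sub_apply, smul_eq_mul]
        field_simp
        ring
      rw [hu, hv] at h ⊢
      have hab := (hD0 a b).1 h
      by_cases ha0 : a = 0
      · left
        have : b = 0 := (H0 b).1 (by rw [← hab, ha0, h0])
        rw [ha0, this, add_zero]
      · have hb0 : b ≠ 0 := fun hb0 => ha0 ((H0 a).1 (by rw [hab, hb0, h0]))
        have hsub : ({a, -a} : Set (Fin n → K)) ⊆ {y | y ≠ 0 ∧ F y = F a} := by
          rintro y (rfl | rfl)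
          · exact ⟨ha0, rfl⟩
          · exact ⟨neg_ne_zero.2 ha0, hneg a⟩
        have heq := Set.eq_of_subset_of_ncard_le hsub
          (by rw [H2 a ha0, Set.ncard_pair (hxne a ha0)]) (Set.toFinite _)
        have hbm : b ∈ ({a, -a} : Set (Fin n → K)) := by
          rw [heq]
          exact ⟨hb0, hab.symm⟩
        rcases hbm with h | h
        · right
          rw [h, sub_self]
        · left
          rw [Set.mem_singleton_iff.1 h, add_neg_cancel]
    · rintro (rfl | rfl) <;> simp [h0]
end

section
/- Let q = p^m be odd, n odd, and let F : F_q^n → F_q^n be a σ-semiquadratic homogeneous map (F ∈ SQH(n,q)) with companion automorphism σ = p^k such that F(x) = 0 ⟺ x = 0 and F is 2-to-1 on F_q^n∖{0}. Then the induced map on the projective space P^{n−1}(F_q), sending the projective class [x] of nonzero x to [F(x)], is a bijection of P^{n−1}(F_q). -/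
lemma addChar_map_sum {L ι : Type*} [AddCommGroup L] (ψ : AddChar L ℂ) (s : Finset ι) (f : ι → L) :
    ψ (∑ i ∈ s, f i) = ∏ i ∈ s, ψ (f i) := by
  classical
  induction s using Finset.induction_on with
  | empty => simp
  | insert a s ha ih => rw [Finset.sum_insert ha, Finset.prod_insert ha, AddChar.map_add_eq_mul, ih]

/-- Sums over squares and over non-square multiples of squares complement each other. -/
lemma sum_sq_add_sum_nonsq {L : Type*} [Field L] [Fintype L] (h2 : ringChar L ≠ 2)
    (l : L) (hl : ¬ IsSquare l) (f : L → ℂ) (hf : ∑ t, f t = 0) :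
    ∑ x, f (l * x ^ 2) = - ∑ x, f (x ^ 2) := by
  classical
  have key : ∀ g : L → ℂ, ∑ x, g (x ^ 2) = ∑ t, ((quadraticChar L t : ℤ) + 1 : ℂ) * g t := by
    intro g
    rw [← Finset.sum_fiberwise_of_maps_to (s := Finset.univ) (t := Finset.univ)
      (g := fun x : L => x ^ 2) (fun _ _ => Finset.mem_univ _)]
    refine Finset.sum_congr rfl fun t _ => ?_
    rw [Finset.sum_congr rfl (g := fun _ => g t)
      (fun x hx => by rw [(Finset.mem_filter.mp hx).2])]
    rw [Finset.sum_const, nsmul_eq_mul]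
    congr 1
    have := quadraticChar_card_sqrts h2 t
    rw [← Int.cast_one (R := ℂ), ← Int.cast_add, ← this]
    simp
  have hl0 : l ≠ 0 := by rintro rfl; exact hl (IsSquare.zero)
  rw [key, key (fun t => f (l * t))]
  have h3 : ∑ t, ((quadraticChar L t : ℤ) + 1 : ℂ) * f (l * t)
      = ∑ t, ((quadraticChar L (l * t) : ℤ) * (-1) + 1 : ℂ) * f (l * t) := by
    refine Finset.sum_congr rfl fun t _ => ?_
    rw [map_mul, quadraticChar_neg_one_iff_not_isSquare.mpr hl]
    push_cast; ring
  rw [h3, Fintype.sum_equiv (Equiv.mulLeft₀ l hl0) (fun t => ((quadraticChar L (l * t) : ℤ) * (-1) + 1 : ℂ) * f (l * t))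
    (fun t => ((quadraticChar L t : ℤ) * (-1) + 1 : ℂ) * f t) (fun t => rfl)]
  rw [eq_neg_iff_add_eq_zero, ← Finset.sum_add_distrib]
  calc _ = ∑ t, 2 * f t := Finset.sum_congr rfl fun t _ => by ring
    _ = 0 := by rw [← Finset.mul_sum, hf, mul_zero]

lemma sum_wss {L : Type*} [Field L] [Fintype L] (h2 : ringChar L ≠ 2)
    (l : L) (hl : ¬ IsSquare l) (ψ : AddChar L ℂ) (hψ : ψ ≠ 0) {N : ℕ} (hN : Odd N)
    (w : Fin N → Lˣ) :
    ∑ x : Fin N → L, ψ (l * ∑ i, w i * x i ^ 2) = - ∑ x : Fin N → L, ψ (∑ i, w i * x i ^ 2) := by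
  classical
  have hprod : ∀ a : L, ∑ x : Fin N → L, ψ (a * ∑ i, w i * x i ^ 2)
      = ∏ i, ∑ t, ψ (a * (w i * t ^ 2)) := by
    intro a
    rw [Finset.prod_univ_sum, Fintype.piFinset_univ]
    refine Finset.sum_congr rfl fun x _ => ?_
    rw [Finset.mul_sum, addChar_map_sum]
  have h1 := hprod 1
  simp only [one_mul] at h1
  rw [hprod, h1]
  have : ∀ i, ∑ t, ψ (l * (w i * t ^ 2)) = - ∑ t, ψ (w i * t ^ 2) := by
    intro i
    have := sum_sq_add_sum_nonsq h2 l hl (fun t => ψ (w i * t)) (by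
      rw [Fintype.sum_equiv (Equiv.mulLeft₀ (w i : L) (w i).ne_zero) (fun t => ψ (w i * t))
        (fun t => ψ t) (fun t => rfl)]
      exact AddChar.sum_eq_zero_iff_ne_zero.mpr hψ)
    rw [← this]
    exact Finset.sum_congr rfl fun t _ => by congr 1; ring
  rw [Finset.prod_congr rfl fun i _ => this i, Finset.prod_neg]
  simp [hN.neg_one_pow]

lemma sum_qf {L V : Type*} [Field L] [Fintype L] (h2 : ringChar L ≠ 2)
    [AddCommGroup V] [Module L V] [Fintype V]
    (l : L) (hl : ¬ IsSquare l) (ψ : AddChar L ℂ) (hψ : ψ ≠ 0)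
    (hN : Odd (Module.finrank L V)) (Q : QuadraticForm L V)
    (hQ : ∀ x, x ≠ 0 → ∃ y, QuadraticMap.polar Q x y ≠ 0) :
    ∑ x, ψ (l * Q x) = - ∑ x, ψ (Q x) := by
  classical
  have h20 : (2 : L) ≠ 0 := Ring.two_ne_zero h2
  have : Invertible (2 : L) := invertibleOfNonzero h20
  have hsep : (QuadraticMap.associated (R := L) Q).SeparatingLeft := by
    intro x hx
    by_contra hx0
    obtain ⟨y, hy⟩ := hQ x hx0
    apply hy
    have := hx y
    have h := QuadraticMap.two_nsmul_associated L Q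
    have h' := congrArg (fun B => B x y) h
    have h3 : (2 • QuadraticMap.associated (R := L) Q) x y
      = 2 • (QuadraticMap.associated (R := L) Q x y) := rfl
    exact h'.symm.trans (h3.trans (by rw [this, smul_zero]))
  obtain ⟨w, ⟨e⟩⟩ := QuadraticForm.equivalent_weightedSumSquares_units_of_nondegenerate' Q hsep
  have := sum_wss h2 l hl ψ hψ hN w
  have he : ∀ x, Q x = ∑ i, w i * e x i ^ 2 := by
    intro x
    rw [← e.map_app x, QuadraticMap.weightedSumSquares_apply]
    refine Finset.sum_congr rfl fun i _ => ?_
    rw [Units.smul_def, smul_eq_mul, pow_two]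
  rw [Fintype.sum_equiv e.toLinearEquiv.toEquiv (fun x => ψ (l * Q x))
      (fun z => ψ (l * ∑ i, w i * z i ^ 2)) (fun x => by rw [he]; rfl),
    Fintype.sum_equiv e.toLinearEquiv.toEquiv (fun x => ψ (Q x))
      (fun z => ψ (∑ i, w i * z i ^ 2)) (fun x => by rw [he]; rfl)]
  exact this

lemma sum_dual {L V : Type*} [Field L] [Fintype L] [AddCommGroup V] [Module L V] [Fintype V]
    [Fintype (Module.Dual L V)] [DecidableEq V]
    (ψ : AddChar L ℂ) (hψ : ψ ≠ 0) (w : V) :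
    ∑ u : Module.Dual L V, ψ (u w) =
      if w = 0 then (Fintype.card (Module.Dual L V) : ℂ) else 0 := by
  split_ifs with h
  · simp [h]
  · have := AddChar.sum_eq_zero_iff_ne_zero (R := ℂ)
      (ψ := ψ.compAddMonoidHom (LinearMap.applyₗ (R := L) (M₂ := L) w).toAddMonoidHom)
    refine this.mpr ?_
    obtain ⟨t, ht⟩ := AddChar.ne_one_iff.mp hψ
    obtain ⟨f, hf⟩ : ∃ f : Module.Dual L V, f w ≠ 0 := by
      by_contra! hc
      exact h ((Module.forall_dual_apply_eq_zero_iff L w).mp hc)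
    refine AddChar.ne_one_iff.mpr ⟨(t * (f w)⁻¹) • f, ?_⟩
    simpa [hf] using ht

/-- The main counting lemma. -/
lemma quad_proj_inj {L V : Type*} [Field L] [Fintype L] (h2 : ringChar L ≠ 2)
    [AddCommGroup V] [Module L V] [Fintype V] (hN : Odd (Module.finrank L V))
    (F : V → V) (hF0 : ∀ (c : L) x, F (c • x) = (c * c) • F x)
    (hadd : ∀ x x' y, QuadraticMap.polar F (x + x') y
      = QuadraticMap.polar F x y + QuadraticMap.polar F x' y)
    (hsmul : ∀ (c : L) x y, QuadraticMap.polar F (c • x) y = c • QuadraticMap.polar F x y)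
    (hinj : ∀ x y, F x = F y → x = y ∨ x = -y)
    (x y : V) (hx : x ≠ 0) (l : L) (hl0 : l ≠ 0) (hxy : F y = l • F x) : ∃ c : L, y = c • x := by
  classical
  have h20 : (2 : L) ≠ 0 := Ring.two_ne_zero h2
  have two_smul_ne : ∀ z : V, z ≠ 0 → z + z ≠ 0 := by
    intro z hz h
    rw [← two_smul L z, smul_eq_zero] at h
    tauto
  by_cases hl : IsSquare l
  · obtain ⟨c, rfl⟩ := hl
    rw [← hF0] at hxy
    rcases hinj _ _ hxy with h | h
    · exact ⟨c, h⟩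
    · exact ⟨-c, by rw [h, neg_smul]⟩
  exfalso
  have : Finite (Module.Dual L V) := Finite.of_injective (fun u : Module.Dual L V => (u : V → L)) DFunLike.coe_injective
  have : Fintype (Module.Dual L V) := Fintype.ofFinite _
  set M : ℂ := (Fintype.card (Module.Dual L V) : ℂ) with hM
  have hMne : M ≠ 0 := by rw [hM]; exact Nat.cast_ne_zero.mpr Fintype.card_ne_zero
  have Fz : F 0 = 0 := by simpa using hF0 0 0
  have Fneg : ∀ z, F (-z) = F z := by intro z; simpa using hF0 (-1) z
  have Fne : ∀ z, z ≠ 0 → F z ≠ 0 := by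
    intro z hz h
    rcases hinj z 0 (h.trans Fz.symm) with h | h <;> simp_all
  obtain ⟨ψ, hψ⟩ : ∃ ψ : AddChar L ℂ, ψ ≠ 0 := by
    obtain ⟨ψ, h⟩ := (AddChar.exists_apply_ne_zero (a := (1 : L))).mpr one_ne_zero
    exact ⟨ψ, AddChar.ne_one_iff.mpr ⟨1, h⟩⟩
  -- the polar form has no zero divisors
  have hpol : ∀ x, x ≠ 0 → ∀ y, QuadraticMap.polar F x y = 0 → y = 0 := by
    intro a ha b hb
    have e1 : F (a + b) = F (a + -b) := by
      have h1 : QuadraticMap.polar F a (-b) = 0 := by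
        have := hsmul (-1) b a
        rw [QuadraticMap.polar_comm, neg_one_smul, neg_one_smul] at this
        rw [this, QuadraticMap.polar_comm, hb, neg_zero]
      unfold QuadraticMap.polar at hb h1
      rw [Fneg] at h1
      rw [sub_sub, sub_eq_zero] at hb h1
      rw [hb, h1]
    rcases hinj _ _ e1 with h | h
    · by_contra hb0
      apply two_smul_ne b hb0
      have := add_left_cancel h
      nth_rewrite 1 [this]; simp
    · exfalso
      apply two_smul_ne a ha
      have : a + a + (b - b) = 0 := by
        have h' := eq_neg_iff_add_eq_zero.mp h
        rw [← h']; abel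
      simpa using this
  have hS : ∀ u : Module.Dual L V, u ≠ 0 → ∑ x, ψ (l * u (F x)) = - ∑ x, ψ (u (F x)) := by
    intro u hu
    have hpu : ∀ a b, QuadraticMap.polar (fun x => u (F x)) a b = u (QuadraticMap.polar F a b) := by
      intro a b; simp [QuadraticMap.polar]
    let Q : QuadraticForm L V := QuadraticMap.ofPolar (fun x => u (F x))
      (fun c x => by rw [hF0, map_smul])
      (fun a b c => by simp only [hpu, hadd, map_add])
      (fun c a b => by simp only [hpu, hsmul, map_smul])
    refine sum_qf h2 l hl ψ hψ hN Q ?_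
    intro a ha
    obtain ⟨v, hv⟩ : ∃ v, u v ≠ 0 := by
      by_contra! hc
      exact hu (LinearMap.ext hc)
    let T : V →ₗ[L] V :=
      { toFun := fun b => QuadraticMap.polar F a b
        map_add' := fun b c => by
          simp only [QuadraticMap.polar_comm F a, hadd]
        map_smul' := fun b c => by
          simp only [QuadraticMap.polar_comm F a, hsmul, RingHom.id_apply] }
    have hT : Function.Injective T := by
      rw [injective_iff_map_eq_zero]
      intro b hb
      exact hpol a ha b hb
    obtain ⟨b, hb⟩ := (Finite.injective_iff_surjective.mp hT) v
    refine ⟨b, ?_⟩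
    have : QuadraticMap.polar Q a b = u (T b) := hpu a b
    rw [this, hb]; exact hv
  set Nn : V → ℂ := fun v => ∑ x, if F x = v then (1 : ℂ) else 0 with hNn
  have hcount : ∀ v, ∑ u : Module.Dual L V, (∑ x, ψ (u (F x))) * ψ (- u v) = M * Nn v := by
    intro v
    simp only [Finset.sum_mul]
    rw [Finset.sum_comm, hNn, Finset.mul_sum]
    refine Finset.sum_congr rfl fun x _ => ?_
    have := sum_dual ψ hψ (F x - v)
    rw [sub_eq_zero] at this
    rw [mul_ite, mul_one, mul_zero, ← this]
    refine Finset.sum_congr rfl fun u _ => ?_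
    rw [← AddChar.map_add_eq_mul, map_sub, sub_eq_add_neg]
  have hcount2 : ∀ v, ∑ u : Module.Dual L V, (∑ x, ψ (l * u (F x))) * ψ (- u (l • v))
      = M * Nn v := by
    intro v
    simp only [Finset.sum_mul]
    rw [Finset.sum_comm, hNn, Finset.mul_sum]
    refine Finset.sum_congr rfl fun x _ => ?_
    have := sum_dual ψ hψ (l • (F x - v))
    simp only [smul_eq_zero, hl0, false_or, sub_eq_zero] at this
    rw [mul_ite, mul_one, mul_zero, ← this]
    refine Finset.sum_congr rfl fun u _ => ?_
    rw [← AddChar.map_add_eq_mul, map_smul, map_smul, map_sub]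
    congr 1
    simp only [smul_eq_mul]; ring
  have hsum : ∀ v, M * Nn v + M * Nn (l • v) = 2 * Fintype.card V := by
    intro v
    rw [← hcount2 v, ← hcount (l • v), ← Finset.sum_add_distrib,
      Finset.sum_eq_single (0 : Module.Dual L V)]
    · simp; ring
    · intro u _ hu
      rw [hS u hu]; ring
    · simp
  have hcard : (Fintype.card V : ℂ) = M := by
    rw [hM]
    congr 1
    rw [Module.card_eq_pow_finrank (K := L) (V := V),
      Module.card_eq_pow_finrank (K := L) (V := Module.Dual L V), Subspace.dual_finrank_eq]
  have hfin := hsum (F x)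
  rw [hcard, ← mul_add, mul_comm 2 M] at hfin
  have hfin := mul_left_cancel₀ hMne hfin
  have hNc : ∀ v, Nn v = ((Finset.univ.filter fun x => F x = v).card : ℂ) := by
    intro v; simp [hNn]
  rw [hNc, hNc] at hfin
  have hnat : (Finset.univ.filter fun z => F z = F x).card
    + (Finset.univ.filter fun z => F z = l • F x).card = 2 := by exact_mod_cast hfin
  have hp1 : 1 ≤ (Finset.univ.filter fun z => F z = l • F x).card :=
    Finset.card_pos.mpr ⟨y, by simp [hxy]⟩
  have hp2 : 2 ≤ (Finset.univ.filter fun z => F z = F x).card := by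
    have hne : x ≠ -x := fun h => two_smul_ne x hx (by nth_rewrite 1 [h]; simp)
    rw [← Finset.card_pair hne]
    apply Finset.card_le_card
    intro z hz
    simp only [Finset.mem_insert, Finset.mem_singleton] at hz
    rcases hz with rfl | rfl <;> simp [Fneg]
  omega

/-- for odd `q` and odd `n`, if `F ∈ SQH(n,q)` vanishes only at `0`
and is 2-to-1 on `F_q^n ∖ {0}`, then the induced map `[x] ↦ [F x]` is a bijection
of `P^{n-1}(F_q)`. -/
theorem stmt3 {p m k n : ℕ} (hp : p.Prime) (hpodd : Odd p) (hm : 0 < m) (hn : Odd n)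
    {K : Type*} [Field K] [Fintype K] (hK : Fintype.card K = p ^ m)
    (F : (Fin n → K) → (Fin n → K)) (hSQH : IsSQH (p ^ k) F)
    (hzero : ∀ x, F x = 0 ↔ x = 0)
    (h2 : ∀ x : Fin n → K, x ≠ 0 → {y : Fin n → K | y ≠ 0 ∧ F y = F x}.ncard = 2) :
    ∃ G : Projectivization K (Fin n → K) → Projectivization K (Fin n → K),
      Function.Bijective G ∧
      ∀ (x : Fin n → K) (hx : x ≠ 0),
        G (Projectivization.mk K x hx) =
          Projectivization.mk K (F x) (fun h => hx ((hzero x).mp h)) := by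
  classical
  have : Fact p.Prime := ⟨hp⟩
  have : CharP K p := charP_of_card_eq_prime_pow hK
  let _ : Algebra (ZMod p) K := ZMod.algebra K p
  have hp3 : 3 ≤ p := by
    have := hp.two_le
    rcases hpodd with ⟨r, rfl⟩; omega
  have hpodd' : Odd (p ^ k) := hpodd.pow
  have hev : Even (p ^ k + 1) := hpodd'.add_one
  have hchK : ringChar K ≠ 2 := by rw [ringChar.eq K p]; omega
  have h20 : (2 : K) ≠ 0 := Ring.two_ne_zero hchK
  have hneself : ∀ x : Fin n → K, x ≠ 0 → x ≠ -x := by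
    intro x hx h
    have : (2 : K) • x = 0 := by rw [two_smul]; nth_rewrite 1 [h]; simp
    rw [smul_eq_zero] at this
    tauto
  have hFs : ∀ (c : K) x, F (c • x) = c ^ (p ^ k + 1) • F x := by
    intro c x; funext i; exact (hSQH i).1 c x
  have hFneg : ∀ x, F (-x) = F x := by
    intro x
    have := hFs (-1) x
    rwa [hev.neg_one_pow, neg_one_smul, one_smul] at this
  have hF0 : F 0 = 0 := (hzero 0).mpr rfl
  have hinj : ∀ x y, F x = F y → x = y ∨ x = -y := by
    intro x y hxy
    by_cases hy : y = 0
    · left; rw [hy, hF0] at hxy; rw [hy]; exact (hzero x).mp hxy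
    have hx : x ≠ 0 := by
      rintro rfl; rw [hF0] at hxy; exact hy ((hzero y).mp hxy.symm)
    have hsub : ({y, -y} : Set (Fin n → K)) ⊆ {z | z ≠ 0 ∧ F z = F y} := by
      rintro z (rfl | rfl)
      · exact ⟨hy, rfl⟩
      · exact ⟨neg_ne_zero.mpr hy, hFneg y⟩
    have heq := Set.eq_of_subset_of_ncard_le hsub
      (by rw [h2 y hy, Set.ncard_pair (hneself y hy)]) (Set.toFinite _)
    have : x ∈ ({y, -y} : Set (Fin n → K)) := by rw [heq]; exact ⟨hx, hxy⟩
    simpa using this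
  -- the power map
  have hroot : ∀ c : K, c ^ (p ^ k + 1) = 1 → c ^ 2 = 1 := by
    intro c hc
    have h1 := hFs c (fun _ => 1)
    rw [hc, one_smul] at h1
    let i : Fin n := ⟨0, hn.pos⟩
    rcases hinj _ _ h1 with h | h
    · have := congrFun h i
      simp at this
      rw [this]; simp
    · have := congrFun h i
      simp at this
      rw [this]; simp
  have hgcd : Nat.gcd (p ^ k + 1) (p ^ m - 1) ∣ 2 := by
    obtain ⟨g, hg⟩ := IsCyclic.exists_ofOrder_eq_natCard (α := Kˣ)
    have hgc : orderOf g = p ^ m - 1 := by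
      rw [hg, Nat.card_eq_fintype_card, Fintype.card_units, hK]
    have hpos : 0 < orderOf g := orderOf_pos g
    obtain ⟨r, hr⟩ := Nat.gcd_dvd_right (p ^ k + 1) (p ^ m - 1)
    set G := Nat.gcd (p ^ k + 1) (p ^ m - 1)
    have hr0 : r ≠ 0 := by rintro rfl; omega
    have ho : orderOf (g ^ r) = G := by
      rw [orderOf_pow_of_dvd hr0 (by rw [hgc, hr]; exact Dvd.intro_left _ rfl), hgc, hr]
      exact Nat.mul_div_cancel _ (Nat.pos_of_ne_zero hr0)
    have h1 : (g ^ r) ^ (p ^ k + 1) = 1 := by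
      rw [← orderOf_dvd_iff_pow_eq_one, ho]
      exact Nat.gcd_dvd_left _ _
    have h2' := hroot ((g ^ r : Kˣ) : K) (by rw [← Units.val_pow_eq_pow_val, h1, Units.val_one])
    rw [← ho, orderOf_dvd_iff_pow_eq_one]
    exact Units.ext (by rw [Units.val_pow_eq_pow_val, h2', Units.val_one])
  have hsq : ∀ s : Kˣ, ∃ c : Kˣ, c ^ (p ^ k + 1) = s ^ 2 := by
    intro s
    obtain ⟨t, ht⟩ := hgcd
    have hbez := Nat.gcd_eq_gcd_ab (p ^ k + 1) (p ^ m - 1)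
    set a := Nat.gcdA (p ^ k + 1) (p ^ m - 1)
    set b := Nat.gcdB (p ^ k + 1) (p ^ m - 1)
    have hs1 : s ^ (p ^ m - 1) = 1 := by
      rw [← hK, ← Fintype.card_units]; exact pow_card_eq_one
    refine ⟨s ^ (a * t), ?_⟩
    have h2z : (2 : ℤ) = ((p ^ k + 1 : ℕ) : ℤ) * a * t + ((p ^ m - 1 : ℕ) : ℤ) * (b * t) := by
      have : (2 : ℤ) = ((Nat.gcd (p ^ k + 1) (p ^ m - 1) : ℕ) : ℤ) * t := by exact_mod_cast ht
      rw [this, hbez]; ring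
    have : s ^ 2 = s ^ (2 : ℤ) := by norm_cast
    rw [this, h2z, zpow_add, zpow_mul s ((p ^ m - 1 : ℕ) : ℤ), zpow_natCast s (p ^ m - 1), hs1,
      one_zpow, mul_one, ← zpow_natCast, ← zpow_mul]
    congr 1; ring
  -- the subfield
  set d := Nat.gcd m k with hd
  have hd0 : 0 < d := Nat.gcd_pos_of_pos_left _ hm
  obtain ⟨e, he⟩ : d ∣ m := Nat.gcd_dvd_left m k
  obtain ⟨j, hj⟩ : d ∣ k := Nat.gcd_dvd_right m k
  have hcop : Nat.Coprime e j := by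
    have h1 : Nat.gcd (d * e) (d * j) = d := by rw [← he, ← hj]
    rw [Nat.gcd_mul_left] at h1
    exact Nat.eq_of_mul_eq_mul_left hd0 (by rw [h1, mul_one])
  have hodd_e : Odd e := by
    by_contra hne
    rw [Nat.not_odd_iff_even] at hne
    have hjodd : Odd j := by
      by_contra hjne
      rw [Nat.not_odd_iff_even] at hjne
      have := Nat.dvd_gcd hne.two_dvd hjne.two_dvd
      rw [hcop] at this
      omega
    have d1 : p ^ d + 1 ∣ p ^ k + 1 := by
      have := Odd.nat_add_dvd_pow_add_pow (p ^ d) 1 hjodd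
      rwa [one_pow, ← pow_mul, ← hj] at this
    have d2 : p ^ d + 1 ∣ p ^ m - 1 := by
      obtain ⟨f, hf⟩ := hne
      have h1 : p ^ m = (p ^ d * p ^ d) ^ f := by
        rw [he, hf, ← pow_add, ← pow_mul]; congr 1; ring
      have h3 := Nat.sub_dvd_pow_sub_pow (p ^ d * p ^ d) 1 f
      rw [one_pow, ← h1] at h3
      refine dvd_trans ?_ h3
      refine ⟨p ^ d - 1, ?_⟩
      have := Nat.mul_self_sub_mul_self_eq (p ^ d) 1
      simpa using this
    have h3 := Nat.le_of_dvd two_pos ((Nat.dvd_gcd d1 d2).trans hgcd)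
    have : 1 < p ^ d := Nat.one_lt_pow hd0.ne' hp.one_lt
    omega
  let L := GaloisField p d
  let _ : Fintype L := Fintype.ofFinite L
  have hLc : Nat.card L = p ^ d := GaloisField.card p d hd0.ne'
  have hLc' : Fintype.card L = p ^ d := by rw [← Nat.card_eq_fintype_card, hLc]
  have hfr : Module.finrank (ZMod p) K = m := by
    have := FiniteField.pow_finrank_eq_card p K
    rw [hK] at this
    exact Nat.pow_right_injective hp.two_le this
  obtain ⟨φ⟩ : Nonempty (L →ₐ[ZMod p] K) := by
    apply FiniteField.nonempty_algHom_of_finrank_dvd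
    rw [hfr, GaloisField.finrank p hd0.ne']
    exact ⟨e, he⟩
  let _ : Algebra L K := φ.toRingHom.toAlgebra
  have hfrL : Module.finrank L K = e := by
    have h1 := Module.card_eq_pow_finrank (K := L) (V := K)
    rw [hK, hLc', ← pow_mul] at h1
    have h3 := Nat.pow_right_injective hp.two_le h1
    exact (Nat.eq_of_mul_eq_mul_left hd0 (he ▸ h3)).symm
  have hchL : ringChar L ≠ 2 := by rw [ringChar.eq L p]; omega
  have hsm : ∀ (c : L) (x : Fin n → K), c • x = (algebraMap L K c) • x := by
    intro c x; rw [algebraMap_smul]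
  have hσ : ∀ c : L, (algebraMap L K c) ^ (p ^ k) = algebraMap L K c := by
    intro c
    rw [← map_pow, hj, pow_mul, ← hLc', FiniteField.pow_card_pow]
  have hfrV : Odd (Module.finrank L (Fin n → K)) := by
    rw [← Module.finrank_mul_finrank L K (Fin n → K), hfrL, Module.finrank_fin_fun]
    exact hodd_e.mul hn
  have key : ∀ x y : Fin n → K, x ≠ 0 → ∀ l : K, l ≠ 0 → F y = l • F x → ∃ c : K, y = c • x := by
    intro x y hx l hl hxy
    let E := ∑ i ∈ Finset.range (Module.finrank L K), Nat.card L ^ i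
    have hE : Odd E := by
      have hLo : Odd (Nat.card L) := by rw [hLc]; exact hpodd.pow
      rw [Finset.odd_sum_iff_odd_card_odd]
      rw [Finset.filter_true_of_mem (fun i _ => hLo.pow), Finset.card_range, hfrL]
      exact hodd_e
    obtain ⟨r, hr⟩ := hE
    have hnorm : algebraMap L K (Algebra.norm L l) = l ^ E := FiniteField.algebraMap_norm_eq_pow_sum ..
    obtain ⟨c, hc⟩ := hsq ((Units.mk0 l hl) ^ r)
    have hcK : (c : K) ^ (p ^ k + 1) = l ^ (2 * r) := by
      have := congrArg Units.val hc
      push_cast at this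
      rw [this, Units.val_mk0, ← pow_mul, mul_comm]
    have h3 : F ((c : K) • y) = (Algebra.norm L l) • F x := by
      rw [hFs, hcK, hxy, smul_smul, hsm, hnorm, hr, ← pow_succ]
    have hn0 : Algebra.norm L l ≠ 0 := by
      intro h
      rw [h, map_zero] at hnorm
      exact pow_ne_zero _ hl hnorm.symm
    have hpolar : ∀ i, ∃ b : (Fin n → K) → (Fin n → K) → K,
      (∀ x x' y, b (x + x') y = b x y + b x' y) ∧
      (∀ x y y', b x (y + y') = b x y + b x y') ∧
      (∀ (c : K) (x y), b (c • x) y = c * b x y) ∧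
      (∀ (c : K) (x y), b x (c • y) = c ^ (p ^ k) * b x y) ∧
      (∀ x y, QuadraticMap.polar F x y i = b x y + b y x) := fun i => (hSQH i).2
    obtain ⟨c', hc'⟩ := quad_proj_inj hchL hfrV F
      (fun a z => by rw [hsm, hFs, pow_succ, hσ, hsm, map_mul])
      (fun a a' b => by
        funext i
        obtain ⟨B, h1, h2, h3, h4, h5⟩ := hpolar i
        rw [Pi.add_apply, h5, h5, h5, h1, h2]; ring)
      (fun a z b => by
        funext i
        obtain ⟨B, h1, h2, h3, h4, h5⟩ := hpolar i
        rw [hsm, hsm, Pi.smul_apply, h5, h5, h3, h4, hσ, smul_eq_mul]; ring)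
      hinj x ((c : K) • y) hx _ hn0 h3
    refine ⟨(c : K)⁻¹ * algebraMap L K c', ?_⟩
    rw [mul_smul, ← hsm, ← hc', smul_smul, inv_mul_cancel₀ c.ne_zero, one_smul]
  have hFne : ∀ x, x ≠ 0 → F x ≠ 0 := fun x hx h => hx ((hzero x).mp h)
  let G : Projectivization K (Fin n → K) → Projectivization K (Fin n → K) :=
    Projectivization.lift (fun v => Projectivization.mk K (F v.1) (hFne v.1 v.2)) (by
      rintro ⟨a, ha⟩ ⟨b, hb⟩ t hab
      simp only at hab
      rw [Projectivization.mk_eq_mk_iff']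
      exact ⟨t ^ (p ^ k + 1), by rw [← hFs]; exact congrArg F hab.symm⟩)
  have hG : ∀ (x : Fin n → K) (hx : x ≠ 0), G (Projectivization.mk K x hx) =
      Projectivization.mk K (F x) (hFne x hx) := fun x hx => rfl
  refine ⟨G, ?_, hG⟩
  have : Finite (Projectivization K (Fin n → K)) := Quotient.finite _
  rw [← Finite.injective_iff_bijective]
  intro P Q
  induction P using Projectivization.ind with | _ x hx
  induction Q using Projectivization.ind with | _ y hy
  intro h
  rw [hG, hG, Projectivization.mk_eq_mk_iff'] at h
  obtain ⟨l, hl⟩ := h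
  have hl0 : l ≠ 0 := by
    rintro rfl
    rw [zero_smul] at hl
    exact hFne x hx hl.symm
  obtain ⟨c, hc⟩ := key y x hy l hl0 hl.symm
  rw [Projectivization.mk_eq_mk_iff']
  exact ⟨c, hc.symm⟩
end

section
/- Let q = p^m be odd, n even, and let F : F_q^n → F_q^n be a σ-semiquadratic homogeneous map (F ∈ SQH(n,q)) with companion automorphism σ = p^k such that F(x) = 0 ⟺ x = 0 and F is 2-to-1 on F_q^n∖{0}. Then the induced map on P^{n−1}(F_q), sending the projective class [x] of nonzero x to [F(x)], is 2-to-1 on P^{n−1}(F_q): every point of P^{n−1}(F_q) in its image has exactly two preimages. -/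
lemma pair_lemma {k : Type*} [Field k] [Fintype k] (h2 : ringChar k ≠ 2) (a b ν : k) (ha : a ≠ 0) (hb : b ≠ 0) :
    ∃ s t : k, a * s ^ 2 + b * t ^ 2 = ν * a := by
  classical
  obtain ⟨s, t, h⟩ := FiniteField.exists_root_sum_quadratic
    (f := Polynomial.C a * Polynomial.X ^ 2 + Polynomial.C 0 * Polynomial.X + Polynomial.C (-(ν*a)))
    (g := Polynomial.C b * Polynomial.X ^ 2 + Polynomial.C 0 * Polynomial.X + Polynomial.C 0)
    (Polynomial.degree_quadratic ha) (Polynomial.degree_quadratic hb)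
    (FiniteField.odd_card_of_char_ne_two h2)
  refine ⟨s, t, ?_⟩
  simp at h
  linear_combination h

lemma diag_sim {k : Type*} [Field k] [Fintype k] (h2 : ringChar k ≠ 2) {N : ℕ} (hN : Even N)
    (w : Fin N → kˣ) (ν : k) (hν : ν ≠ 0) :
    ∃ T : (Fin N → k) → (Fin N → k), Function.Injective T ∧
      ∀ x, QuadraticMap.weightedSumSquares k w (T x) = ν * QuadraticMap.weightedSumSquares k w x := by
  classical
  obtain ⟨r, rfl⟩ := hN
  choose s t hst using fun j : Fin r =>
    pair_lemma h2 (w (Fin.castAdd r j) : k) (w (Fin.natAdd r j) : k) ν (Units.ne_zero _) (Units.ne_zero _)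
  refine ⟨fun x => Fin.append
    (fun j => s j * x (Fin.castAdd r j) - (w (Fin.natAdd r j) : k) / (w (Fin.castAdd r j) : k) * t j * x (Fin.natAdd r j))
    (fun j => t j * x (Fin.castAdd r j) + s j * x (Fin.natAdd r j)), ?_, ?_⟩
  · intro x y hxy
    have key : ∀ j : Fin r, x (Fin.castAdd r j) = y (Fin.castAdd r j) ∧ x (Fin.natAdd r j) = y (Fin.natAdd r j) := by
      intro j
      have h1 := congrFun hxy (Fin.castAdd r j)
      have h3 := congrFun hxy (Fin.natAdd r j)
      simp only [Fin.append_left, Fin.append_right] at h1 h3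
      have ha : (w (Fin.castAdd r j) : k) ≠ 0 := Units.ne_zero _
      have := hst j
      generalize (w (Fin.castAdd r j) : k) = a at *
      generalize (w (Fin.natAdd r j) : k) = b at *
      field_simp at h1
      constructor
      · apply mul_left_cancel₀ (mul_ne_zero hν ha)
        rw [← this]
        linear_combination s j * h1 + b * t j * h3
      · apply mul_left_cancel₀ (mul_ne_zero hν ha)
        rw [← this]
        linear_combination -t j * h1 + a * s j * h3
    funext i
    refine Fin.addCases (fun j => (key j).1) (fun j => (key j).2) i
  · intro x
    simp only [QuadraticMap.weightedSumSquares_apply, Fin.sum_univ_add, Fin.append_left, Fin.append_right, Units.smul_def, smul_eq_mul]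
    rw [← Finset.sum_add_distrib, ← Finset.sum_add_distrib, Finset.mul_sum]
    refine Finset.sum_congr rfl fun j _ => ?_
    have ha : (w (Fin.castAdd r j) : k) ≠ 0 := Units.ne_zero _
    have := hst j
    generalize (w (Fin.castAdd r j) : k) = a at *
    generalize (w (Fin.natAdd r j) : k) = b at *
    field_simp
    linear_combination (a * x (Fin.castAdd r j) ^ 2 + b * x (Fin.natAdd r j) ^ 2) * this

lemma quad_sim {k V : Type*} [Field k] [Fintype k] [AddCommGroup V] [Module k V] [Finite V]
    (h2 : ringChar k ≠ 2) (hN : Even (Module.finrank k V)) (Q : QuadraticForm k V)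
    (hQ : ∀ x, (∀ y, QuadraticMap.polar Q x y = 0) → x = 0) (ν : k) (hν : ν ≠ 0) :
    ∃ T : V ≃ V, ∀ x, Q (T x) = ν * Q x := by
  have h2' : (2 : k) ≠ 0 := Ring.two_ne_zero h2
  have : Invertible (2 : k) := invertibleOfNonzero h2'
  have : FiniteDimensional k V := inferInstance
  obtain ⟨w, ⟨e⟩⟩ := QuadraticForm.equivalent_weightedSumSquares_units_of_nondegenerate' Q (by
    intro x hx
    apply hQ
    intro y
    have := hx y
    rw [QuadraticMap.associated_apply] at this
    simpa [QuadraticMap.polar, h2'] using this)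
  obtain ⟨T, hT, hT2⟩ := diag_sim h2 hN w ν hν
  refine ⟨Equiv.ofBijective (fun x => e.symm (T (e x))) (Finite.injective_iff_bijective.mp ?_), ?_⟩
  · exact e.symm.injective.comp (hT.comp e.injective)
  · intro x
    simp [hT2]

lemma dual_count {k V : Type*} [Field k] [Fintype k] [AddCommGroup V] [Module k V] [Finite V]
    (w : V) (hw : w ≠ 0) :
    Nat.card {l : Module.Dual k V // l w = 0} * Nat.card k = Nat.card (Module.Dual k V) := by
  let φ : Module.Dual k V →ₗ[k] k := Module.Dual.eval k V w
  have hs : Function.Surjective φ := by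
    apply LinearMap.surjective
    intro h
    apply hw
    rw [← Module.forall_dual_apply_eq_zero_iff k]
    intro l
    exact congrArg (fun f => f l) h
  have := Submodule.card_eq_card_quotient_mul_card (LinearMap.ker φ)
  rw [this, Nat.card_congr (φ.quotKerEquivOfSurjective hs).toEquiv]
  rfl

lemma key {k V : Type*} [Field k] [Fintype k] [AddCommGroup V] [Module k V] [Finite V]
    (h2 : ringChar k ≠ 2) (hN : Even (Module.finrank k V)) (Q : QuadraticMap k V V)
    (hQ : ∀ x y, QuadraticMap.polar Q x y = 0 → x = 0 ∨ y = 0) (ν : k) (hν : ν ≠ 0) (x₀ : V) :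
    ∃ y, Q y = ν • Q x₀ := by
  classical
  have := Fintype.ofFinite V
  have : Finite (Module.Dual k V) := Finite.of_injective (fun l => (l : V → k)) DFunLike.coe_injective
  have := Fintype.ofFinite (Module.Dual k V)
  have hsim : ∀ l : Module.Dual k V, ∃ T : V ≃ V, ∀ x, l (Q (T x)) = ν * l (Q x) := by
    intro l
    by_cases hl : l = 0
    · exact ⟨Equiv.refl _, by simp [hl]⟩
    apply quad_sim h2 hN (l.compQuadraticMap Q) _ ν hν
    intro x hx
    by_contra hx0
    apply hl
    have hinj : Function.Injective (QuadraticMap.polarBilin Q x) := by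
      rw [injective_iff_map_eq_zero]
      intro y hy
      exact (hQ x y hy).resolve_left hx0
    have hsur := Finite.surjective_of_injective hinj
    ext z
    obtain ⟨y, rfl⟩ := hsur z
    have := hx y
    simpa [QuadraticMap.polar] using this
  choose T hT using hsim
  set v := ν • Q x₀
  have hA : ∑ l : Module.Dual k V, ∑ x : V, (if l (Q x - v) = 0 then 1 else 0) =
      ∑ l : Module.Dual k V, ∑ x : V, (if l (ν • Q x - v) = 0 then 1 else 0 : ℕ) := by
    refine Finset.sum_congr rfl fun l _ => ?_
    rw [← Equiv.sum_comp (T l)]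
    refine Finset.sum_congr rfl fun x _ => ?_
    simp only [map_sub, hT, map_smul, smul_eq_mul]
  rw [Finset.sum_comm, Finset.sum_comm (f := fun (l : Module.Dual k V) (x : V) => if l (ν • Q x - v) = 0 then 1 else 0)] at hA
  by_contra! hne
  have hc : 1 < Nat.card k := Finite.one_lt_card
  have cnt : ∀ w : V, (∑ l : Module.Dual k V, if l w = 0 then 1 else 0 : ℕ) = Nat.card {l : Module.Dual k V // l w = 0} := by
    intro w
    rw [Nat.card_eq_fintype_card, Fintype.card_subtype, Finset.sum_boole, Nat.cast_id]
  simp only [cnt] at hA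
  have hD : 0 < Nat.card (Module.Dual k V) := Nat.card_pos
  have h0 : Nat.card {l : Module.Dual k V // l (0 : V) = 0} = Nat.card (Module.Dual k V) := by
    simp [Nat.card_eq_fintype_card, Fintype.card_subtype]
  have lt : ∑ x : V, Nat.card {l : Module.Dual k V // l (Q x - v) = 0} * Nat.card k <
     ∑ x : V, Nat.card {l : Module.Dual k V // l (ν • Q x - v) = 0} * Nat.card k := by
    apply Finset.sum_lt_sum
    · intro x _
      rw [dual_count _ (sub_ne_zero.mpr (hne x))]
      by_cases h : ν • Q x - v = 0
      · rw [h, h0]; nlinarith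
      · rw [dual_count _ h]
    · refine ⟨x₀, Finset.mem_univ _, ?_⟩
      rw [dual_count _ (sub_ne_zero.mpr (hne x₀)), show ν • Q x₀ - v = 0 from sub_self _, h0]
      nlinarith
  rw [← Finset.sum_mul, ← Finset.sum_mul, hA] at lt
  exact lt_irrefl _ lt

lemma arith {p k m : ℕ} (hp : p.Prime) (hm : 0 < m)
    (h : Nat.gcd (p ^ k + 1) (p ^ m - 1) ∣ 2) : Odd (m / Nat.gcd k m) := by
  have hd : 0 < Nat.gcd k m := Nat.gcd_pos_of_pos_right _ hm
  by_contra hodd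
  rw [Nat.not_odd_iff_even] at hodd
  have hcop := Nat.coprime_div_gcd_div_gcd hd
  have hk : Odd (k / Nat.gcd k m) := by
    by_contra hk
    rw [Nat.not_odd_iff_even] at hk
    have := Nat.dvd_gcd hk.two_dvd hodd.two_dvd
    rw [hcop] at this
    omega
  have hkk : p ^ k = (p ^ Nat.gcd k m) ^ (k / Nat.gcd k m) := by
    rw [← pow_mul, Nat.mul_div_cancel' (Nat.gcd_dvd_left _ _)]
  have hmm : p ^ m = (p ^ Nat.gcd k m) ^ (m / Nat.gcd k m) := by
    rw [← pow_mul, Nat.mul_div_cancel' (Nat.gcd_dvd_right _ _)]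
  have hr : 2 ≤ p ^ Nat.gcd k m := hp.two_le.trans (Nat.le_self_pow hd.ne' p)
  set r := p ^ Nat.gcd k m
  have h1 : r + 1 ∣ p ^ k + 1 := by
    rw [hkk]
    simpa using Odd.nat_add_dvd_pow_add_pow r 1 hk
  have h3 : r + 1 ∣ p ^ m - 1 := by
    rw [hmm]
    obtain ⟨j, hj⟩ := hodd.two_dvd
    rw [hj, pow_mul]
    refine Dvd.dvd.trans ?_ (by simpa using Nat.sub_dvd_pow_sub_pow (r ^ 2) 1 j)
    exact ⟨r - 1, by simpa using Nat.sq_sub_sq r 1⟩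
  have := Nat.le_of_dvd (by norm_num) ((Nat.dvd_gcd h1 h3).trans h)
  omega

lemma exists_nu {p k m : ℕ} (hp : p.Prime) (hpodd : Odd p) (hm : 0 < m)
    {K : Type*} [Field K] [Fintype K] (hK : Fintype.card K = p ^ m) (hchar : ringChar K ≠ 2)
    (h : Nat.gcd (p ^ k + 1) (p ^ m - 1) ∣ 2) :
    ∃ ν : K, ¬ IsSquare ν ∧ ν ^ p ^ k = ν := by
  have he := arith hp hm h
  have hkk : p ^ k = (p ^ Nat.gcd k m) ^ (k / Nat.gcd k m) := by
    rw [← pow_mul, Nat.mul_div_cancel' (Nat.gcd_dvd_left _ _)]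
  have hmm : p ^ m = (p ^ Nat.gcd k m) ^ (m / Nat.gcd k m) := by
    rw [← pow_mul, Nat.mul_div_cancel' (Nat.gcd_dvd_right _ _)]
  have hrodd : Odd (p ^ Nat.gcd k m) := hpodd.pow
  set r := p ^ Nat.gcd k m
  set e := m / Nat.gcd k m
  have hr1 : 1 ≤ r := hrodd.pos
  obtain ⟨g, hg⟩ := FiniteField.exists_nonsquare hchar
  have hg0 : g ≠ 0 := by rintro rfl; exact hg IsSquare.zero
  have hu : Odd (∑ i ∈ Finset.range e, r ^ i) := by
    rw [Finset.odd_sum_iff_odd_card_odd]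
    simpa [hrodd.pow] using he
  set u := ∑ i ∈ Finset.range e, r ^ i with hudef
  have hru : u * (r - 1) = r ^ e - 1 := by
    zify [hr1, Nat.one_le_pow e r hr1]
    rw [hudef]; push_cast
    exact geom_sum_mul (r : ℤ) e
  refine ⟨g ^ u, ?_, ?_⟩
  · obtain ⟨j, hj⟩ := hu
    rw [hj]
    rintro ⟨y, hy⟩
    apply hg
    refine ⟨y / g ^ j, ?_⟩
    field_simp
    linear_combination hy
  · have h1 : (g ^ u) ^ r = g ^ u := by
      conv_lhs => rw [show r = (r - 1) + 1 by omega]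
      rw [pow_succ, ← pow_mul, hru, ← hmm, ← hK, FiniteField.pow_card_sub_one_eq_one g hg0, one_mul]
    rw [hkk]
    generalize k / Nat.gcd k m = j
    induction j with
    | zero => simp
    | succ j ih => rw [pow_succ, pow_mul, ih, h1]

lemma gcd_lem {K : Type*} [Field K] [Fintype K] (s : ℕ)
    (h : ∀ c : K, c ≠ 0 → c ^ s = 1 → c ^ 2 = 1) : Nat.gcd s (Fintype.card K - 1) ∣ 2 := by
  classical
  obtain ⟨g, hg⟩ := IsCyclic.exists_ofOrder_eq_natCard (α := Kˣ)
  rw [Nat.card_eq_fintype_card, Fintype.card_units] at hg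
  set N := Fintype.card K - 1
  have hN : 0 < N := by have := Fintype.one_lt_card (α := K); omega
  have hd := Nat.gcd_dvd_right s N
  have hord : orderOf (g ^ (N / Nat.gcd s N)) = Nat.gcd s N := by
    rw [orderOf_pow, hg, Nat.gcd_eq_right (Nat.div_dvd_of_dvd hd), Nat.div_div_self hd hN.ne']
  rw [← hord] 
  apply orderOf_dvd_of_pow_eq_one
  have h1 : (g ^ (N / Nat.gcd s N)) ^ s = 1 := by
    apply orderOf_dvd_iff_pow_eq_one.mp
    rw [hord]; exact Nat.gcd_dvd_left _ _
  have := h _ (Units.ne_zero (g ^ (N / Nat.gcd s N))) (by rw [← Units.val_pow_eq_pow_val, h1, Units.val_one])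
  ext; rw [Units.val_pow_eq_pow_val, this, Units.val_one]

lemma sq_pow {K : Type*} [Field K] [Fintype K] (s : ℕ)
    (h : Nat.gcd s (Fintype.card K - 1) ∣ 2) (c : K) (hc : c ≠ 0) : ∃ d : K, d ≠ 0 ∧ d ^ s = c ^ 2 := by
  classical
  set N := Fintype.card K - 1
  have hN : (Units.mk0 c hc) ^ N = 1 := by
    ext; simpa using FiniteField.pow_card_sub_one_eq_one c hc
  obtain ⟨j, hj⟩ := h
  have hb := Nat.gcd_eq_gcd_ab s N
  set a := Nat.gcdA s N
  set b := Nat.gcdB s N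
  have : ((Units.mk0 c hc) ^ (a * j)) ^ s = (Units.mk0 c hc) ^ 2 := by
    rw [← zpow_natCast _ s, ← zpow_mul, ← zpow_natCast _ 2]
    have e : ((2 : ℕ) : ℤ) = a * j * s + N * (b * j) := by
      rw [hj]; push_cast; rw [hb]; ring
    rw [e, zpow_add, zpow_mul _ (N : ℤ), zpow_natCast _ N, hN, one_zpow, mul_one]
  exact ⟨_, Units.ne_zero ((Units.mk0 c hc) ^ (a * j)), by simpa using congrArg Units.val this⟩



lemma exists_nonsq_mult {p k n : ℕ} (hp : p.Prime) (hn : Even n)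
    {K : Type*} [Field K] [Fintype K] [CharP K p] (hchar : ringChar K ≠ 2)
    (F : (Fin n → K) → (Fin n → K)) (hSQH : IsSQH (p ^ k) F)
    (hpm : ∀ x y, F y = F x → y = x ∨ y = -x) (hneg : ∀ x, F (-x) = F x)
    (ν : K) (hν0 : ν ≠ 0) (hν : ν ^ p ^ k = ν) (x₀ : Fin n → K) : ∃ y, F y = ν • F x₀ := by
  classical
  have : Fact p.Prime := ⟨hp⟩
  let K₀ : Subfield K := RingHom.eqLocusField (iterateFrobenius K p k) (RingHom.id K)
  have hK₀ : ∀ c : K₀, (c : K) ^ p ^ k = c := fun c => c.2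
  have := Fintype.ofFinite K₀
  have h2K : (2 : K) ≠ 0 := Ring.two_ne_zero hchar
  have hchar₀ : ringChar K₀ ≠ 2 := by
    intro h
    have h20 : (2 : K₀) = 0 := by
      have := ringChar.Nat.cast_ringChar (R := K₀)
      rw [h] at this; exact_mod_cast this
    exact h2K (by rw [← map_ofNat K₀.subtype 2, h20, map_zero])
  have hdim : Even (Module.finrank K₀ (Fin n → K)) := by
    rw [← Module.finrank_mul_finrank K₀ K (Fin n → K), Module.finrank_fin_fun]
    exact hn.mul_left _
  choose hF b hb1 hb2 hb3 hb4 hb5 using hSQH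
  let B : LinearMap.BilinMap K₀ (Fin n → K) (Fin n → K) :=
    LinearMap.mk₂ K₀ (fun x y i => b i x y + b i y x)
      (by intro x x' y; funext i; simp only [hb1, hb2, Pi.add_apply]; ring)
      (by
        intro c x y; funext i
        change b i ((c : K) • x) y + b i y ((c : K) • x) = (c : K) * (b i x y + b i y x)
        rw [hb3, hb4, hK₀]; ring)
      (by intro x x' y; funext i; simp only [hb1, hb2, Pi.add_apply]; ring)
      (by
        intro c x y; funext i
        change b i x ((c : K) • y) + b i ((c : K) • y) x = (c : K) * (b i x y + b i y x)
        rw [hb3, hb4, hK₀]; ring)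
  let Q : QuadraticMap K₀ (Fin n → K) (Fin n → K) :=
    { toFun := F
      toFun_smul := by
        intro c x; funext i
        change F ((c : K) • x) i = ((c : K) * (c : K)) * F x i
        rw [hF, pow_succ, hK₀]
      exists_companion' := ⟨B, by
        intro x y; funext i
        change F (x + y) i = F x i + F y i + (b i x y + b i y x)
        rw [← hb5]; ring⟩ }
  have h2x : ∀ z : Fin n → K, z + z = 0 → z = 0 := by
    intro z hz
    rw [← two_smul K] at hz
    exact (smul_eq_zero.mp hz).resolve_left h2K
  obtain ⟨y, hy⟩ := key hchar₀ hdim Q (by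
    intro x y hxy
    have e1 : F (x + y) = F x + F y := by
      have : F (x + y) - F x - F y = 0 := hxy
      rw [sub_sub] at this; exact sub_eq_zero.mp this
    have e2 : F (x - y) = F x + F y := by
      have h := QuadraticMap.polar_neg_right Q x y
      rw [hxy, neg_zero] at h
      have : F (x + -y) - F x - F (-y) = 0 := h
      rw [hneg, sub_sub, ← sub_eq_add_neg] at this
      exact sub_eq_zero.mp this
    rcases hpm (x - y) (x + y) (e1.trans e2.symm) with h | h
    · right; apply h2x
      have := sub_eq_zero.mpr h
      rw [← this]; abel
    · left; apply h2x
      have := sub_eq_zero.mpr h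
      rw [← this]; abel) (⟨ν, hν⟩ : K₀) (by
        intro h; exact hν0 (congrArg (fun a : K₀ => (a : K)) h)) x₀
  exact ⟨y, hy⟩



/-- for odd `q` and even `n`, if `F ∈ SQH(n,q)` vanishes only at `0`
and is 2-to-1 on `F_q^n ∖ {0}`, then the induced map `[x] ↦ [F x]` on
`P^{n-1}(F_q)` is 2-to-1: every point in its image has exactly two preimages. -/
theorem stmt4 {p m k n : ℕ} (hp : p.Prime) (hpodd : Odd p) (hm : 0 < m) (hn : Even n)
    {K : Type*} [Field K] [Fintype K] (hK : Fintype.card K = p ^ m)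
    (F : (Fin n → K) → (Fin n → K)) (hSQH : IsSQH (p ^ k) F)
    (hzero : ∀ x, F x = 0 ↔ x = 0)
    (h2 : ∀ x : Fin n → K, x ≠ 0 → {y : Fin n → K | y ≠ 0 ∧ F y = F x}.ncard = 2) :
    ∃ G : Projectivization K (Fin n → K) → Projectivization K (Fin n → K),
      (∀ (x : Fin n → K) (hx : x ≠ 0),
        G (Projectivization.mk K x hx) =
          Projectivization.mk K (F x) (fun h => hx ((hzero x).mp h))) ∧
      ∀ P : Projectivization K (Fin n → K), (∃ Q, G Q = P) →
        {Q : Projectivization K (Fin n → K) | G Q = P}.ncard = 2 := by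
  classical
  have : Fact p.Prime := ⟨hp⟩
  have hcp : CharP K p := by
    obtain ⟨p', hp'⟩ := CharP.exists K
    obtain ⟨n', hp'', h'⟩ := FiniteField.card K p'
    have : p' = p := by
      have h3 : p' ∣ p ^ m := by rw [← hK, h']; exact dvd_pow_self _ n'.pos.ne'
      exact (Nat.prime_dvd_prime_iff_eq hp'' hp).mp (hp''.dvd_of_dvd_pow h3)
    rwa [this] at hp'
  have hchar : ringChar K ≠ 2 := by
    have hr : ringChar K = p := CharP.eq K (ringChar.charP K) hcp
    rw [hr]
    rintro rfl
    exact absurd hpodd (by decide)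
  have h2K : (2 : K) ≠ 0 := Ring.two_ne_zero hchar
  have hsodd : Even (p ^ k + 1) := (hpodd.pow).add_one
  have hF : ∀ (c : K) x, F (c • x) = c ^ (p ^ k + 1) • F x := by
    intro c x; funext i; exact (hSQH i).1 c x
  have hneg : ∀ x, F (-x) = F x := by
    intro x
    have := hF (-1) x
    rwa [hsodd.neg_one_pow, one_smul, neg_one_smul] at this
  have hpm : ∀ x y, F y = F x → y = x ∨ y = -x := by
    intro x y h
    by_cases hx : x = 0
    · left; rw [hx, (hzero 0).mpr rfl] at h; rw [hx]; exact (hzero y).mp h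
    have hy : y ≠ 0 := by
      rintro rfl; rw [(hzero 0).mpr rfl] at h; exact hx ((hzero x).mp h.symm)
    have hne : x ≠ -x := by
      intro h
      have : x + x = 0 := by nth_rewrite 1 [h]; exact neg_add_cancel x
      rw [← two_smul K] at this
      exact hx ((smul_eq_zero.mp this).resolve_left h2K)
    have hs : ({x, -x} : Set (Fin n → K)) = {y | y ≠ 0 ∧ F y = F x} := by
      apply Set.eq_of_subset_of_ncard_le
      · rintro z (rfl | rfl)
        · exact ⟨hx, rfl⟩
        · exact ⟨neg_ne_zero.mpr hx, hneg x⟩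
      · rw [h2 x hx, Set.ncard_pair hne]
      · exact Set.toFinite _
    have : y ∈ ({x, -x} : Set (Fin n → K)) := by rw [hs]; exact ⟨hy, h⟩
    simpa using this
  have hnz : ∀ x, x ≠ 0 → F x ≠ 0 := fun x hx h => hx ((hzero x).mp h)
  let G : Projectivization K (Fin n → K) → Projectivization K (Fin n → K) :=
    fun P => Projectivization.mk K (F P.rep) (hnz _ P.rep_nonzero)
  have hG : ∀ (x : Fin n → K) (hx : x ≠ 0),
        G (Projectivization.mk K x hx) = Projectivization.mk K (F x) (hnz x hx) := by
    intro x hx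
    obtain ⟨a, ha⟩ := Projectivization.exists_smul_eq_mk_rep K x hx
    refine (Projectivization.mk_eq_mk_iff' K _ _ _ _).mpr ⟨(a : K) ^ (p ^ k + 1), ?_⟩
    rw [← hF, ← ha]; rfl
  refine ⟨G, hG, ?_⟩
  rintro P ⟨Q, rfl⟩
  induction Q using Projectivization.ind with
  | h x hx =>
  have hgcd : Nat.gcd (p ^ k + 1) (Fintype.card K - 1) ∣ 2 := by
    apply gcd_lem
    intro c hc h
    have h1 : F (c • x) = F x := by rw [hF, h, one_smul]
    rcases hpm _ _ h1 with h3 | h3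
    · have : (c - 1) • x = 0 := by rw [sub_smul, h3, one_smul, sub_self]
      have := (smul_eq_zero.mp this).resolve_right hx
      rw [sub_eq_zero.mp this, one_pow]
    · have : (c + 1) • x = 0 := by rw [add_smul, h3, one_smul, neg_add_cancel]
      have := (smul_eq_zero.mp this).resolve_right hx
      rw [eq_neg_of_add_eq_zero_left this]; ring
  obtain ⟨ν, hνsq, hν⟩ := exists_nu (k := k) hp hpodd hm hK hchar (by rw [← hK]; exact hgcd)
  have hν0 : ν ≠ 0 := by rintro rfl; exact hνsq IsSquare.zero
  obtain ⟨y, hy⟩ := exists_nonsq_mult hp hn hchar F hSQH hpm hneg ν hν0 hν x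
  have hy0 : y ≠ 0 := by
    rintro rfl
    rw [(hzero 0).mpr rfl] at hy
    exact (smul_ne_zero hν0 (hnz x hx)) hy.symm
  have hclass : ∀ z (hz : z ≠ 0) w (hw : w ≠ 0) (c : K), c ≠ 0 → F z = c ^ 2 • F w →
      Projectivization.mk K z hz = Projectivization.mk K w hw := by
    intro z hz w hw c hc h
    obtain ⟨d, hd, hdc⟩ := sq_pow _ hgcd c hc
    rw [← hdc, ← hF] at h
    rw [Projectivization.mk_eq_mk_iff']
    rcases hpm _ _ h with h | h
    · exact ⟨d, h.symm⟩
    · exact ⟨-d, by rw [h, neg_smul]⟩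
  have hset : {Q | G Q = G (Projectivization.mk K x hx)} =
      {Projectivization.mk K x hx, Projectivization.mk K y hy0} := by
    ext R
    induction R using Projectivization.ind with
    | h z hz =>
    simp only [Set.mem_ofPred_eq, Set.mem_insert_iff, Set.mem_singleton_iff]
    constructor
    · intro h
      rw [hG, hG, Projectivization.mk_eq_mk_iff'] at h
      obtain ⟨a, ha⟩ := h
      have ha0 : a ≠ 0 := by
        rintro rfl; rw [zero_smul] at ha; exact hnz z hz ha.symm
      by_cases hsq : IsSquare a
      · left
        obtain ⟨c, rfl⟩ := hsq
        exact hclass z hz x hx c (left_ne_zero_of_mul ha0) (by rw [← ha, pow_two])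
      · right
        have : IsSquare (a / ν) := by
          rw [← quadraticChar_one_iff_isSquare (div_ne_zero ha0 hν0)]
          have e1 := quadraticChar_neg_one_iff_not_isSquare.mpr hsq
          have e2 := quadraticChar_neg_one_iff_not_isSquare.mpr hνsq
          have e3 : quadraticChar K a = quadraticChar K (a / ν) * quadraticChar K ν := by
            rw [← map_mul, div_mul_cancel₀ _ hν0]
          rw [e1, e2] at e3
          linarith
        obtain ⟨c, hc⟩ := this
        refine hclass z hz y hy0 c ?_ ?_
        · rintro rfl
          rw [mul_zero] at hc
          exact div_ne_zero ha0 hν0 hc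
        · rw [hy, smul_smul, pow_two, ← hc, div_mul_cancel₀ _ hν0, ha]
    · rintro (h | h)
      · rw [h]
      · rw [h, hG, hG, Projectivization.mk_eq_mk_iff']
        exact ⟨ν, hy.symm⟩
  rw [hset, Set.ncard_pair]
  intro h
  rw [Projectivization.mk_eq_mk_iff'] at h
  obtain ⟨a, ha⟩ := h
  have ha0 : a ≠ 0 := by
    rintro rfl; rw [zero_smul] at ha; exact hx ha.symm
  apply hνsq
  rw [← ha, hF, smul_smul] at hy
  have h1 : (1 - ν * a ^ (p ^ k + 1)) • F y = 0 := by
    rw [sub_smul, one_smul, ← hy, sub_self]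
  have h3 := sub_eq_zero.mp ((smul_eq_zero.mp h1).resolve_right (hnz y hy0))
  obtain ⟨j, hj⟩ := hsodd
  rw [hj] at h3
  refine ⟨(a ^ j)⁻¹, ?_⟩
  have := pow_ne_zero j ha0
  field_simp
  rw [h3]; ring
end

section
/- Let q = p^m be odd and let F : F_q^n → F_q^n be a σ-semiquadratic homogeneous map (F ∈ SQH(n,q)) with companion automorphism σ = p^k such that F(x) = 0 ⟺ x = 0 and the induced map [x] ↦ [F(x)] on P^{n−1}(F_q) is a bijection. Then F is gcd(p^k+1, q−1)-to-1 on F_q^n∖{0}: every value attained by F on F_q^n∖{0} has exactly gcd(p^k+1, q−1) preimages in F_q^n∖{0}. -/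
/-- for odd `q`, if `F ∈ SQH(n,q)` vanishes only at `0` and the
induced map `[x] ↦ [F x]` on `P^{n-1}(F_q)` is a bijection, then `F` is
`gcd(p^k+1, q-1)`-to-1 on `F_q^n ∖ {0}`. -/
theorem stmt5 {p m k n : ℕ} (hp : p.Prime) (hpodd : Odd p) (hm : 0 < m)
    {K : Type*} [Field K] [Fintype K] (hK : Fintype.card K = p ^ m)
    (F : (Fin n → K) → (Fin n → K)) (hSQH : IsSQH (p ^ k) F)
    (hzero : ∀ x, F x = 0 ↔ x = 0)
    (G : Projectivization K (Fin n → K) → Projectivization K (Fin n → K))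
    (hGbij : Function.Bijective G)
    (hG : ∀ (x : Fin n → K) (hx : x ≠ 0),
      G (Projectivization.mk K x hx) =
        Projectivization.mk K (F x) (fun h => hx ((hzero x).mp h))) :
    ∀ x : Fin n → K, x ≠ 0 →
      {y : Fin n → K | y ≠ 0 ∧ F y = F x}.ncard = Nat.gcd (p ^ k + 1) (p ^ m - 1) := by
  intro x hx
  have hc : Nat.card Kˣ = p ^ m - 1 := by
    rw [Nat.card_units, Nat.card_eq_fintype_card, hK]
  have hF : ∀ (c : K) (y : Fin n → K), F (c • y) = c ^ (p ^ k + 1) • F y := by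
    intro c y
    ext i
    simpa using (hSQH i).1 c y
  have hFx : F x ≠ 0 := fun h => hx ((hzero x).mp h)
  have key : {y : Fin n → K | y ≠ 0 ∧ F y = F x} =
      Set.image (fun u : Kˣ => (u : K) • x)
        ((powMonoidHom (p ^ k + 1) : Kˣ →* Kˣ).ker : Set Kˣ) := by
    ext y
    simp only [Set.mem_ofPred_eq, Set.mem_image, SetLike.mem_coe, MonoidHom.mem_ker,
      powMonoidHom_apply]
    constructor
    · rintro ⟨hy, h⟩
      have h1 : Projectivization.mk K y hy = Projectivization.mk K x hx := by
        apply hGbij.1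
        rw [hG, hG]
        simp only [h]
      obtain ⟨a, rfl⟩ := (Projectivization.mk_eq_mk_iff K y x hy hx).1 h1
      refine ⟨a, ?_, rfl⟩
      rw [Units.smul_def, hF] at h
      have h2 : ((a : K) ^ (p ^ k + 1) - 1) • F x = 0 := by
        rw [sub_smul, one_smul, h, sub_self]
      have h3 := (smul_eq_zero.1 h2).resolve_right hFx
      ext
      simpa using sub_eq_zero.1 h3
    · rintro ⟨a, ha, rfl⟩
      refine ⟨smul_ne_zero a.ne_zero hx, ?_⟩
      have h4 : (a : K) ^ (p ^ k + 1) = 1 := by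
        rw [← Units.val_pow_eq_pow_val, ha, Units.val_one]
      rw [hF, h4, one_smul]
  have hinj : Function.Injective (fun u : Kˣ => (u : K) • x) := by
    intro a b hab
    exact Units.ext (smul_left_injective K hx hab)
  rw [key, Set.ncard_image_of_injective _ hinj, ← Nat.card_coe_set_eq]
  have := IsCyclic.card_powMonoidHom_ker (G := Kˣ) (p ^ k + 1)
  rw [hc, Nat.gcd_comm] at this
  exact this
end

section
/- Let q = p^m and let S : F_q^n → F_q^n be a σ-semiquadratic homogeneous map (S ∈ SQH(n,q)) with companion automorphism σ = p^k such that S(x) = 0 ⟺ x = 0 and the induced map [x] ↦ [S(x)] on P^{n−1}(F_q) is a bijection. Suppose S is degenerate, i.e., there exist invertible F_q-linear maps L_1, L_2 : F_q^n → F_q^n and indices i, j ∈ {1,…,n} such that the j-th coordinate of T = L_1 ∘ S ∘ L_2 does not depend on the i-th variable (T_j(x + b·e_i) = T_j(x) for all x ∈ F_q^n and all b ∈ F_q, where e_i is the i-th standard basis vector). Then gcd(p^k+1, q−1) = 1; in particular p = 2. -/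
lemma aux_nt {p m k : ℕ} (hp : p.Prime) (hm : 0 < m) :
    (Nat.gcd (p ^ k + 1) (p ^ m - 1) = 1 ∧ p = 2) ∨
    (Nat.gcd (p ^ k + 1) (p ^ m - 1) = 2 ∧ p ≠ 2) ∨
    ∃ g t s : ℕ, 0 < g ∧ m = 2 * g * s ∧ k = g * t ∧ Odd t ∧
      Nat.gcd (p ^ k + 1) (p ^ m - 1) = p ^ g + 1 := by
  set d := Nat.gcd (p ^ k + 1) (p ^ m - 1) with hd
  have hd1 : d ∣ p ^ k + 1 := Nat.gcd_dvd_left _ _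
  have hd2 : d ∣ p ^ m - 1 := Nat.gcd_dvd_right _ _
  have hpp : ∀ a, 1 ≤ p ^ a := fun a => Nat.one_le_pow _ _ hp.pos
  have hd3 : d ∣ p ^ (2 * k) - 1 := by
    have : p ^ (2 * k) - 1 = (p ^ k + 1) * (p ^ k - 1) := by
      have := Nat.sq_sub_sq (p ^ k) 1
      rw [← this, mul_comm 2 k, pow_mul, one_pow]
    rw [this]; exact hd1.mul_right _
  have hd4 : d ∣ p ^ (Nat.gcd (2 * k) m) - 1 := by
    rw [← Nat.pow_sub_one_gcd_pow_sub_one]; exact Nat.dvd_gcd hd3 hd2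
  have hgpos : 0 < Nat.gcd k m := Nat.gcd_pos_of_pos_right _ hm
  obtain ⟨g, t, s', hg, hco, hk, hm'⟩ : ∃ g t s', 0 < g ∧ Nat.Coprime t s' ∧ k = g * t ∧ m = g * s' := by
    obtain ⟨t, s', hco, h1, h2⟩ := Nat.exists_coprime k m
    exact ⟨_, t, s', hgpos, hco, by rw [mul_comm]; exact h1, by rw [mul_comm]; exact h2⟩
  have hgcd : Nat.gcd (2 * k) m = g * Nat.gcd 2 s' := by
    rw [hk, hm', show 2 * (g * t) = g * (2 * t) by ring, Nat.gcd_mul_left, Nat.Coprime.gcd_mul_right_cancel _ hco]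
  rcases Nat.even_or_odd s' with he | ho
  · right; right
    obtain ⟨s, hs⟩ := he
    have htodd : Odd t := by
      rw [← Nat.not_even_iff_odd]; intro h
      have : 2 ∣ Nat.gcd t s' := Nat.dvd_gcd h.two_dvd ⟨s, by omega⟩
      rw [hco] at this; omega
    refine ⟨g, t, s, hg, by rw [hm', hs]; ring, hk, htodd, ?_⟩
    have h2 : Nat.gcd 2 s' = 2 := Nat.gcd_eq_left ⟨s, by omega⟩
    rw [hgcd, h2] at hd4
    have hQ : p ^ (g * 2) - 1 = (p ^ g + 1) * (p ^ g - 1) := by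
      have := Nat.sq_sub_sq (p ^ g) 1
      rw [← this, pow_mul, one_pow]
    rw [hQ] at hd4
    have hdiv1 : p ^ g + 1 ∣ p ^ k + 1 := by
      have := htodd.nat_add_dvd_pow_add_pow (p ^ g) 1
      rwa [one_pow, ← pow_mul, ← hk] at this
    have hdiv2 : p ^ g + 1 ∣ p ^ m - 1 := by
      have : p ^ (g * 2) - 1 ∣ p ^ m - 1 := by
        apply Nat.pow_sub_one_dvd_pow_sub_one
        exact ⟨s, by rw [hm', hs]; ring⟩
      exact (Dvd.intro _ hQ.symm).trans this
    have hdiv : p ^ g + 1 ∣ d := Nat.dvd_gcd hdiv1 hdiv2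
    obtain ⟨w, hw⟩ := hdiv
    -- w ∣ p^g - 1 and w ∣ (p^k+1)/(p^g+1)
    obtain ⟨v, hv⟩ := hdiv1
    have hQpos : 0 < p ^ g + 1 := by omega
    have hw1 : w ∣ p ^ g - 1 := by
      rw [hw] at hd4; exact Nat.dvd_of_mul_dvd_mul_left hQpos hd4
    have hw2 : w ∣ v := by
      rw [hw, hv] at hd1; exact Nat.dvd_of_mul_dvd_mul_left hQpos hd1
    have hv1 : (p ^ g - 1 : ℤ) ∣ (v : ℤ) - 1 := by
      have hs : ((v : ℤ)) = ∑ i ∈ Finset.range t, (-(p:ℤ) ^ g) ^ i := by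
        have h1 := geom_sum_mul_neg (-(p:ℤ) ^ g) t
        rw [htodd.neg_pow, ← pow_mul, ← hk] at h1
        have h3 : ((p:ℤ) ^ k + 1) = (p ^ g + 1) * v := by exact_mod_cast hv
        have h4 : ((p:ℤ) ^ g + 1) ≠ 0 := by positivity
        apply mul_left_cancel₀ h4
        linear_combination -h3 - h1
      rw [hs]
      have h5 : (∑ i ∈ Finset.range t, (-(1:ℤ)) ^ i) = 1 := by
        rw [neg_one_geom_sum, if_neg (Nat.not_even_iff_odd.2 htodd)]
      conv_rhs => rw [← h5]
      rw [← Finset.sum_sub_distrib]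
      refine Finset.dvd_sum fun i _ => ?_
      refine dvd_trans ?_ (sub_dvd_pow_sub_pow _ _ _)
      exact ⟨-1, by ring⟩
    have hw3 : w = 1 := by
      have a1 : (w : ℤ) ∣ (p ^ g - 1 : ℤ) := by
        have : ((w:ℕ) : ℤ) ∣ ((p ^ g - 1 : ℕ) : ℤ) := by exact_mod_cast hw1
        rwa [Nat.cast_sub (hpp g), Nat.cast_pow, Nat.cast_one] at this
      have a2 : (w : ℤ) ∣ v := by exact_mod_cast hw2
      have a3 := dvd_sub a2 (a1.trans hv1)
      simp only [sub_sub_cancel] at a3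
      have : w ∣ 1 := by exact_mod_cast a3
      exact Nat.dvd_one.1 this
    rw [hw, hw3, mul_one]
  · have h2 : Nat.gcd 2 s' = 1 := by
      exact Nat.coprime_two_left.2 ho
    rw [hgcd, h2, mul_one] at hd4
    have hd5 : d ∣ p ^ k - 1 := hd4.trans (Nat.pow_sub_one_dvd_pow_sub_one _ ⟨t, hk⟩)
    have hd6 : d ∣ 2 := by
      have := Nat.dvd_sub hd1 hd5
      have h := hpp k
      rwa [show p ^ k + 1 - (p ^ k - 1) = 2 by omega] at this
    rcases (Nat.dvd_prime Nat.prime_two).1 hd6 with h | h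
    · left
      refine ⟨h, ?_⟩
      by_contra hp2
      have hodd := hp.odd_of_ne_two hp2
      have a1 : 2 ∣ p ^ k + 1 := (hodd.pow.add_odd odd_one).two_dvd
      have a2 : 2 ∣ p ^ m - 1 := (hodd.pow.tsub_odd odd_one).two_dvd
      have := Nat.dvd_gcd a1 a2
      rw [← hd, h] at this; omega
    · right; left
      refine ⟨h, ?_⟩
      rintro rfl
      rw [h] at hd2
      have : 2 ∣ 2 ^ m := dvd_pow_self _ hm.ne'
      have h1 := hpp m
      omega
open scoped ComplexConjugate

lemma aux_absq {K V : Type*} [Field K] [Fintype K] [AddCommGroup V] [Fintype V]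
    (ψ : AddChar K ℂ) (f : V → K) (B : V → V → K)
    (hB : ∀ x y, f (x + y) = f x + f y + B x y)
    (hadd : ∀ x y y', B x (y + y') = B x y + B x y')
    (h1 : ∀ x, (∀ y, ψ (B x y) = 1) → ψ (f x) = 1) :
    Complex.normSq (∑ x, ψ (f x)) =
      (Fintype.card V : ℝ) * (Nat.card {x : V // ∀ y, ψ (B x y) = 1} : ℝ) := by
  classical
  have hB0 : ∀ x, B x 0 = 0 := fun x => by
    have := hadd x 0 0
    simpa using this
  have key : ∀ x, ∑ y, ψ (B x y) = if ∀ y, ψ (B x y) = 1 then (Fintype.card V : ℂ) else 0 := by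
    intro x
    let χ : AddChar V ℂ :=
      { toFun := fun y => ψ (B x y)
        map_zero_eq_one' := by simp [hB0]
        map_add_eq_mul' := fun a b => by simp [hadd, AddChar.map_add_eq_mul] }
    have h := AddChar.sum_eq_ite χ
    have h2 : (χ = 0) ↔ ∀ y, ψ (B x y) = 1 := by
      rw [AddChar.eq_zero_iff]; rfl
    simp only [h2] at h
    exact h
  have : ((Complex.normSq (∑ x, ψ (f x)) : ℝ) : ℂ) =
      ((Fintype.card V : ℝ) * (Nat.card {x : V // ∀ y, ψ (B x y) = 1} : ℝ) : ℝ) := by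
    rw [← Complex.mul_conj, map_sum, Finset.mul_sum]
    calc ∑ y, (∑ x, ψ (f x)) * conj (ψ (f y))
        = ∑ y, ∑ x, ψ (f x) * ψ (B x y) := by
          refine Finset.sum_congr rfl fun y _ => ?_
          rw [← Equiv.sum_comp (Equiv.addRight y) (fun x => ψ (f x)), Finset.sum_mul]
          refine Finset.sum_congr rfl fun x _ => ?_
          rw [← AddChar.map_neg_eq_conj, ← AddChar.map_add_eq_mul, ← AddChar.map_add_eq_mul]
          congr 1
          simp only [Equiv.coe_addRight, hB]; ring
      _ = ∑ x, ψ (f x) * ∑ y, ψ (B x y) := by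
          rw [Finset.sum_comm]; simp only [Finset.mul_sum]
      _ = ∑ x, if ∀ y, ψ (B x y) = 1 then (Fintype.card V : ℂ) else 0 := by
          refine Finset.sum_congr rfl fun x _ => ?_
          rw [key]
          split_ifs with h
          · rw [h1 x h, one_mul]
          · simp
      _ = _ := by
          rw [← Finset.sum_filter, Finset.sum_const, Nat.card_eq_fintype_card, Fintype.card_subtype]
          push_cast
          rw [nsmul_eq_mul, mul_comm]
  exact_mod_cast this

lemma aux_sum_dot {K : Type*} [Field K] [Fintype K] [DecidableEq K] {n : ℕ} (ψ : AddChar K ℂ) (hψ : ψ.IsPrimitive)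
    (y : Fin n → K) : ∑ a : Fin n → K, ψ (a ⬝ᵥ y) =
      if y = 0 then (Fintype.card (Fin n → K) : ℂ) else 0 := by
  classical
  let χ : AddChar (Fin n → K) ℂ :=
    { toFun := fun a => ψ (a ⬝ᵥ y)
      map_zero_eq_one' := by simp
      map_add_eq_mul' := fun a b => by simp [add_dotProduct, AddChar.map_add_eq_mul] }
  have h := AddChar.sum_eq_ite χ
  have h2 : (χ = 0) ↔ y = 0 := by
    rw [AddChar.eq_zero_iff]
    constructor
    · intro h
      by_contra hy
      obtain ⟨i, hi⟩ := Function.ne_iff.1 hy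
      have h3 := hψ hi
      apply h3
      rw [AddChar.eq_one_iff]
      intro c
      have := h (Pi.single i c)
      simp only [χ, AddChar.coe_mk, single_dotProduct] at this
      rw [AddChar.mulShift_apply, mul_comm]
      exact this
    · rintro rfl x
      simp [χ]
  simp only [h2] at h
  exact h

lemma aux_parseval {K : Type*} [Field K] [Fintype K] {n : ℕ} (ψ : AddChar K ℂ) (hψ : ψ.IsPrimitive)
    (S : (Fin n → K) → (Fin n → K)) :
    ∑ a : Fin n → K, Complex.normSq (∑ x, ψ (a ⬝ᵥ S x)) =
      (Fintype.card (Fin n → K) : ℝ) * ∑ x, (Nat.card {x' // S x' = S x} : ℝ) := by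
  classical
  have : ((∑ a : Fin n → K, Complex.normSq (∑ x, ψ (a ⬝ᵥ S x)) : ℝ) : ℂ) =
      ((Fintype.card (Fin n → K) : ℝ) * ∑ x, (Nat.card {x' // S x' = S x} : ℝ) : ℝ) := by
    push_cast
    simp only [← Complex.mul_conj, map_sum, Finset.mul_sum, Finset.sum_mul]
    calc ∑ a, ∑ x, ∑ x', ψ (a ⬝ᵥ S x') * conj (ψ (a ⬝ᵥ S x))
        = ∑ a, ∑ x, ∑ x', ψ (a ⬝ᵥ (S x' - S x)) := by
          simp only [← AddChar.map_neg_eq_conj, ← AddChar.map_add_eq_mul, dotProduct_neg, dotProduct_add, sub_eq_add_neg]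
      _ = ∑ x, ∑ x', ∑ a, ψ (a ⬝ᵥ (S x' - S x)) := by
          rw [Finset.sum_comm]
          refine Finset.sum_congr rfl fun x _ => ?_
          rw [Finset.sum_comm]
      _ = _ := by
          refine Finset.sum_congr rfl fun x _ => ?_
          simp only [aux_sum_dot ψ hψ, sub_eq_zero]
          rw [← Finset.sum_filter, Finset.sum_const, Nat.card_eq_fintype_card, Fintype.card_subtype,
            nsmul_eq_mul, mul_comm]
  exact_mod_cast this

lemma aux_sum_zero {K : Type*} [Field K] [Fintype K] {n : ℕ} (ψ : AddChar K ℂ) (hψ : ψ.IsPrimitive)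
    (S : (Fin n → K) → (Fin n → K)) (hzero : ∀ x, S x = 0 ↔ x = 0) :
    ∑ a : Fin n → K, (∑ x, ψ (a ⬝ᵥ S x)) = (Fintype.card (Fin n → K) : ℂ) := by
  classical
  rw [Finset.sum_comm]
  simp only [aux_sum_dot ψ hψ, hzero]
  simp

/-- number of zeros of a coordinate function -/
lemma aux_line {K : Type*} [Field K] [Fintype K] {n : ℕ} (ψ : AddChar K ℂ) (hψ : ψ.IsPrimitive)
    (S : (Fin n → K) → (Fin n → K)) (σ : ℕ)
    (hhom : ∀ (c : K) x, S (c • x) = c ^ (σ + 1) • S x)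
    (hzero : ∀ x, S x = 0 ↔ x = 0)
    (hinj : ∀ x y, y ≠ 0 → ∀ c : K, c ≠ 0 → S x = c • S y → ∃ μ : K, x = μ • y)
    (a : Fin n → K) (ha : a ≠ 0) :
    ∑ c : K, (∑ x, ψ ((c • a) ⬝ᵥ S x)) = (Fintype.card (Fin n → K) : ℂ) := by
  classical
  -- normalising function
  have hS0 : S 0 = 0 := (hzero 0).2 rfl
  have hex : ∃ Φ : (Fin n → K) → (Fin n → K), Function.Injective Φ ∧
      ∀ x, ∃ c : K, c ≠ 0 ∧ Φ x = c • S x := by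
    let st : Setoid (Fin n → K) := MulAction.orbitRel Kˣ (Fin n → K)
    let rep : (Fin n → K) → (Fin n → K) := fun x => (Quotient.mk st x).out
    have hrep : ∀ x, ∃ u : Kˣ, u • rep x = x := by
      intro x
      have : st (rep x) x := Quotient.mk_out x
      have h2 : st x (rep x) := st.symm this
      exact h2
    have hrep_eq : ∀ x y, ∀ u : Kˣ, u • y = x → rep x = rep y := by
      intro x y u hu
      have : st x y := ⟨u, hu⟩
      have h2 : Quotient.mk st x = Quotient.mk st y := Quotient.sound this
      simp only [rep, h2]
    choose u hu using hrep
    refine ⟨fun x => (u x : K) • S (rep x), ?_, ?_⟩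
    · intro x y hxy
      simp only at hxy
      have hc : S (rep x) = ((u x : K)⁻¹ * u y) • S (rep y) := by
        rw [mul_smul, ← hxy, smul_smul, inv_mul_cancel₀ (u x).ne_zero, one_smul]
      by_cases hy : rep y = 0
      · rw [hy, hS0, smul_zero, hzero] at hc
        rw [← hu x, ← hu y, hc, hy, smul_zero, smul_zero]
      · obtain ⟨μ, hμ⟩ := hinj _ _ hy _ (mul_ne_zero (inv_ne_zero (u x).ne_zero) (u y).ne_zero) hc
        have hSy : S (rep y) ≠ 0 := fun h => hy ((hzero _).1 h)
        have hμ0 : μ ≠ 0 := by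
          rintro rfl
          rw [zero_smul] at hμ
          rw [hμ, hS0] at hc
          rcases smul_eq_zero.1 hc.symm with h | h
          · exact mul_ne_zero (inv_ne_zero (u x).ne_zero) (u y).ne_zero h
          · exact hSy h
        have h1 : rep (rep x) = rep (rep y) := hrep_eq _ _ (Units.mk0 μ hμ0) hμ.symm
        have h2 : ∀ z, rep (rep z) = rep z := fun z => (hrep_eq _ _ (u z) (hu z)).symm
        rw [h2, h2] at h1
        rw [h1] at hxy
        have h3 : (u x : K) = u y := smul_left_injective K hSy hxy
        rw [← hu x, ← hu y, h1, Units.ext h3]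
    · intro x
      refine ⟨(u x : K) * ((u x : K) ^ (σ + 1))⁻¹, mul_ne_zero (u x).ne_zero (inv_ne_zero (pow_ne_zero _ (u x).ne_zero)), ?_⟩
      have hSx : S x = (u x : K) ^ (σ + 1) • S (rep x) := by
        conv_lhs => rw [← hu x]
        rw [Units.smul_def, hhom]
      rw [hSx, smul_smul, mul_assoc, inv_mul_cancel₀ (pow_ne_zero _ (u x).ne_zero), mul_one]
  obtain ⟨Φ, hΦ, hΦS⟩ := hex
  have hbij : Function.Bijective Φ := Finite.injective_iff_bijective.1 hΦ
  have hsum : ∀ y : Fin n → K, ∑ c : K, ψ ((c • a) ⬝ᵥ y) =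
      if a ⬝ᵥ y = 0 then (Fintype.card K : ℂ) else 0 := by
    intro y
    have := AddChar.sum_mulShift (a ⬝ᵥ y) hψ
    simp only [smul_dotProduct, smul_eq_mul]
    rw [this]; simp
  have e1 : ∀ x, (a ⬝ᵥ S x = 0) ↔ (a ⬝ᵥ Φ x = 0) := by
    intro x
    obtain ⟨c, hc, h⟩ := hΦS x
    rw [h, dotProduct_smul, smul_eq_zero]
    simp [hc]
  rw [Finset.sum_comm]
  simp only [hsum, e1]
  rw [hbij.sum_comp (fun y => if a ⬝ᵥ y = 0 then (Fintype.card K : ℂ) else 0)]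
  simp only [← hsum]
  rw [Finset.sum_comm]
  have : ∀ c : K, ∑ y, ψ ((c • a) ⬝ᵥ y) = if c = 0 then (Fintype.card (Fin n → K) : ℂ) else 0 := by
    intro c
    simp only [dotProduct_comm (c • a)]
    rw [aux_sum_dot ψ hψ]
    simp [ha]
  simp only [this]
  simp

lemma aux_free {K : Type*} [Field K] [Fintype K] {n : ℕ} (H : Subgroup Kˣ)
    (h : (Fin n → K) → ℂ) (hint : ∀ x, IsIntegral ℤ (h x))
    (hinv : ∀ (μ : Kˣ) x, μ ∈ H → h (μ • x) = h x) :
    ∃ A : ℂ, IsIntegral ℤ A ∧ ∑ x, h x = h 0 + (Nat.card H : ℂ) * A := by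
  classical
  let X := {x : Fin n → K // x ≠ 0}
  let st : Setoid X := MulAction.orbitRel H X
  refine ⟨∑ ω : Quotient st, h ω.out.1, IsIntegral.sum _ fun _ _ => hint _, ?_⟩
  have h1 : ∑ x, h x = h 0 + ∑ x : X, h x.1 := by
    rw [← Finset.add_sum_erase _ _ (Finset.mem_univ (0 : Fin n → K))]
    congr 1
    rw [Finset.sum_subtype]
    intro x; simp
  rw [h1, ← Finset.sum_fiberwise Finset.univ (fun x : X => Quotient.mk st x), Finset.mul_sum]
  congr 1
  refine Finset.sum_congr rfl fun ω _ => ?_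
  have h2 : ∀ x : X, x ∈ Finset.univ.filter (fun x : X => Quotient.mk st x = ω) ↔ ∃ μ : H, μ • ω.out = x := by
    intro x
    rw [Finset.mem_filter]
    simp only [Finset.mem_univ, true_and]
    conv_lhs => rw [← Quotient.out_eq ω, Quotient.eq]
    exact Iff.rfl
  have h3 : Finset.univ.filter (fun x : X => Quotient.mk st x = ω) =
      Finset.univ.image (fun μ : H => μ • ω.out) := by
    ext x; rw [h2]; simp
  rw [h3, Finset.sum_image]
  · have : ∀ μ : H, h (μ • ω.out).1 = h ω.out.1 := fun μ => hinv μ.1 _ μ.2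
    simp only [this]
    simp [Nat.card_eq_fintype_card]
  · intro μ _ ν _ hμν
    simp only at hμν
    have h4 := congrArg Subtype.val hμν
    have h5 : ((μ : Kˣ) : K) • ω.out.1 = ((ν : Kˣ) : K) • ω.out.1 := h4
    exact Subtype.ext (Units.ext (smul_left_injective K ω.out.2 h5))

lemma aux_upper {K : Type*} [Field K] [Fintype K] [DecidableEq K] {n : ℕ} (ψ : AddChar K ℂ) (hψ : ψ.IsPrimitive)
    (S : (Fin n → K) → (Fin n → K)) (σ : ℕ)
    (hhom : ∀ (c : K) x, S (c • x) = c ^ (σ + 1) • S x)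
    (hzero : ∀ x, S x = 0 ↔ x = 0)
    (hinj : ∀ x y, y ≠ 0 → ∀ c : K, c ≠ 0 → S x = c • S y → ∃ μ : K, x = μ • y)
    (d : ℕ) (hd : Nat.card (powMonoidHom (σ + 1) : Kˣ →* Kˣ).ker = d) :
    ∑ a ∈ Finset.univ.erase (0 : Fin n → K), Complex.normSq (∑ x, ψ (a ⬝ᵥ S x)) ≤
      (Fintype.card (Fin n → K) : ℝ) * ((d - 1) * ((Fintype.card (Fin n → K) : ℝ) - 1)) := by
  have h1 := aux_parseval ψ hψ S
  rw [← Finset.add_sum_erase _ _ (Finset.mem_univ (0 : Fin n → K))] at h1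
  rw [← Finset.add_sum_erase _ (fun x => (Nat.card {x' // S x' = S x} : ℝ)) (Finset.mem_univ (0 : Fin n → K))] at h1
  have h0 : Complex.normSq (∑ x, ψ ((0 : Fin n → K) ⬝ᵥ S x)) = (Fintype.card (Fin n → K) : ℝ) ^ 2 := by
    simp only [zero_dotProduct, AddChar.map_zero_eq_one, Finset.sum_const, Finset.card_univ,
      nsmul_eq_mul, mul_one, Complex.normSq_natCast, sq]
  have h2 : (Nat.card {x' // S x' = S 0} : ℝ) = 1 := by
    have : Nat.card {x' // S x' = S 0} = 1 := by
      rw [Nat.card_eq_one_iff_unique]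
      have hS0 : S 0 = 0 := (hzero 0).2 rfl
      refine ⟨⟨fun x y => ?_⟩, ⟨⟨0, rfl⟩⟩⟩
      have hx := (hzero _).1 (x.2.trans hS0)
      have hy := (hzero _).1 (y.2.trans hS0)
      exact Subtype.ext (hx.trans hy.symm)
    rw [this, Nat.cast_one]
  have h3 : ∑ x ∈ Finset.univ.erase (0 : Fin n → K), (Nat.card {x' // S x' = S x} : ℝ) ≤
      ((Fintype.card (Fin n → K) : ℝ) - 1) * d := by
    have : ∀ x ∈ Finset.univ.erase (0 : Fin n → K), (Nat.card {x' // S x' = S x} : ℝ) ≤ d := by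
      intro x hx
      have hx0 : x ≠ 0 := Finset.ne_of_mem_erase hx
      have hSx : S x ≠ 0 := fun h => hx0 ((hzero x).1 h)
      rw [← hd, Nat.cast_le]
      let φ : (powMonoidHom (σ + 1) : Kˣ →* Kˣ).ker → {x' // S x' = S x} := fun μ =>
        ⟨((μ : Kˣ) : K) • x, by
          have := μ.2
          rw [MonoidHom.mem_ker, powMonoidHom_apply] at this
          have h2 : (((μ : Kˣ) : K)) ^ (σ + 1) = 1 := by
            rw [← Units.val_pow_eq_pow_val, this, Units.val_one]
          rw [hhom, h2, one_smul]⟩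
      refine Nat.card_le_card_of_surjective φ ?_
      rintro ⟨x', hx'⟩
      obtain ⟨μ, hμ⟩ := hinj x' x hx0 1 one_ne_zero (by rw [one_smul]; exact hx')
      have hp1 : μ ^ (σ + 1) = 1 := by
        rw [hμ, hhom] at hx'
        have : μ ^ (σ + 1) • S x = (1 : K) • S x := by rw [hx', one_smul]
        exact smul_left_injective K hSx this
      have hμ0 : μ ≠ 0 := by
        rintro rfl
        simp at hp1
      refine ⟨⟨Units.mk0 μ hμ0, ?_⟩, ?_⟩
      · rw [MonoidHom.mem_ker, powMonoidHom_apply]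
        ext
        simpa using hp1
      · exact Subtype.ext hμ.symm
    refine (Finset.sum_le_sum this).trans ?_
    rw [Finset.sum_const, Finset.card_erase_of_mem (Finset.mem_univ _), Finset.card_univ, nsmul_eq_mul,
      Nat.cast_sub Fintype.card_pos, Nat.cast_one]
  rw [h0, h2] at h1
  have hpos : (0 : ℝ) ≤ Fintype.card (Fin n → K) := by positivity
  nlinarith [mul_le_mul_of_nonneg_left h3 hpos]

lemma aux_cardL {K : Type*} [Field K] [Fintype K] {p g m s : ℕ} [Fact p.Prime] [CharP K p]
    (hK : Fintype.card K = p ^ m) (hm : m = 2 * g * s) (hg : 0 < g) :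
    Nat.card ((iterateFrobenius K p (2 * g)).eqLocusField (RingHom.id K)) = p ^ (2 * g) := by
  classical
  set L := (iterateFrobenius K p (2 * g)).eqLocusField (RingHom.id K) with hL
  have hp : p.Prime := Fact.out
  have memL : ∀ x : K, x ∈ L ↔ x ^ (p ^ (2 * g)) = x := by
    intro x
    rw [hL, RingHom.mem_eqLocusField, iterateFrobenius_def, RingHom.id_apply]
  have hpos : 1 ≤ p ^ (2 * g) := Nat.one_le_pow _ _ hp.pos
  let ker := (powMonoidHom (p ^ (2 * g) - 1) : Kˣ →* Kˣ).ker
  have memker : ∀ u : Kˣ, u ∈ ker ↔ (u : K) ∈ L := by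
    intro u
    rw [memL, MonoidHom.mem_ker, powMonoidHom_apply]
    conv_rhs => rw [← Nat.sub_add_cancel hpos, pow_succ]
    rw [mul_eq_right₀ u.ne_zero, Units.ext_iff]
    simp
  have hbij : Nat.card Lˣ = Nat.card ker := by
    refine Nat.card_congr (Equiv.ofBijective
      (fun u => (⟨Units.map L.subtype.toMonoidHom u, (memker _).2 (u : L).2⟩ : ker)) ⟨?_, ?_⟩)
    · intro u v huv
      have := congrArg (fun z : ker => ((z : Kˣ) : K)) huv
      exact Units.ext (Subtype.ext this)
    · rintro ⟨u, hu⟩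
      have hu' := (memker u).1 hu
      refine ⟨Units.mk0 ⟨(u : K), hu'⟩ ?_, ?_⟩
      · intro h
        exact u.ne_zero (congrArg Subtype.val h)
      · apply Subtype.ext
        apply Units.ext
        rfl
  have h1 : Nat.card ker = p ^ (2 * g) - 1 := by
    rw [IsCyclic.card_powMonoidHom_ker, Nat.card_eq_fintype_card, Fintype.card_units, hK, hm]
    exact Nat.gcd_eq_right (Nat.pow_sub_one_dvd_pow_sub_one _ ⟨s, rfl⟩)
  have h2 : Nat.card Lˣ = Nat.card L - 1 := by
    rw [Nat.card_eq_fintype_card, Nat.card_eq_fintype_card, Fintype.card_units]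
  have h3 : 0 < Nat.card L := Nat.card_pos
  omega

lemma aux_case2 {K : Type*} [Field K] [Fintype K] {n p g m s t : ℕ} [Fact p.Prime] [CharP K p]
    (hK : Fintype.card K = p ^ m) (hm : m = 2 * g * s) (hg : 0 < g) (ht : Odd t) (σ : ℕ)
    (hσ : σ = p ^ (g * t))
    (hH : Nat.card (powMonoidHom (σ + 1) : Kˣ →* Kˣ).ker = p ^ g + 1)
    (ψ : AddChar K ℂ)
    (f : (Fin n → K) → K) (b : (Fin n → K) → (Fin n → K) → K)
    (hhom : ∀ (c : K) x, f (c • x) = c ^ (σ + 1) * f x)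
    (hb1 : ∀ x x' y, b (x + x') y = b x y + b x' y)
    (hb2 : ∀ x y y', b x (y + y') = b x y + b x y')
    (hb3 : ∀ (c : K) (x y), b (c • x) y = c * b x y)
    (hb4 : ∀ (c : K) (x y), b x (c • y) = c ^ σ * b x y)
    (hb5 : ∀ x y, f (x + y) = f x + f y + (b x y + b y x)) :
    ∃ r : ℕ, ∑ x, ψ (f x) = (((-(p : ℤ) ^ g) ^ (s * n) * (-(p : ℤ) ^ g) ^ r : ℤ) : ℂ) ∧
      ((∃ x, x ≠ 0 ∧ ∀ y, ψ (b x y + b y x) = 1) → r ≠ 0) := by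
  classical
  have hp : p.Prime := Fact.out
  set L := (iterateFrobenius K p (2 * g)).eqLocusField (RingHom.id K) with hL
  have hcardL : Nat.card L = p ^ (2 * g) := aux_cardL hK hm hg
  have memL : ∀ x : K, x ∈ L ↔ x ^ (p ^ (2 * g)) = x := by
    intro x
    rw [hL, RingHom.mem_eqLocusField, iterateFrobenius_def, RingHom.id_apply]
  have hf0 : f 0 = 0 := by
    have := hhom 0 0
    simpa using this
  set H := (powMonoidHom (σ + 1) : Kˣ →* Kˣ).ker with hHdef
  have hHL : ∀ μ ∈ H, (μ : K) ∈ L := by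
    intro μ hμ
    have h1 : (⟨μ, hμ⟩ : H) ^ Nat.card H = 1 := pow_card_eq_one'
    rw [hH] at h1
    have h2 : μ ^ (p ^ g + 1) = 1 := congrArg Subtype.val h1
    have h3 : (μ : K) ^ (p ^ g) * μ = 1 := by
      rw [← pow_succ, ← Units.val_pow_eq_pow_val, h2, Units.val_one]
    rw [memL, mul_comm 2 g, pow_mul, sq, pow_mul]
    have h4 : ((μ : K) ^ p ^ g) = (μ : K)⁻¹ := eq_inv_of_mul_eq_one_left h3
    rw [h4, inv_pow, h4, inv_inv]
  -- sesquilinearity over L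
  have hLσ : ∀ μ ∈ L, (μ ^ σ) ^ σ = μ := by
    intro μ hμ
    have h := (memL μ).1 hμ
    have h2 : ∀ j : ℕ, μ ^ ((p ^ (2 * g)) ^ j) = μ := by
      intro j
      induction j with
      | zero => simp
      | succ j ih => rw [pow_succ, pow_mul, ih, h]
    rw [← pow_mul, hσ, ← pow_add, show g * t + g * t = 2 * g * t by ring, pow_mul, h2]
  have hBL : ∀ μ ∈ L, ∀ x y, b (μ • x) y + b y (μ • x) = b x (μ ^ σ • y) + b (μ ^ σ • y) x := by
    intro μ hμ x y
    rw [hb3, hb4, hb4, hb3, hLσ μ hμ]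
  let Rad : Submodule L (Fin n → K) :=
    { carrier := {x | ∀ y, ψ (b x y + b y x) = 1}
      add_mem' := by
        intro x x' hx hx' y
        have : b (x + x') y + b y (x + x') = (b x y + b y x) + (b x' y + b y x') := by
          rw [hb1, hb2]; ring
        rw [this, AddChar.map_add_eq_mul, hx, hx', one_mul]
      zero_mem' := by
        intro y
        have h1 := hb3 0 0 y
        have h2 := hb1 0 0 y
        have h3 := hb2 y 0 0
        simp only [add_zero] at h2 h3
        have h4 : b 0 y = 0 := by simpa using h2
        have h5 : b y 0 = 0 := by simpa using h3
        rw [h4, h5, add_zero, AddChar.map_zero_eq_one]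
      smul_mem' := by
        intro μ x hx y
        have := hBL μ.1 μ.2 x y
        change ψ (b ((μ : K) • x) y + b y ((μ : K) • x)) = 1
        rw [this]; exact hx _ }
  have hRad : ∀ x, x ∈ Rad ↔ ∀ y, ψ (b x y + b y x) = 1 := fun x => Iff.rfl
  have hψp : ∀ x, ψ x ^ p = 1 := by
    intro x
    rw [← AddChar.map_nsmul_eq_pow, nsmul_eq_mul, CharP.cast_eq_zero, zero_mul, AddChar.map_zero_eq_one]
  have hHinv : ∀ (μ : Kˣ) x, μ ∈ H → f (μ • x) = f x := by
    intro μ x hμ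
    rw [hHdef, MonoidHom.mem_ker, powMonoidHom_apply] at hμ
    rw [Units.smul_def, hhom, ← Units.val_pow_eq_pow_val, hμ, Units.val_one, one_mul]
  have h1 : ∀ x, (∀ y, ψ (b x y + b y x) = 1) → ψ (f x) = 1 := by
    intro x hx
    have hind : ∀ F : Finset H, (∑ μ ∈ F, ((μ : Kˣ) : K) • x) ∈ Rad ∧
        ψ (f (∑ μ ∈ F, ((μ : Kˣ) : K) • x)) = ψ (f x) ^ F.card := by
      intro F
      induction F using Finset.induction_on with
      | empty => simp [hf0]
      | insert μ F hμ ih =>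
        have hmem : (((μ : Kˣ) : K) • x) ∈ Rad :=
          Rad.smul_mem (⟨((μ : Kˣ) : K), hHL _ μ.2⟩ : L) hx
        rw [Finset.sum_insert hμ, Finset.card_insert_of_notMem hμ]
        refine ⟨Rad.add_mem hmem ih.1, ?_⟩
        rw [hb5, AddChar.map_add_eq_mul, AddChar.map_add_eq_mul, hmem, ih.2, mul_one]
        have : f (((μ : Kˣ) : K) • x) = f x := hHinv μ.1 x μ.2
        rw [this, pow_succ, mul_comm]
    have h2 := (hind Finset.univ).2
    have hne : H ≠ ⊥ := by
      intro h
      rw [h] at hH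
      simp at hH
      exact hp.pos.ne' hH.1
    have h3 : ∑ μ : H, ((μ : Kˣ) : K) = 0 := FiniteField.sum_subgroup_units_eq_zero hne
    rw [← Finset.sum_smul, h3, zero_smul, hf0, AddChar.map_zero_eq_one, Finset.card_univ,
      ← Nat.card_eq_fintype_card, hH, pow_succ] at h2
    have h4 : ψ (f x) ^ p ^ g = 1 := by
      obtain ⟨g', rfl⟩ := Nat.exists_eq_succ_of_ne_zero hg.ne'
      rw [pow_succ', pow_mul, hψp, one_pow]
    rw [h4, one_mul] at h2
    exact h2.symm
  have habs := aux_absq ψ f (fun x y => b x y + b y x) hb5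
    (fun x y y' => by simp only [hb1, hb2]; ring) h1
  set F := ∑ x, ψ (f x) with hF
  have hcardRad : Nat.card {x // ∀ y, ψ (b x y + b y x) = 1} = (p ^ (2 * g)) ^ (Module.finrank L Rad) := by
    have := Module.card_eq_pow_finrank (K := L) (V := Rad)
    rw [← Nat.card_eq_fintype_card, ← Nat.card_eq_fintype_card, hcardL] at this
    exact this
  set r := Module.finrank L Rad with hr
  refine ⟨r, ?_, ?_⟩
  swap
  · rintro ⟨x, hx0, hx⟩ hr0
    have : Subsingleton Rad := by
      rw [hr0, pow_zero] at hcardRad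
      exact (Nat.card_eq_one_iff_unique.1 hcardRad).1
    apply hx0
    have := Subsingleton.elim (⟨x, hx⟩ : Rad) 0
    exact congrArg Subtype.val this
  -- reality
  have hu : ∃ u : Kˣ, u ^ (σ + 1) = -1 := by
    by_cases hp2 : p = 2
    · subst hp2
      refine ⟨1, ?_⟩
      ext
      rw [one_pow, Units.val_neg, Units.val_one, CharTwo.neg_eq]
    · have hodd := hp.odd_of_ne_two hp2
      have hr1 := (IsCyclic.card_powMonoidHom_ker Kˣ (σ + 1))
      have hr2 := Subgroup.index_ker (powMonoidHom (σ + 1) : Kˣ →* Kˣ)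
      have hr3 := Subgroup.card_mul_index H
      rw [hr2, hH, Nat.card_eq_fintype_card (α := Kˣ), Fintype.card_units, hK] at hr3
      have hQ : p ^ (g * 2) - 1 = (p ^ g + 1) * (p ^ g - 1) := by
        have := Nat.sq_sub_sq (p ^ g) 1
        rw [← this, pow_mul, one_pow]
      have hdvd : p ^ (g * 2) - 1 ∣ p ^ m - 1 :=
        Nat.pow_sub_one_dvd_pow_sub_one _ ⟨s, by rw [hm]; ring⟩
      rw [hQ, ← hr3] at hdvd
      have hdvd2 := Nat.dvd_of_mul_dvd_mul_left (Nat.succ_pos _) hdvd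
      have h2 : 2 ∣ p ^ g - 1 := (hodd.pow.tsub_odd odd_one).two_dvd
      have : Fact (Nat.Prime 2) := ⟨Nat.prime_two⟩
      obtain ⟨w, hw⟩ := exists_prime_orderOf_dvd_card' 2 (h2.trans hdvd2)
      obtain ⟨u, hu⟩ := w.2
      refine ⟨u, ?_⟩
      rw [powMonoidHom_apply] at hu
      rw [hu]
      have hw2 : orderOf (w : Kˣ) = 2 := by rw [Subgroup.orderOf_coe, hw]
      have hw3 : (w : Kˣ) ^ 2 = 1 := by rw [← hw2]; exact pow_orderOf_eq_one _
      have hw4 : (w : Kˣ) ≠ 1 := by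
        intro h; rw [h, orderOf_one] at hw2; omega
      have hw5 : ((w : Kˣ) : K) ^ 2 = 1 := by
        rw [← Units.val_pow_eq_pow_val, hw3, Units.val_one]
      rcases sq_eq_one_iff.1 hw5 with h | h
      · exact absurd (Units.ext h) hw4
      · exact Units.ext h
  have hreal : conj F = F := by
    obtain ⟨u, hu⟩ := hu
    rw [hF, map_sum]
    simp only [← AddChar.map_neg_eq_conj]
    rw [← Equiv.sum_comp (MulAction.toPerm u) (fun x => ψ (f x))]
    refine Finset.sum_congr rfl fun x _ => ?_
    rw [MulAction.toPerm_apply, Units.smul_def, hhom, ← Units.val_pow_eq_pow_val, hu]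
    simp
  obtain ⟨y, hy⟩ : ∃ y : ℝ, F = y := ⟨F.re, (Complex.conj_eq_iff_re.1 hreal).symm⟩
  have hcardV : Fintype.card (Fin n → K) = (p ^ g) ^ (2 * (s * n)) := by
    rw [Fintype.card_fun, Fintype.card_fin, hK, hm, ← pow_mul, ← pow_mul]
    congr 1; ring
  set M := s * n + r with hM
  have hy2 : y ^ 2 = (((-(p : ℤ) ^ g) ^ M : ℤ) : ℝ) ^ 2 := by
    rw [hy, Complex.normSq_ofReal, hcardRad, hcardV] at habs
    rw [sq, habs]
    push_cast
    rw [← pow_mul (-(p : ℝ) ^ g), mul_comm M 2, pow_mul (-(p : ℝ) ^ g), neg_sq, hM]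
    ring
  obtain ⟨A, hA, hFA⟩ := aux_free H (fun x => ψ (f x))
    (fun x => IsIntegral.of_pow hp.pos (by rw [hψp]; exact isIntegral_one))
    (fun μ x hμ => by simp only [hHinv μ x hμ])
  rw [hf0, AddChar.map_zero_eq_one, hH, ← hF] at hFA
  rw [← pow_add, ← hM]
  have hgoal : ∀ z : ℤ, F = z → (((p : ℤ) ^ g + 1) ∣ z - 1) := by
    intro z hz
    have hQ0 : ((p : ℚ) ^ g + 1) ≠ 0 := by positivity
    have hQ0' : ((p : ℂ) ^ g + 1) ≠ 0 := by exact_mod_cast hQ0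
    have hAq : A = (algebraMap ℚ ℂ) (((z : ℚ) - 1) / ((p : ℚ) ^ g + 1)) := by
      rw [hz] at hFA
      push_cast at hFA
      simp only [eq_ratCast]
      push_cast
      rw [eq_div_iff hQ0']
      linear_combination -hFA
    rw [hAq, isIntegral_algebraMap_iff (algebraMap ℚ ℂ).injective] at hA
    obtain ⟨w, hw⟩ := IsIntegrallyClosed.isIntegral_iff.1 hA
    refine ⟨w, ?_⟩
    rw [eq_div_iff hQ0] at hw
    have : ((z : ℚ) - 1) = (p ^ g + 1) * w := by rw [← hw]; simp [mul_comm]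
    exact_mod_cast this
  have hmod : ((p : ℤ) ^ g + 1) ∣ (-(p : ℤ) ^ g) ^ M - 1 := by
    have := sub_dvd_pow_sub_pow (-(p : ℤ) ^ g) 1 M
    rw [one_pow] at this
    exact dvd_trans ⟨-1, by ring⟩ this
  rcases sq_eq_sq_iff_eq_or_eq_neg.1 hy2 with h | h
  · rw [hy, h]; simp
  · exfalso
    have h5 := hgoal (-((-(p : ℤ) ^ g) ^ M)) (by rw [hy, h]; simp)
    have h6 := dvd_add h5 hmod
    have h7 : ((p : ℤ) ^ g + 1) ∣ 2 := by
      rw [← dvd_neg]; convert h6 using 1; ring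
    have h8 := Int.le_of_dvd (by norm_num) h7
    have h9 : (2 : ℤ) ≤ (p : ℤ) ^ g := by
      have : 2 ≤ p ^ g := hp.two_le.trans (Nat.le_self_pow hg.ne' p)
      exact_mod_cast this
    omega

lemma aux_w (Q : ℤ) (hQ : 1 ≤ Q) (r : ℕ) : 0 ≤ ((-Q) ^ r - 1) * ((-Q) ^ r + Q) := by
  rcases Nat.even_or_odd r with h | h
  · rw [h.neg_pow]
    have := one_le_pow₀ hQ (n := r)
    apply mul_nonneg <;> linarith
  · rw [h.neg_pow]
    obtain ⟨j, rfl⟩ := h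
    have := one_le_pow₀ hQ (n := 2 * j)
    have h2 : Q ≤ Q ^ (2 * j + 1) := by rw [pow_succ]; nlinarith
    apply mul_nonneg_of_nonpos_of_nonpos <;> linarith

/-- if `S ∈ SQH(n,q)` vanishes only at `0`, induces a bijection of
`P^{n-1}(F_q)`, and is degenerate (some coordinate of `L₁ ∘ S ∘ L₂` is
independent of some variable for invertible `F_q`-linear `L₁, L₂`), then
`gcd(p^k+1, q-1) = 1`; in particular `p = 2`. -/
theorem stmt6 {p m k n : ℕ} (hp : p.Prime) (hm : 0 < m)
    {K : Type*} [Field K] [Fintype K] (hK : Fintype.card K = p ^ m)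
    (S : (Fin n → K) → (Fin n → K)) (hSQH : IsSQH (p ^ k) S)
    (hzero : ∀ x, S x = 0 ↔ x = 0)
    (G : Projectivization K (Fin n → K) → Projectivization K (Fin n → K))
    (hGbij : Function.Bijective G)
    (hG : ∀ (x : Fin n → K) (hx : x ≠ 0),
      G (Projectivization.mk K x hx) =
        Projectivization.mk K (S x) (fun h => hx ((hzero x).mp h)))
    (hdeg : ∃ (L₁ L₂ : (Fin n → K) ≃ₗ[K] (Fin n → K)) (i j : Fin n),
      ∀ (x : Fin n → K) (b : K),
        L₁ (S (L₂ (x + b • (Pi.single i 1 : Fin n → K)))) j = L₁ (S (L₂ x)) j) :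
    Nat.gcd (p ^ k + 1) (p ^ m - 1) = 1 ∧ p = 2 := by
  classical
  have : Fact p.Prime := ⟨hp⟩
  have : CharP K p := charP_of_card_eq_prime_pow hK
  have hS0 : S 0 = 0 := (hzero 0).2 rfl
  have hhom : ∀ (c : K) x, S (c • x) = c ^ (p ^ k + 1) • S x := by
    intro c x; ext i
    rw [(hSQH i).1]; rfl
  have hinj : ∀ x y, y ≠ 0 → ∀ c : K, c ≠ 0 → S x = c • S y → ∃ μ : K, x = μ • y := by
    intro x y hy c hc h
    have hSy : S y ≠ 0 := fun h => hy ((hzero y).1 h)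
    have hx : x ≠ 0 := by
      rintro rfl
      rw [hS0] at h
      exact smul_ne_zero hc hSy h.symm
    have h1 : G (Projectivization.mk K x hx) = G (Projectivization.mk K y hy) := by
      rw [hG, hG, Projectivization.mk_eq_mk_iff']
      exact ⟨c, h.symm⟩
    have h2 := hGbij.1 h1
    rw [Projectivization.mk_eq_mk_iff'] at h2
    obtain ⟨μ, hμ⟩ := h2
    exact ⟨μ, hμ.symm⟩
  have hb : ∀ a : Fin n → K, ∃ b : (Fin n → K) → (Fin n → K) → K,
      (∀ x x' y, b (x + x') y = b x y + b x' y) ∧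
      (∀ x y y', b x (y + y') = b x y + b x y') ∧
      (∀ (c : K) (x y), b (c • x) y = c * b x y) ∧
      (∀ (c : K) (x y), b x (c • y) = c ^ (p ^ k) * b x y) ∧
      (∀ x y, a ⬝ᵥ S (x + y) = a ⬝ᵥ S x + a ⬝ᵥ S y + (b x y + b y x)) := by
    intro a
    choose b h1 h2 h3 h4 h5 using fun i => (hSQH i).2
    refine ⟨fun x y => ∑ i, a i * b i x y, ?_, ?_, ?_, ?_, ?_⟩
    · intro x x' y; simp only [h1, mul_add, Finset.sum_add_distrib]
    · intro x y y'; simp only [h2, mul_add, Finset.sum_add_distrib]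
    · intro c x y; simp only [h3, Finset.mul_sum]
      exact Finset.sum_congr rfl fun i _ => by ring
    · intro c x y; simp only [h4, Finset.mul_sum]
      exact Finset.sum_congr rfl fun i _ => by ring
    · intro x y
      simp only [dotProduct, ← Finset.sum_add_distrib]
      refine Finset.sum_congr rfl fun i _ => ?_
      linear_combination a i * h5 i x y
  obtain ⟨a₀, e, ha₀, he, hdeg'⟩ : ∃ a₀ e : Fin n → K, a₀ ≠ 0 ∧ e ≠ 0 ∧
      ∀ x, a₀ ⬝ᵥ S (x + e) = a₀ ⬝ᵥ S x := by
    obtain ⟨L₁, L₂, i, j, h⟩ := hdeg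
    have hrow : ∀ y, (fun l => L₁ (Pi.single l 1) j) ⬝ᵥ y = L₁ y j := by
      intro y
      conv_rhs => rw [pi_eq_sum_univ' y, map_sum, Finset.sum_apply]
      simp only [dotProduct]
      refine Finset.sum_congr rfl fun l _ => ?_
      rw [map_smul, Pi.smul_apply, smul_eq_mul, mul_comm]
    refine ⟨fun l => L₁ (Pi.single l 1) j, L₂ (Pi.single i 1), ?_, ?_, ?_⟩
    · intro h0
      have := hrow (L₁.symm (Pi.single j 1))
      rw [h0, zero_dotProduct, LinearEquiv.apply_symm_apply, Pi.single_eq_same] at this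
      exact zero_ne_one this
    · rw [Ne, LinearEquiv.map_eq_zero_iff, Pi.single_eq_zero_iff]
      exact one_ne_zero
    · intro x
      have := h (L₂.symm x) 1
      rw [one_smul, map_add, LinearEquiv.apply_symm_apply] at this
      rw [hrow, hrow, this]
  have hBe : ∀ (c : K) (b : (Fin n → K) → (Fin n → K) → K),
      (∀ x y, (c • a₀) ⬝ᵥ S (x + y) = (c • a₀) ⬝ᵥ S x + (c • a₀) ⬝ᵥ S y + (b x y + b y x)) →
      ∀ y, b e y + b y e = 0 := by
    intro c b hb y
    have h1 := hb y e
    have h2 := hdeg' 0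
    rw [zero_add, hS0, dotProduct_zero] at h2
    rw [smul_dotProduct, smul_dotProduct, smul_dotProduct, hdeg', h2] at h1
    rw [add_comm]
    simpa using h1
  let ψ := AddChar.FiniteField.primitiveChar_to_Complex K
  have hψ : ψ.IsPrimitive := AddChar.FiniteField.primitiveChar_to_Complex_isPrimitive K
  have hd : Nat.card (powMonoidHom (p ^ k + 1) : Kˣ →* Kˣ).ker = Nat.gcd (p ^ k + 1) (p ^ m - 1) := by
    rw [IsCyclic.card_powMonoidHom_ker, Nat.card_eq_fintype_card, Fintype.card_units, hK, Nat.gcd_comm]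
  have hupper := aux_upper ψ hψ S (p ^ k) hhom hzero hinj _ hd
  have hfhom : ∀ (a : Fin n → K) (c : K) x, a ⬝ᵥ S (c • x) = c ^ (p ^ k + 1) * a ⬝ᵥ S x := by
    intro a c x
    rw [hhom, dotProduct_smul, smul_eq_mul]
  have hcardE : (((Finset.univ.erase (0 : Fin n → K)).card : ℕ) : ℝ) = (Fintype.card (Fin n → K) : ℝ) - 1 := by
    rw [Finset.card_erase_of_mem (Finset.mem_univ _), Finset.card_univ,
      Nat.cast_sub Fintype.card_pos, Nat.cast_one]
  have hVpos : (0 : ℝ) < Fintype.card (Fin n → K) := by exact_mod_cast Fintype.card_pos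
  rcases aux_nt (k := k) hp hm with h | ⟨hd2, hp2⟩ | ⟨g, t, s, hg, hms, hkt, ht, hdQ⟩
  · exact h
  · exfalso
    rw [hd2] at hupper
    have h2ne : (2 : K) ≠ 0 := by
      have := Ring.two_ne_zero (R := K) (by rw [ringChar.eq K p]; exact hp2)
      exact this
    have hnorm : ∀ (a : Fin n → K) (b : (Fin n → K) → (Fin n → K) → K),
        (∀ x x' y, b (x + x') y = b x y + b x' y) →
        (∀ x y y', b x (y + y') = b x y + b x y') →
        (∀ x y, a ⬝ᵥ S (x + y) = a ⬝ᵥ S x + a ⬝ᵥ S y + (b x y + b y x)) →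
        Complex.normSq (∑ x, ψ (a ⬝ᵥ S x)) = (Fintype.card (Fin n → K) : ℝ) *
          (Nat.card {x : Fin n → K // ∀ y, ψ (b x y + b y x) = 1} : ℝ) := by
      intro a b hb1 hb2 hb5
      refine aux_absq ψ (fun x => a ⬝ᵥ S x) (fun x y => b x y + b y x) hb5
        (fun x y y' => by simp only [hb1, hb2]; ring) ?_
      intro x hx
      -- 2 f(x) = B(x,x)
      have h4 : (2 : K) ^ (p ^ k + 1) = 4 := by
        have : (2 : K) ^ p ^ k = 2 := by
          have := map_ofNat (iterateFrobenius K p k) 2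
          rwa [iterateFrobenius_def] at this
        rw [pow_succ, this]; norm_num
      have h5 : a ⬝ᵥ S (x + x) = 4 * a ⬝ᵥ S x := by
        rw [← two_smul K x, hfhom, h4]
      have h6 : b x x + b x x = 2 * a ⬝ᵥ S x := by
        have := hb5 x x
        rw [h5] at this
        linear_combination -this
      have h7 := hx x
      simp only [h6] at h7
      have h8 : ψ (a ⬝ᵥ S x) ^ 2 = 1 := by
        rw [← AddChar.map_nsmul_eq_pow, nsmul_eq_mul, Nat.cast_ofNat]; exact h7
      have h9 : ψ (a ⬝ᵥ S x) ^ p = 1 := by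
        rw [← AddChar.map_nsmul_eq_pow, nsmul_eq_mul, CharP.cast_eq_zero, zero_mul,
          AddChar.map_zero_eq_one]
      have hco : Nat.Coprime 2 p := (Nat.coprime_primes Nat.prime_two hp).2 (Ne.symm hp2)
      have h10 := pow_gcd_eq_one.2 ⟨h8, h9⟩
      rwa [hco, pow_one] at h10
    have hge : ∀ a ∈ Finset.univ.erase (0 : Fin n → K),
        (Fintype.card (Fin n → K) : ℝ) ≤ Complex.normSq (∑ x, ψ (a ⬝ᵥ S x)) := by
      intro a _
      obtain ⟨b, hb1, hb2, hb3, hb4, hb5⟩ := hb a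
      rw [hnorm a b hb1 hb2 hb5]
      have : 0 < Nat.card {x : Fin n → K // ∀ y, ψ (b x y + b y x) = 1} := by
        have : Nonempty {x : Fin n → K // ∀ y, ψ (b x y + b y x) = 1} := by
          refine ⟨⟨0, fun y => ?_⟩⟩
          have h2 := hb3 0 0 y
          have h3 := hb2 y 0 0
          simp only [add_zero] at h3
          have h4 : b 0 y = 0 := by simpa using h2
          have h5 : b y 0 = 0 := by simpa using h3
          rw [h4, h5, add_zero, AddChar.map_zero_eq_one]
        exact Nat.card_pos
      have h1 : (1 : ℝ) ≤ Nat.card {x : Fin n → K // ∀ y, ψ (b x y + b y x) = 1} := by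
        exact_mod_cast this
      nlinarith
    have hlt : ∃ a ∈ Finset.univ.erase (0 : Fin n → K),
        (Fintype.card (Fin n → K) : ℝ) < Complex.normSq (∑ x, ψ (a ⬝ᵥ S x)) := by
      refine ⟨a₀, by simp [ha₀], ?_⟩
      obtain ⟨b, hb1, hb2, hb3, hb4, hb5⟩ := hb a₀
      rw [hnorm a₀ b hb1 hb2 hb5]
      have hBe' := hBe 1 b (by rw [one_smul]; exact hb5)
      have : 1 < Nat.card {x : Fin n → K // ∀ y, ψ (b x y + b y x) = 1} := by
        have h0 : ∀ y, ψ (b 0 y + b y 0) = 1 := by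
          intro y
          have h2 := hb3 0 0 y
          have h3 := hb2 y 0 0
          simp only [add_zero] at h3
          have h4 : b 0 y = 0 := by simpa using h2
          have h5 : b y 0 = 0 := by simpa using h3
          rw [h4, h5, add_zero, AddChar.map_zero_eq_one]
        have : Nontrivial {x : Fin n → K // ∀ y, ψ (b x y + b y x) = 1} :=
          ⟨⟨0, h0⟩, ⟨e, fun y => by rw [hBe', AddChar.map_zero_eq_one]⟩, fun h =>
            he (congrArg Subtype.val h).symm⟩
        exact Finite.one_lt_card
      have h1 : (1 : ℝ) < Nat.card {x : Fin n → K // ∀ y, ψ (b x y + b y x) = 1} := by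
        exact_mod_cast this
      nlinarith
    have hsum := Finset.sum_lt_sum hge hlt
    rw [Finset.sum_const, nsmul_eq_mul, hcardE] at hsum
    push_cast at hupper
    nlinarith
  · exfalso
    rw [hdQ] at hupper hd
    have hex : ∀ a : Fin n → K, ∃ r : ℕ,
        ∑ x, ψ (a ⬝ᵥ S x) = (((-(p : ℤ) ^ g) ^ (s * n) * (-(p : ℤ) ^ g) ^ r : ℤ) : ℂ) ∧
        ((∃ c : K, a = c • a₀) → r ≠ 0) := by
      intro a
      obtain ⟨b, hb1, hb2, hb3, hb4, hb5⟩ := hb a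
      obtain ⟨r, hr1, hr2⟩ := aux_case2 hK hms hg ht (p ^ k) (by rw [hkt]) hd ψ
        (fun x => a ⬝ᵥ S x) b (hfhom a) hb1 hb2 hb3 hb4 hb5
      refine ⟨r, hr1, ?_⟩
      rintro ⟨c, hc⟩
      refine hr2 ⟨e, he, fun y => ?_⟩
      rw [hBe c b (by rw [← hc]; exact hb5) y, AddChar.map_zero_eq_one]
    choose r hr hr0 using hex
    set Q : ℤ := (p : ℤ) ^ g with hQ
    have hQ2 : 2 ≤ Q := by
      have : 2 ≤ p ^ g := hp.two_le.trans (Nat.le_self_pow hg.ne' p)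
      rw [hQ]; exact_mod_cast this
    set P : ℤ := (-Q) ^ (s * n) with hP
    have hcardV : (Fintype.card (Fin n → K) : ℤ) = P ^ 2 := by
      rw [Fintype.card_fun, Fintype.card_fin, hK, hms, hP, ← pow_mul (-Q), mul_comm (s * n) 2,
        pow_mul (-Q), neg_sq, hQ]
      push_cast
      ring
    have hP0 : P ≠ 0 := pow_ne_zero _ (by omega)
    let z : (Fin n → K) → ℤ := fun a => P * (-Q) ^ r a
    have hz : ∀ a, ∑ x, ψ (a ⬝ᵥ S x) = (z a : ℂ) := hr
    have hz0 : z 0 = P ^ 2 := by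
      have h := hz 0
      simp only [zero_dotProduct, AddChar.map_zero_eq_one, Finset.sum_const, Finset.card_univ,
        nsmul_eq_mul, mul_one] at h
      rw [← hcardV]
      exact_mod_cast h.symm
    have hsum0 : ∑ a ∈ Finset.univ.erase (0 : Fin n → K), z a = 0 := by
      have h := aux_sum_zero ψ hψ S hzero
      simp only [hz] at h
      have h' : ∑ a, z a = P ^ 2 := by rw [← hcardV]; exact_mod_cast h
      rw [← Finset.add_sum_erase _ _ (Finset.mem_univ (0 : Fin n → K)), hz0] at h'
      linarith
    have hsum2 : ∑ a ∈ Finset.univ.erase (0 : Fin n → K), z a ^ 2 ≤ P ^ 2 * (Q * (P ^ 2 - 1)) := by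
      simp only [hz, Complex.normSq_intCast] at hupper
      have h1 : ((Fintype.card (Fin n → K) : ℕ) : ℝ) = ((P ^ 2 : ℤ) : ℝ) := by
        rw [← hcardV]; simp
      rw [h1] at hupper
      have h2 : ((p ^ g + 1 : ℕ) : ℝ) - 1 = ((Q : ℤ) : ℝ) := by rw [hQ]; push_cast; ring
      rw [h2] at hupper
      have h3 : ∑ a ∈ Finset.univ.erase (0 : Fin n → K), z a * z a ≤ P ^ 2 * (Q * (P ^ 2 - 1)) := by
        exact_mod_cast hupper
      simpa only [sq] using h3
    have hnn : ∀ a ∈ Finset.univ.erase (0 : Fin n → K), 0 ≤ (z a - P) * (z a + Q * P) := by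
      intro a _
      have h := aux_w Q (by omega) (r a)
      have : (z a - P) * (z a + Q * P) = P ^ 2 * (((-Q) ^ r a - 1) * ((-Q) ^ r a + Q)) := by
        simp only [z]; ring
      rw [this]
      positivity
    have hcardEZ : (((Finset.univ.erase (0 : Fin n → K)).card : ℕ) : ℤ) = P ^ 2 - 1 := by
      rw [Finset.card_erase_of_mem (Finset.mem_univ _), Finset.card_univ,
        Nat.cast_sub Fintype.card_pos, Nat.cast_one, hcardV]
    have htot : ∑ a ∈ Finset.univ.erase (0 : Fin n → K), (z a - P) * (z a + Q * P) ≤ 0 := by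
      have : ∀ a, (z a - P) * (z a + Q * P) = z a ^ 2 + (Q - 1) * P * z a - Q * P ^ 2 := by
        intro a; ring
      simp only [this]
      rw [Finset.sum_sub_distrib, Finset.sum_add_distrib, ← Finset.mul_sum, hsum0, Finset.sum_const,
        nsmul_eq_mul, hcardEZ]
      linarith
    have hall := (Finset.sum_eq_zero_iff_of_nonneg hnn).1 (le_antisymm htot (Finset.sum_nonneg hnn))
    have hline : ∀ c : K, c ≠ 0 → z (c • a₀) = - (Q * P) := by
      intro c hc
      have h1 := hall (c • a₀) (by simp [hc, ha₀])
      rcases mul_eq_zero.1 h1 with h | h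
      · exfalso
        have h2 : P * ((-Q) ^ r (c • a₀) - 1) = 0 := by
          rw [← h]; simp only [z]; ring
        rcases mul_eq_zero.1 h2 with h3 | h3
        · exact hP0 h3
        · have h4 : (-Q) ^ r (c • a₀) = 1 := by linarith
          have h5 : -Q ∣ 1 := by
            rw [← h4]; exact dvd_pow_self _ (hr0 _ ⟨c, rfl⟩)
          rw [neg_dvd] at h5
          have := Int.le_of_dvd one_pos h5
          omega
      · linarith
    have hl := aux_line ψ hψ S (p ^ k) hhom hzero hinj a₀ ha₀
    simp only [hz] at hl
    have hl' : ∑ c : K, z (c • a₀) = P ^ 2 := by rw [← hcardV]; exact_mod_cast hl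
    rw [← Finset.add_sum_erase _ _ (Finset.mem_univ (0 : K)), zero_smul, hz0,
      Finset.sum_congr rfl (fun c hc => hline c (Finset.ne_of_mem_erase hc)), Finset.sum_const,
      Finset.card_erase_of_mem (Finset.mem_univ _), Finset.card_univ, nsmul_eq_mul] at hl'
    have hl2 : ((Fintype.card K - 1 : ℕ) : ℤ) * (-(Q * P)) = 0 := by linarith
    rcases mul_eq_zero.1 hl2 with h | h
    · have h1 : 1 < Fintype.card K := Fintype.one_lt_card
      omega
    · rw [neg_eq_zero] at h
      rcases mul_eq_zero.1 h with h | h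
      · omega
      · exact hP0 h
end

section
/- Let q = p^m, let k with k ≢ 0 (mod m), σ = p^k, a,b,c ∈ F_q, and let F_1,F_2,F_3 : F_q^3 → F_q be defined by F_1(x,y,z) = x^{σ+1} + a·y^σ·z + b·x^σ·y + c·x^σ·z, F_2(x,y,z) = a·y^{σ+1} + z^σ·x + b·z^σ·y + c·x^σ·y, F_3(x,y,z) = z^{σ+1} − x^σ·y. Then for every i ∈ {0,1,2} there do NOT exist F_q-bases (v_1,v_2,v_3) and (u_1,u_2,u_3) of the field F_{q^3} such that (x·v_1 + y·v_2 + z·v_3)^{σ·q^i + 1} = F_1(x,y,z)·u_1 + F_2(x,y,z)·u_2 + F_3(x,y,z)·u_3 for all x,y,z ∈ F_q. In other words, F = (F_1,F_2,F_3) is not GL(3,q)-equivalent to any of the Dembowski–Ostrom monomials X^{σ+1}, X^{σq+1}, X^{σq²+1} on F_{q^3}. -/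
theorem frob_nontriv {p m k : ℕ} (hp : p.Prime) (hm : 0 < m) (hk : ¬ m ∣ k)
    {K : Type*} [Field K] [Fintype K] (hK : Fintype.card K = p ^ m) :
    ∃ t : K, t ^ p ^ k ≠ t := by
  by_contra! h
  have hr : k % m ≠ 0 := fun h0 => hk (Nat.dvd_of_mod_eq_zero h0)
  have hlt : k % m < m := Nat.mod_lt _ hm
  have h2 : ∀ t : K, t ^ p ^ (k % m) = t := by
    intro t
    have h3 := h t
    rw [← Nat.div_add_mod k m, pow_add, pow_mul p m, pow_mul, ← hK, FiniteField.pow_card_pow] at h3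
    exact h3
  have hne := FiniteField.X_pow_card_pow_sub_X_ne_zero K hr hp.one_lt
  have hdeg := FiniteField.X_pow_card_pow_sub_X_natDegree_eq K hr hp.one_lt
  have h4 := Polynomial.card_le_degree_of_subset_roots
    (p := (Polynomial.X ^ p ^ (k % m) - Polynomial.X : Polynomial K)) (Z := Finset.univ) (by
      intro t _
      rw [Polynomial.mem_roots hne]
      simp [h2 t])
  rw [hdeg, Finset.card_univ, hK] at h4
  exact absurd h4 (not_le.mpr (Nat.pow_lt_pow_right hp.one_lt hlt))

/-- the map `F = (F₁,F₂,F₃)` on `F_q^3` is not `GL(3,q)`-equivalent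
to any of the Dembowski–Ostrom monomials `X^{σq^i+1}` (i = 0,1,2) on `F_{q^3}`:
there are no `F_q`-bases `v`, `u` of `F_{q^3}` realizing the monomial via `F`. -/
theorem stmt7 {p m k : ℕ} (hp : p.Prime) (hm : 0 < m) (hk : ¬ m ∣ k)
    {K L : Type*} [Field K] [Fintype K] (hK : Fintype.card K = p ^ m)
    [Field L] [Algebra K L] (hL : Module.finrank K L = 3)
    (a b c : K) (i : Fin 3) :
    ¬ ∃ (v u : Fin 3 → L),
      (LinearIndependent K v ∧ Submodule.span K (Set.range v) = ⊤) ∧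
      (LinearIndependent K u ∧ Submodule.span K (Set.range u) = ⊤) ∧
      ∀ x y z : K,
        (x • v 0 + y • v 1 + z • v 2) ^ (p ^ k * (p ^ m) ^ (i : ℕ) + 1) =
          (x ^ (p ^ k + 1) + a * y ^ p ^ k * z + b * x ^ p ^ k * y
              + c * x ^ p ^ k * z) • u 0 +
          (a * y ^ (p ^ k + 1) + z ^ p ^ k * x + b * z ^ p ^ k * y
              + c * x ^ p ^ k * y) • u 1 +
          (z ^ (p ^ k + 1) - x ^ p ^ k * y) • u 2 := by
  rintro ⟨v, u, ⟨hv, -⟩, -, h⟩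
  have : Fact p.Prime := ⟨hp⟩
  have : CharP K p := charP_of_card_eq_prime_pow hK
  have : CharP L p := charP_of_injective_algebraMap (algebraMap K L).injective p
  obtain ⟨t, ht⟩ := frob_nontriv hp hm hk hK
  have hσ : p ^ k ≠ 0 := (pow_pos hp.pos k).ne'
  have hN : p ^ k * (p ^ m) ^ (i : ℕ) = p ^ (k + m * (i : ℕ)) := by
    rw [pow_add, pow_mul]
  have hfr : ∀ x : K, x ^ p ^ (k + m * (i : ℕ)) = x ^ p ^ k := by
    intro x
    rw [← hN, pow_mul, ← hK, FiniteField.pow_card_pow]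
  have hN0 : p ^ (k + m * (i : ℕ)) ≠ 0 := (pow_pos hp.pos _).ne'
  have key : ∀ y : K, (v 0 ^ p ^ (k + m * (i : ℕ)) + (y ^ p ^ k) • v 1 ^ p ^ (k + m * (i : ℕ)))
      * (v 0 + y • v 1) = (1 + b * y) • u 0 + (a * (y ^ p ^ k * y) + c * y) • u 1 - y • u 2 := by
    intro y
    have h1 := h 1 y 0
    rw [hN, pow_succ] at h1
    simp only [one_smul, zero_smul, add_zero] at h1
    rw [add_pow_char_pow, smul_pow, hfr] at h1
    rw [h1]
    simp only [one_pow, zero_pow hσ, pow_succ, Algebra.smul_def, map_add, map_mul, map_sub, map_zero,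
      map_one]
    ring
  have k0 := key 0
  have k1 := key 1
  have kt := key t
  have k2 := h 0 1 0
  rw [hN] at k2
  simp only [one_pow, zero_pow hσ, pow_succ, Algebra.smul_def, map_add, map_mul, map_sub, map_zero,
    map_one, map_pow] at k0 k1 k2 kt
  simp only [zero_mul, one_mul, zero_add, add_zero] at k2
  have hz : (algebraMap K L (t ^ p ^ k) - algebraMap K L t) *
      (v 1 ^ p ^ (k + m * (i : ℕ)) * v 0) = 0 := by
    rw [map_pow]
    generalize v 0 ^ p ^ (k + m * (i : ℕ)) = A at *
    generalize v 1 ^ p ^ (k + m * (i : ℕ)) = B at *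
    generalize algebraMap K L t ^ p ^ k = S at *
    generalize algebraMap K L t = T at *
    linear_combination kt - T * k1 - (1 - T) * k0 - (S * T - T) * k2
  rcases mul_eq_zero.mp hz with h1 | h1
  · exact ht ((algebraMap K L).injective (sub_eq_zero.mp h1))
  · rcases mul_eq_zero.mp h1 with h1 | h1
    · exact hv.ne_zero 1 (pow_eq_zero_iff hN0 |>.mp h1)
    · exact hv.ne_zero 0 h1
end

section
/- Let p be an odd prime, q = p^m with m > 2, let k with k ≢ 0 (mod m) and m/gcd(k,m) odd, σ = p^k, and let a,b,c ∈ F_q be such that x^{σ²+σ+1} + c·x^{σ²+σ} + b·x^{σ²} + a = 0 has no solution x ∈ F_q. Let F = (F_1,F_2,F_3) : F_q^3 → F_q^3 be defined by F_1(x,y,z) = x^{σ+1} + a·y^σ·z + b·x^σ·y + c·x^σ·z, F_2(x,y,z) = a·y^{σ+1} + z^σ·x + b·z^σ·y + c·x^σ·y, F_3(x,y,z) = z^{σ+1} − x^σ·y. Then for every integer j with 0 ≤ j < 3m there do NOT exist F_p-linear bijections L_1 : F_q^3 → F_{q^3} and L_2 : F_{q^3} → F_q^3 such that L_1(F(L_2(X)))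 = X^{p^j + 1} for all X ∈ F_{q^3}. Equivalently, F is not p-equivalent to any Dembowski–Ostrom monomial X^{p^j+1} (the case j = 0 being X²), i.e., the commutative pre-semifield defined by the polarization of F is not isotopic to the finite field F_{q^3} or to any commutative twisted field of Albert. -/
section helpers

variable {p : ℕ} [Fact p.Prime] {L : Type*} [Field L] [Fintype L] [Algebra (ZMod p) L]

/-- Dedekind independence of the automorphisms of `L`. -/
lemma aut_indep (c : (L ≃ₐ[ZMod p] L) → L) (h : ∀ x, ∑ s, c s * s x = 0) : ∀ s, c s = 0 := by
  have hli := linearIndependent_monoidHom L L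
  have hinj : Function.Injective (fun s : L ≃ₐ[ZMod p] L => ((s : L →* L))) := by
    intro s t hst
    ext x
    exact DFunLike.congr_fun hst x
  have := hli.comp _ hinj
  rw [Fintype.linearIndependent_iff] at this
  apply this
  funext x
  simpa [Finset.sum_apply] using h x

/-- Every additive map is a combination of automorphisms. -/
lemma aut_span (g : L →+ L) : ∃ c : (L ≃ₐ[ZMod p] L) → L, ∀ x, g x = ∑ s, c s * s x := by
  let b : (L ≃ₐ[ZMod p] L) → (L →ₗ[ZMod p] L) := fun s => s.toLinearMap
  have hb : LinearIndependent L b := by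
    rw [Fintype.linearIndependent_iff]
    intro c hc
    apply aut_indep
    intro x
    have := LinearMap.congr_fun hc x
    simpa [b] using this
  have hcard : Fintype.card (L ≃ₐ[ZMod p] L) = Module.finrank L (L →ₗ[ZMod p] L) := by
    rw [Module.finrank_linearMap_self, ← IsGalois.card_aut_eq_finrank, Nat.card_eq_fintype_card]
  have hs := hb.span_eq_top_of_card_eq_finrank' hcard
  have hg : g.toZModLinearMap p ∈ Submodule.span L (Set.range b) := by rw [hs]; trivial
  rw [Submodule.mem_span_range_iff_exists_fun] at hg
  obtain ⟨c, hc⟩ := hg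
  refine ⟨c, fun x => ?_⟩
  have := LinearMap.congr_fun hc x
  simpa [b] using this.symm

lemma aut_indep₂ (M : (L ≃ₐ[ZMod p] L) → (L ≃ₐ[ZMod p] L) → L)
    (h : ∀ x y, ∑ s, ∑ t, M s t * s x * t y = 0) : ∀ s t, M s t = 0 := by
  intro s t
  refine aut_indep (fun s => M s t) (fun x => ?_) s
  refine aut_indep (fun t => ∑ s, M s t * s x) (fun y => ?_) t
  rw [← h x y, Finset.sum_comm]
  simp only [Finset.sum_mul]

/-- Autotopisms of `X ^ (p ^ j + 1)` are monomial. -/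
lemma aut_mono (π : L ≃ₐ[ZMod p] L) (hcomm : ∀ s, s * π = π * s) (h2 : (2 : L) ≠ 0)
    (hπ : π = 1 ∨ π * π * (π * π) ≠ 1) (g h : L →+ L)
    (hgh : ∀ x y, π (g x) * g y + g x * π (g y) = h (π x * y + x * π y))
    (c : (L ≃ₐ[ZMod p] L) → L) (hc : ∀ x, g x = ∑ s, c s * s x) :
    ∀ s t, s ≠ t → c s = 0 ∨ c t = 0 := by
  classical
  obtain ⟨d, hd⟩ := aut_span (p := p) h
  set e : (L ≃ₐ[ZMod p] L) → L := fun s => π (c (π⁻¹ * s)) with he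
  have he' : ∀ x, π (g x) = ∑ s, e s * s x := by
    intro x
    rw [hc, map_sum, ← Equiv.sum_comp (Equiv.mulLeft π) (fun s => e s * s x)]
    refine Finset.sum_congr rfl fun s _ => ?_
    simp [he]
  have key : ∀ s t, (e s * c t + c s * e t) - ((if s = π * t then d t else 0)
      + (if t = π * s then d s else 0)) = 0 := by
    apply aut_indep₂
    intro x y
    have h1 := hgh x y
    rw [he', he', hc x, hc y, map_add, hd, hd] at h1
    have e1 : ∑ s, ∑ t, (e s * c t + c s * e t) * s x * t y =
      (∑ s, e s * s x) * ∑ s, c s * s y + (∑ s, c s * s x) * ∑ s, e s * s y := by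
      simp only [Finset.sum_mul_sum, ← Finset.sum_add_distrib]
      refine Finset.sum_congr rfl fun s _ => Finset.sum_congr rfl fun t _ => by ring
    have e2 : ∑ s, ∑ t, (if s = π * t then d t else 0) * s x * t y = ∑ t, d t * t (π x * y) := by
      rw [Finset.sum_comm]
      refine Finset.sum_congr rfl fun t _ => ?_
      simp only [ite_mul, zero_mul, Finset.sum_ite_eq', Finset.mem_univ, if_true]
      rw [← hcomm, map_mul, AlgEquiv.mul_apply]
      ring
    have e3 : ∑ s, ∑ t, (if t = π * s then d s else 0) * s x * t y = ∑ t, d t * t (x * π y) := by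
      refine Finset.sum_congr rfl fun t _ => ?_
      simp only [ite_mul, zero_mul, Finset.sum_ite_eq', Finset.mem_univ, if_true]
      rw [← hcomm, map_mul, AlgEquiv.mul_apply]
      ring
    simp only [sub_mul, add_mul, Finset.sum_sub_distrib, Finset.sum_add_distrib] at e1 ⊢
    rw [e1, e2, e3, h1]
    ring
  rcases hπ with rfl | hπ
  · intro s t hst
    have := key s t
    have hst' := hst.symm
    simp [he, hst, hst'] at this
    have h3 : 2 * (c s * c t) = 0 := by linear_combination this
    simpa [h2] using h3
  · have hp2 : π ≠ 1 := by rintro rfl; simp at hπ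
    have main : ∀ r t, r ≠ t → c r ≠ 0 → c t ≠ 0 → t = π * π * r := by
      intro r t hrt hr ht
      by_contra hne
      have h1 := key t t
      have ht1 : t ≠ π * t := fun hh => hp2 (by simpa using hh.symm)
      simp only [if_neg ht1] at h1
      have h3 : 2 * (e t * c t) = 0 := by linear_combination h1
      have h4 : e t = 0 := by simpa [h2, ht] using h3
      have h5 := key (π * r) t
      have n1 : π * r ≠ π * t := by simpa using hrt
      have n2 : t ≠ π * (π * r) := by rwa [← mul_assoc]
      simp only [if_neg n1, if_neg n2, h4] at h5
      have h6 : e (π * r) = 0 := by simpa [ht] using h5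
      simp [he] at h6
      exact hr h6
    intro s t hst
    by_contra! hcon
    have h1 := main s t hst hcon.1 hcon.2
    have h3 := main t s hst.symm hcon.2 hcon.1
    apply hπ
    rw [h1, ← mul_assoc] at h3
    simpa using h3.symm

/-- `X^(π+1)` with `π` of order 2 or 4 has a degenerate polarization. -/
lemma aut_degenerate (π : L ≃ₐ[ZMod p] L) (h1 : π ≠ 1) (h4 : π * π * (π * π) = 1) :
    ∃ y : L, y ≠ 0 ∧ π y = - y := by
  classical
  by_cases h2 : π * π = 1
  · obtain ⟨z, hz⟩ : ∃ z, π z ≠ z := by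
      by_contra! hh
      exact h1 (AlgEquiv.ext hh)
    refine ⟨π z - z, sub_ne_zero.2 hz, ?_⟩
    have : π (π z) = z := DFunLike.congr_fun h2 z
    rw [map_sub, this]; ring
  · obtain ⟨z, hz⟩ : ∃ z, z - π z + π (π z) - π (π (π z)) ≠ 0 := by
      by_contra! hh
      have := aut_indep (p := p) (L := L) (fun s => (if s = 1 then 1 else 0) - (if s = π then 1 else 0)
        + (if s = π * π then 1 else 0) - (if s = π * π * π then 1 else 0)) (fun x => by
          refine Eq.trans ?_ (hh x)
          simp [sub_mul, add_mul, Finset.sum_add_distrib, Finset.sum_sub_distrib]) 1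
      have n1 : (1 : L ≃ₐ[ZMod p] L) ≠ π := Ne.symm h1
      have n2 : (1 : L ≃ₐ[ZMod p] L) ≠ π * π := Ne.symm h2
      have n3 : (1 : L ≃ₐ[ZMod p] L) ≠ π * π * π := by
        intro hh
        rw [← mul_assoc, ← hh, one_mul] at h4
        exact h1 h4
      simp [n1, n2, n3] at this
    refine ⟨_, hz, ?_⟩
    have : π (π (π (π z))) = z := DFunLike.congr_fun h4 z
    rw [map_sub, map_add, map_sub, this]; ring

lemma char_comb {K : Type*} [Field K] (s t r i : K →* L) (P Q A A' : L)
    (h : ∀ x, s x * P + t x * Q = r x * A + i x * A') [DecidableEq (K →* L)] (f : K →* L) :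
    (if s = f then P else 0) + (if t = f then Q else 0) =
      (if r = f then A else 0) + (if i = f then A' else 0) := by
  have hli := linearIndependent_monoidHom K L
  rw [linearIndependent_iff] at hli
  have := hli (Finsupp.single s P + Finsupp.single t Q - Finsupp.single r A - Finsupp.single i A') (by
    funext x
    simp
    linear_combination h x)
  have h2 := DFunLike.congr_fun this f
  simp [Finsupp.single_apply] at h2
  linear_combination h2

theorem core_ineq {K : Type*} [Field K] [Finite K] (τ : K →+* K) (hτ1 : ∃ l, τ l ≠ l)
    (hτ2 : ∀ y, y + τ y = 0 → y = 0) {V : Type*} [AddCommGroup V] [Module K V]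
    (P : V → V → V) (hPl : ∀ u u' v, P (u + u') v = P u v + P u' v)
    (hPr : ∀ u v v', P u (v + v') = P u v + P u v')
    (hPsl : ∀ (l : K) u v, P (l • u) v = τ l • P u v)
    (hPsr : ∀ (l : K) u v, P u (l • v) = l • P u v)
    (e : V) (he0 : e ≠ 0) (he : ∀ v, P e v + P v e = 0 → v = 0)
    (u₀ v₀ : V) (hu₀ : u₀ ≠ 0) (hv₀ : v₀ ≠ 0) (huv : P u₀ v₀ = 0)
    (L₁ : V ≃+ L) (L₂ : L ≃+ V) (π : L ≃ₐ[ZMod p] L) (hcomm : ∀ s, s * π = π * s)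
    (h2 : (2 : L) ≠ 0) (hL : ∀ X, L₁ (P (L₂ X) (L₂ X)) = π X * X) : False := by
  classical
  have hpol : ∀ X Y, L₁ (P (L₂ X) (L₂ Y) + P (L₂ Y) (L₂ X)) = π X * Y + X * π Y := by
    intro X Y
    have h1 := hL (X + Y)
    rw [map_add, hPl, hPr, hPr, map_add, map_add, map_add, hL, hL, map_add] at h1
    rw [map_add]
    linear_combination h1
  have hpol' : ∀ u v, L₁ (P u v + P v u) =
      π (L₂.symm u) * L₂.symm v + L₂.symm u * π (L₂.symm v) := by
    intro u v
    rw [← hpol]; simp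
  have hπ : π = 1 ∨ π * π * (π * π) ≠ 1 := by
    by_contra! hcon
    obtain ⟨y, hy, hy2⟩ := aut_degenerate π hcon.1 hcon.2
    have h1 : L₁ (P e (L₂ (L₂.symm e * y)) + P (L₂ (L₂.symm e * y)) e) = 0 := by
      rw [hpol']
      simp [hy2]; ring
    have h3 := he _ ((AddEquiv.map_eq_zero_iff L₁).1 h1)
    have h4 : L₂.symm e * y = 0 := by simpa using h3
    rcases mul_eq_zero.1 h4 with h | h
    · exact he0 (by simpa using h)
    · exact hy h
  let g : K → L →+ L := fun l =>
    { toFun := fun X => L₂.symm (l • L₂ X)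
      map_zero' := by simp
      map_add' := fun x y => by simp }
  have hg : ∀ l X, g l X = L₂.symm (l • L₂ X) := fun _ _ => rfl
  let h : K → L →+ L := fun l =>
    { toFun := fun X => L₁ ((τ l * l) • L₁.symm X)
      map_zero' := by simp
      map_add' := fun x y => by simp }
  have hgh : ∀ l x y, π (g l x) * g l y + g l x * π (g l y) = h l (π x * y + x * π y) := by
    intro l x y
    rw [hg, hg, ← hpol']
    change _ = L₁ ((τ l * l) • L₁.symm (π x * y + x * π y))
    rw [← hpol, AddEquiv.symm_apply_apply, hPsl, hPsr, hPsl, hPsr, smul_smul, smul_smul, smul_add]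
  have hlin : ∀ l X, g l X = g l 1 * X := by
    intro l
    obtain ⟨c, hc⟩ := aut_span (p := p) (g l)
    have m1 := aut_mono π hcomm h2 hπ (g l) (h l) (hgh l) c hc
    have m2 := aut_mono π hcomm h2 hπ (g (l + 1)) (h (l + 1)) (hgh (l + 1))
      (fun s => c s + if s = 1 then 1 else 0) (fun x => by
        have : g (l + 1) x = g l x + x := by simp [hg, add_smul]
        rw [this, hc]
        simp [add_mul, Finset.sum_add_distrib])
    have hz : ∀ s, s ≠ 1 → c s = 0 := by
      intro s hs
      by_contra hne
      have a1 := (m1 s 1 hs).resolve_left hne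
      have a2 := m2 s 1 hs
      simp [hs, hne, a1] at a2
    have hc' : ∀ x, g l x = c 1 * x := by
      intro x
      rw [hc, Finset.sum_eq_single 1]
      · simp
      · intro s _ hs; simp [hz s hs]
      · simp
    intro X
    rw [hc', hc' 1]; ring
  let ι : K →* L :=
    { toFun := fun l => g l 1
      map_one' := by simp [hg]
      map_mul' := fun l l' => by
        rw [← hlin l (g l' 1)]
        simp [hg, mul_smul] }
  have hι : ∀ l X, L₂ (ι l * X) = l • L₂ X := by
    intro l X
    change L₂ (g l 1 * X) = _
    rw [← hlin, hg]; simp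
  haveI : Finite V := Finite.of_equiv L L₂.toEquiv
  have hsurj : ∀ w, ∃ v, P e v + P v e = w := by
    let f : V →+ V := AddMonoidHom.mk' (fun v => P e v + P v e) (fun x y => by
      simp only [hPl, hPr]; abel)
    have hf : Function.Injective f := (injective_iff_map_eq_zero f).2 he
    exact Finite.surjective_of_injective hf
  have hnorm : ∀ l w, L₁ ((τ l * l) • w) = π (ι l) * ι l * L₁ w := by
    intro l w
    obtain ⟨v, rfl⟩ := hsurj w
    have h1 := hpol (ι l * L₂.symm e) (ι l * L₂.symm v)
    rw [hι, hι, hPsl, hPsr, hPsl, hPsr, smul_smul, smul_smul, ← smul_add] at h1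
    simp only [AddEquiv.apply_symm_apply] at h1
    rw [h1, hpol', map_mul, map_mul]
    ring
  have hτs : ∀ m, ∃ y, y + τ y = m := by
    let f : K →+ K := AddMonoidHom.mk' (fun y => y + τ y) (fun x y => by
      rw [map_add]; ring)
    have hf : Function.Injective f := (injective_iff_map_eq_zero f).2 hτ2
    exact Finite.surjective_of_injective hf
  have hθ : ∀ m : K, ∃ t, ∀ w, L₁ (m • w) = t * L₁ w := by
    intro m
    obtain ⟨y, rfl⟩ := hτs m
    refine ⟨π (ι (y + 1)) * ι (y + 1) - π (ι y) * ι y - 1, fun w => ?_⟩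
    have : y + τ y = τ (y + 1) * (y + 1) - τ y * y - 1 := by simp; ring
    rw [this, sub_smul, sub_smul, map_sub, map_sub, hnorm, hnorm, one_smul]
    ring
  choose θ' hθ' using hθ
  have hθ1 : ∀ m, θ' m = L₁ (m • L₁.symm 1) := by
    intro m; rw [hθ']; simp
  let θ : K →* L :=
    { toFun := θ'
      map_one' := by simp [hθ1]
      map_mul' := fun l l' => by
        rw [hθ1 (l * l'), mul_smul, hθ', hθ1 l'] }
  have hθ : ∀ m w, L₁ (m • w) = θ m * L₁ w := hθ'
  let s : K →* L := θ.comp (τ : K →* K)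
  let r : K →* L := (π : L →* L).comp ι
  have hst : s ≠ θ := by
    intro hh
    obtain ⟨l, hl⟩ := hτ1
    have h1 : θ (τ l) = θ l := DFunLike.congr_fun hh l
    have h3 : L₁ (τ l • e) = L₁ (l • e) := by rw [hθ, hθ, h1]
    have h4 : (τ l - l) • e = 0 := by rw [sub_smul, L₁.injective h3, sub_self]
    rcases smul_eq_zero.1 h4 with h | h
    · exact hl (sub_eq_zero.1 h)
    · exact he0 h
  have hmain : ∀ X Y l, s l * L₁ (P (L₂ X) (L₂ Y)) + θ l * L₁ (P (L₂ Y) (L₂ X)) =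
      r l * (π X * Y) + ι l * (X * π Y) := by
    intro X Y l
    have h1 := hpol (ι l * X) Y
    rw [hι, hPsl, hPsr, map_add, hθ, hθ, map_mul] at h1
    change θ (τ l) * _ + _ = π (ι l) * _ + _
    rw [h1]; ring
  by_cases hr : r = ι
  · have h1 := char_comb s θ r ι _ _ _ _ (hmain 1 1) s
    rw [hL, if_pos rfl, if_neg hst.symm, hr] at h1
    split_ifs at h1 <;> simp at h1
  · have hX : L₂.symm u₀ ≠ 0 := by simpa using hu₀
    have hY : L₂.symm v₀ ≠ 0 := by simpa using hv₀
    have h0 := char_comb s θ r ι _ _ _ _ (hmain (L₂.symm u₀) (L₂.symm v₀))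
    have h1 := h0 r
    have h3 := h0 ι
    simp only [AddEquiv.apply_symm_apply, huv, map_zero, ite_self, zero_add, if_neg hr,
      if_neg (Ne.symm hr), if_true, add_zero] at h1 h3
    by_cases e1 : θ = r
    · rw [if_neg (fun hh => hr (e1.symm.trans hh))] at h3
      exact mul_ne_zero hX (by simpa using hY) h3.symm
    · rw [if_neg e1] at h1
      exact mul_ne_zero (by simpa using hX) hY h1.symm

end helpers


/-- for odd `p`, `m > 2`, `k ≢ 0 (mod m)` with `m/gcd(k,m)` odd, and
`a,b,c` such that `x^{σ²+σ+1} + c x^{σ²+σ} + b x^{σ²} + a` has no root in `F_q`,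
the (planar) map `F` on `F_q^3` is not `p`-equivalent to any Dembowski–Ostrom
monomial `X^{p^j+1}` on `F_{q^3}`; in char `p`, `F_p`-linear bijections are
exactly the additive bijections. -/
theorem stmt8 {p m k : ℕ} (hp : p.Prime) (hpodd : Odd p) (hm : 2 < m)
    (hk : ¬ m ∣ k) (hkm : Odd (m / Nat.gcd k m))
    {K L : Type*} [Field K] [Fintype K] (hK : Fintype.card K = p ^ m)
    [Field L] [Fintype L] (hL : Fintype.card L = p ^ (3 * m))
    (a b c : K)
    (hnosol : ¬ ∃ x : K, x ^ (p ^ (2 * k) + p ^ k + 1) + c * x ^ (p ^ (2 * k) + p ^ k)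
        + b * x ^ (p ^ (2 * k)) + a = 0)
    (Fm : K × K × K → K × K × K)
    (hF : Fm = fun w =>
      (w.1 ^ (p ^ k + 1) + a * w.2.1 ^ p ^ k * w.2.2 + b * w.1 ^ p ^ k * w.2.1
          + c * w.1 ^ p ^ k * w.2.2,
       a * w.2.1 ^ (p ^ k + 1) + w.2.2 ^ p ^ k * w.1 + b * w.2.2 ^ p ^ k * w.2.1
          + c * w.1 ^ p ^ k * w.2.1,
       w.2.2 ^ (p ^ k + 1) - w.1 ^ p ^ k * w.2.1)) :
    ∀ j : ℕ, j < 3 * m →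
      ¬ ∃ (L₁ : (K × K × K) ≃+ L) (L₂ : L ≃+ (K × K × K)),
        ∀ X : L, L₁ (Fm (L₂ X)) = X ^ (p ^ j + 1) := by
  intro j _ ⟨L₁, L₂, hX⟩
  have : Fact p.Prime := ⟨hp⟩
  have : CharP K p := charP_of_card_eq_prime_pow hK
  have : CharP L p := charP_of_card_eq_prime_pow hL
  letI : Algebra (ZMod p) L := ZMod.algebra L p
  have hp2 : p ≠ 2 := by rintro rfl; exact absurd hpodd (by decide)
  have h2L : (2 : L) ≠ 0 := Ring.two_ne_zero (by rwa [ringChar.eq L p])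
  have h2K : (2 : K) ≠ 0 := Ring.two_ne_zero (by rwa [ringChar.eq K p])
  have hm0 : 0 < m := by omega
  have ha : a ≠ 0 := by
    intro ha
    apply hnosol
    refine ⟨0, ?_⟩
    have : p ^ k ≠ 0 := pow_ne_zero _ hp.ne_zero
    have : p ^ (2 * k) ≠ 0 := pow_ne_zero _ hp.ne_zero
    simp [ha, hp.ne_zero]
  obtain ⟨τ, hτ⟩ : ∃ τ : K →+* K, ∀ x, τ x = x ^ p ^ k :=
    ⟨iterateFrobenius K p k, fun x => iterateFrobenius_def p k x⟩
  obtain ⟨π, hπ⟩ : ∃ π : L ≃ₐ[ZMod p] L, ∀ x, π x = x ^ p ^ j := by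
    refine ⟨FiniteField.frobeniusAlgEquivOfAlgebraic (ZMod p) L ^ j, fun x => ?_⟩
    rw [AlgEquiv.coe_pow, FiniteField.coe_frobeniusAlgEquivOfAlgebraic_iterate, ZMod.card]
  have hτ1 : ∃ l, τ l ≠ l := by
    by_contra! hh
    letI : Algebra (ZMod p) K := ZMod.algebra K p
    apply hk
    have hr : Module.finrank (ZMod p) K = m := by
      have h1 := Module.card_eq_pow_finrank (K := ZMod p) (V := K)
      rw [hK, ZMod.card] at h1
      exact (Nat.pow_right_injective hp.two_le h1).symm
    rw [← hr, ← FiniteField.orderOf_frobeniusAlgEquivOfAlgebraic]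
    apply orderOf_dvd_of_pow_eq_one
    ext x
    rw [AlgEquiv.coe_pow, FiniteField.coe_frobeniusAlgEquivOfAlgebraic_iterate, ZMod.card]
    exact (hτ x).symm.trans (hh x)
  have hiter : ∀ y, y + τ y = 0 → y = 0 := by
    intro y hy
    have h1 : τ y = -y := by linear_combination hy
    have h3 : ∀ n, y ^ p ^ (k * n) = (-1) ^ n * y := by
      intro n
      induction n with
      | zero => simp
      | succ n ih =>
        rw [Nat.mul_succ, pow_add, pow_mul, ih, ← hτ, map_mul, h1]
        simp [pow_succ]
    have h4 := h3 (m / Nat.gcd k m)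
    have h5 : k * (m / Nat.gcd k m) = m * (k / Nat.gcd k m) := by
      rw [← Nat.mul_div_assoc _ (Nat.gcd_dvd_right k m), ← Nat.mul_div_assoc _ (Nat.gcd_dvd_left k m),
        mul_comm]
    rw [h5, pow_mul, ← hK, FiniteField.pow_card_pow, hkm.neg_one_pow] at h4
    have h6 : 2 * y = 0 := by linear_combination h4
    simpa [h2K] using h6
  refine core_ineq (p := p) (L := L) τ hτ1 hiter (V := K × K × K)
    (fun u v => (τ u.1 * v.1 + a * τ u.2.1 * v.2.2 + b * τ u.1 * v.2.1 + c * τ u.1 * v.2.2,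
      a * τ u.2.1 * v.2.1 + τ u.2.2 * v.1 + b * τ u.2.2 * v.2.1 + c * τ u.1 * v.2.1,
      τ u.2.2 * v.2.2 - τ u.1 * v.2.1)) ?_ ?_ ?_ ?_ (0, 1, 0) ?_ ?_ (1, 0, 0) (-c, 0, 1) ?_ ?_ ?_
    L₁ L₂ π ?_ h2L ?_
  · intro u u' v
    ext <;> simp <;> ring
  · intro u u' v
    ext <;> simp <;> ring
  · intro l u v
    ext <;> simp <;> ring
  · intro l u v
    ext <;> simp <;> ring
  · simp
  · rintro ⟨x, y, z⟩ h
    simp only [Prod.mk_add_mk, Prod.mk_eq_zero, map_zero, map_one] at h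
    obtain ⟨e1, e2, e3⟩ := h
    have hx : x = 0 := by
      have : τ x = 0 := by linear_combination -e3
      simpa using this
    subst hx
    have hz : z = 0 := by
      have : a * z = 0 := by simpa using e1
      simpa [ha] using this
    subst hz
    have hy : y = 0 := by
      apply hiter
      have : a * (y + τ y) = 0 := by simp at e2; linear_combination e2
      simpa [ha] using this
    subst hy
    rfl
  · simp
  · simp
  · simp
  · intro s
    ext x
    simp [hπ]
  · intro X
    have h1 := hX X
    rw [hF] at h1
    rw [hπ, ← pow_succ, ← h1]
    congr 1
    ext <;> simp [hτ] <;> ring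
end
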